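/- Let β ∈ [0,1] and α = 3 − 2β. For every ε > 0 there exist δ > 0 and a constant C = C(δ, ε, γ) such that ∫_* (ρ_{θ♯}μ)(⋃_{D ∈ 𝔻_θ} D) dλ(θ) ≤ C R^{−δ} μ(ℝ³) c_β(λ)^{1/2} λ(ℝ)^{1/2} for every R ≥ 1, every Borel measure λ on I with c_β(λ) < ∞, every Borel measure μ on the unit ball B₃(0,1) with c_α(μ) ≤ 1, and every family {𝔻_θ}_{θ ∈ I}, where each 𝔻_θ is a collection of intervals of radius R^{−1} in the line spanned by γ(θ) with cardinality |𝔻_θ| ≤ R^{1−ε} μ(ℝ³). Here ∫_* denotes the lower integral: the supremum of ∫ φ dλ over λ-measurable functions φ with 0 ≤ φ(θ) ≤ (ρ_{θ♯}μ)(⋃_{D ∈ 𝔻_θ} D) for all θ. -/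

import Mathlib

/-!
STATEMENT 9 (Lemma 3.1 / `energylemma`): let `β ∈ [0,1]` and `α = 3 - 2β`. For
every `ε > 0` there exist `δ > 0` and `C = C(δ, ε, γ)` such that
`∫_* (ρ_{θ♯}μ)(⋃_{D ∈ 𝔻_θ} D) dλ(θ) ≤ C R^{-δ} μ(ℝ³) c_β(λ)^{1/2} λ(ℝ)^{1/2}`
for every `R ≥ 1`, every Borel measure `λ` on `I` with `c_β(λ) < ∞`, every Borel
measure `μ` on `B₃(0,1)` with `c_α(μ) ≤ 1`, and every family `{𝔻_θ}` of
collections of radius-`R⁻¹` intervals in the line spanned by `γ θ` with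
`|𝔻_θ| ≤ R^{1-ε} μ(ℝ³)`.  Each interval is recorded by the coordinate `c` of its
centre `c • γ θ` on the line.  `∫_*` is the lower integral.
-/

open MeasureTheory Metric Set
open scoped ENNReal RealInnerProductSpace

noncomputable section

abbrev E3 : Type := EuclideanSpace ℝ (Fin 3)

/-- `c_α(μ) = sup_{x, r>0} μ(B(x,r)) / r^α`. -/
def frostmanConst {X : Type*} [PseudoMetricSpace X] [MeasurableSpace X]
    (μ : Measure X) (α : ℝ) : ℝ≥0∞ :=
  ⨆ (x : X) (r : ℝ) (_ : 0 < r), μ (Metric.ball x r) / ENNReal.ofReal (r ^ α)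

/-- Orthogonal projection onto the line spanned by `γ θ`:  `ρ_θ x = ⟨x, γ θ⟩ γ θ`. -/
def lineProj (γ : ℝ → E3) (θ : ℝ) (x : E3) : E3 := ⟪x, γ θ⟫ • γ θ

/-- The lower integral `∫_* f dλ`: the supremum of `∫ φ dλ` over `λ`-measurable
functions `φ` with `0 ≤ φ ≤ f`. -/
def lowerIntegral (lam : Measure ℝ) (f : ℝ → ℝ≥0∞) : ℝ≥0∞ :=
  ⨆ (φ : ℝ → ℝ≥0∞) (_ : AEMeasurable φ lam) (_ : ∀ θ, φ θ ≤ f θ), ∫⁻ θ, φ θ ∂lam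

/-- The interval of radius `R⁻¹` in the line spanned by `γ θ` whose centre has
coordinate `c`. -/
def lineInterval (γ : ℝ → E3) (θ R c : ℝ) : Set E3 :=
  {x : E3 | ∃ s : ℝ, |s - c| ≤ R⁻¹ ∧ x = s • γ θ}

/-- Bounded continuous functions, as a predicate. -/
def IsBC {X E : Type*} [TopologicalSpace X] [NormedAddCommGroup E] (f : X → E) : Prop :=
  Continuous f ∧ ∃ C : ℝ, ∀ x, ‖f x‖ ≤ C

namespace IsBC

variable {X : Type*} [TopologicalSpace X]

theorem add {E : Type*} [NormedAddCommGroup E] {f g : X → E} (hf : IsBC f) (hg : IsBC g) :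
    IsBC (fun x => f x + g x) := by
  obtain ⟨hf, C, hC⟩ := hf
  obtain ⟨hg, D, hD⟩ := hg
  exact ⟨hf.add hg, C + D, fun x => (norm_add_le _ _).trans (add_le_add (hC x) (hD x))⟩

theorem const {E : Type*} [NormedAddCommGroup E] (c : E) : IsBC (fun _ : X => c) :=
  ⟨continuous_const, ‖c‖, fun _ => le_rfl⟩

theorem mul {R : Type*} [NormedRing R] {f g : X → R} (hf : IsBC f) (hg : IsBC g) :
    IsBC (fun x => f x * g x) := by
  obtain ⟨hf, C, hC⟩ := hf
  obtain ⟨hg, D, hD⟩ := hg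
  exact ⟨hf.mul hg, C * D, fun x => (norm_mul_le _ _).trans
    (mul_le_mul (hC x) (hD x) (norm_nonneg _) ((norm_nonneg _).trans (hC x)))⟩

theorem pow {R : Type*} [NormedRing R] {f : X → R} (hf : IsBC f) (n : ℕ) :
    IsBC (fun x => f x ^ n) := by
  induction n with
  | zero => simpa using const (X := X) (1 : R)
  | succ n ih => simpa only [pow_succ] using ih.mul hf

theorem norm {E : Type*} [NormedAddCommGroup E] {f : X → E} (hf : IsBC f) :
    IsBC (fun x => ‖f x‖) :=
  ⟨hf.1.norm, hf.2.imp fun C hC x => by simpa using hC x⟩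

theorem star {f : X → ℂ} (hf : IsBC f) : IsBC (fun x => starRingEnd ℂ (f x)) :=
  ⟨Complex.continuous_conj.comp hf.1, hf.2.imp fun C hC x => by simpa using hC x⟩

theorem ofReal {f : X → ℝ} (hf : IsBC f) : IsBC (fun x => (f x : ℂ)) :=
  ⟨Complex.continuous_ofReal.comp hf.1, hf.2.imp fun C hC x => by simpa using hC x⟩

theorem sum {ι E : Type*} [NormedAddCommGroup E] {f : ι → X → E} (s : Finset ι)
    (hf : ∀ i ∈ s, IsBC (f i)) : IsBC (fun x => ∑ i ∈ s, f i x) := by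
  classical
  induction s using Finset.induction_on with
  | empty => simpa using const (X := X) (0 : E)
  | insert a s ha ih =>
    simp only [Finset.sum_insert ha]
    exact (hf a (by simp)).add (ih fun i hi => hf i (by simp [hi]))

theorem integrable {E : Type*} [NormedAddCommGroup E] [SecondCountableTopology X]
    [MeasurableSpace X] [BorelSpace X] {m : Measure X} [IsFiniteMeasure m] {f : X → E}
    (hf : IsBC f) : Integrable f m := by
  obtain ⟨hf, C, hC⟩ := hf
  exact Integrable.of_bound hf.aestronglyMeasurable C (Filter.Eventually.of_forall hC)

end IsBC

section Decoupling

variable {X : Type*} [TopologicalSpace X] [SecondCountableTopology X] [MeasurableSpace X]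
  [BorelSpace X] (m : Measure X) [IsFiniteMeasure m]

theorem sq_integral_mul_le {u v : X → ℝ} (hu : IsBC u) (hv : IsBC v) :
    (∫ x, u x * v x ∂m) ^ 2 ≤ (∫ x, u x ^ 2 ∂m) * ∫ x, v x ^ 2 ∂m := by
  have h : ∀ t : ℝ, 0 ≤ (∫ x, v x ^ 2 ∂m) * (t * t) + (2 * ∫ x, u x * v x ∂m) * t
      + ∫ x, u x ^ 2 ∂m := by
    intro t
    have : 0 ≤ ∫ x, (u x + t * v x) ^ 2 ∂m := integral_nonneg fun x => sq_nonneg _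
    have e : ∀ x, (u x + t * v x) ^ 2 = (t * t) * v x ^ 2 + (2 * t) * (u x * v x) + u x ^ 2 :=
      fun x => by ring
    simp only [e] at this
    rw [integral_add, integral_add, integral_const_mul, integral_const_mul] at this
    · linarith
    · exact (hv.pow 2).integrable.const_mul _
    · exact (hu.mul hv).integrable.const_mul _
    · exact ((hv.pow 2).integrable.const_mul _).add ((hu.mul hv).integrable.const_mul _)
    · exact (hu.pow 2).integrable
  have := discrim_le_zero h
  rw [discrim] at this
  nlinarith

/-- Almost orthogonality: if products of far apart members of a family have vanishing weighted
integral, then the weighted square norm of the sum is controlled by the sum of square norms. -/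
theorem integral_sq_sum_le_of_almost_orthogonal (s : Finset ℕ) (v : ℕ → X → ℂ) (w : X → ℝ)
    (hv : ∀ i, IsBC (v i)) (hw : IsBC w) (hw0 : ∀ x, 0 ≤ w x) (N : ℕ)
    (h : ∀ i ∈ s, ∀ j ∈ s, (i + N ≤ j ∨ j + N ≤ i) →
      ∫ x, v i x * starRingEnd ℂ (v j x) * (w x : ℂ) ∂m = 0) :
    ∫ x, ‖∑ i ∈ s, v i x‖ ^ 2 * w x ∂m ≤ 2 * N * ∑ i ∈ s, ∫ x, ‖v i x‖ ^ 2 * w x ∂m := by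
  set A : ℕ → ℝ := fun i => ∫ x, ‖v i x‖ ^ 2 * w x ∂m with hA
  have hA0 : ∀ i, 0 ≤ A i := fun i => integral_nonneg fun x => mul_nonneg (sq_nonneg _) (hw0 x)
  have hint : ∀ i j, IsBC (fun x => v i x * starRingEnd ℂ (v j x) * (w x : ℂ)) :=
    fun i j => ((hv i).mul (hv j).star).mul hw.ofReal
  have e1 : ((∫ x, ‖∑ i ∈ s, v i x‖ ^ 2 * w x ∂m : ℝ) : ℂ)
      = ∑ i ∈ s, ∑ j ∈ s, ∫ x, v i x * starRingEnd ℂ (v j x) * (w x : ℂ) ∂m := by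
    rw [← integral_complex_ofReal]
    rw [Finset.sum_congr rfl fun i _ =>
      (integral_finsetSum s fun j _ => (hint i j).integrable).symm]
    rw [← integral_finsetSum]
    · refine integral_congr_ae (Filter.Eventually.of_forall fun x => ?_)
      have : ((‖∑ i ∈ s, v i x‖ ^ 2 : ℝ) : ℂ)
          = (∑ i ∈ s, v i x) * starRingEnd ℂ (∑ i ∈ s, v i x) := by
        rw [Complex.mul_conj, Complex.normSq_eq_norm_sq]
      simp only [Complex.ofReal_mul, this, map_sum, Finset.mul_sum, Finset.sum_mul]
      exact Finset.sum_comm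
    · intro i _
      exact (IsBC.sum s fun j _ => hint i j).integrable
  have e2 : ∀ i j, (∫ x, v i x * starRingEnd ℂ (v j x) * (w x : ℂ) ∂m).re
      ≤ (A i + A j) / 2 := by
    intro i j
    refine (Complex.re_le_norm _).trans ((norm_integral_le_integral_norm _).trans ?_)
    have : (A i + A j) / 2 = ∫ x, (‖v i x‖ ^ 2 * w x + ‖v j x‖ ^ 2 * w x) / 2 ∂m := by
      rw [integral_div, integral_add]
      · exact (((hv i).norm.pow 2).mul hw).integrable
      · exact (((hv j).norm.pow 2).mul hw).integrable
    rw [this]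
    refine integral_mono (hint i j).norm.integrable
      (((((hv i).norm.pow 2).mul hw).add (((hv j).norm.pow 2).mul hw)).integrable.div_const _)
      fun x => ?_
    simp only [norm_mul, RCLike.norm_conj, Complex.norm_real, Real.norm_of_nonneg (hw0 x)]
    nlinarith [mul_nonneg (hw0 x) (sq_nonneg (‖v i x‖ - ‖v j x‖))]
  have e3 : ∫ x, ‖∑ i ∈ s, v i x‖ ^ 2 * w x ∂m
      = ∑ i ∈ s, ∑ j ∈ s, (∫ x, v i x * starRingEnd ℂ (v j x) * (w x : ℂ) ∂m).re := by
    have := congrArg Complex.re e1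
    simpa using this
  classical
  set near : ℕ → ℕ → Prop := fun i j => ¬ (i + N ≤ j ∨ j + N ≤ i) with hnear
  have e4 : ∑ i ∈ s, ∑ j ∈ s, (∫ x, v i x * starRingEnd ℂ (v j x) * (w x : ℂ) ∂m).re
      ≤ ∑ i ∈ s, ∑ j ∈ s, if near i j then (A i + A j) / 2 else 0 := by
    refine Finset.sum_le_sum fun i hi => Finset.sum_le_sum fun j hj => ?_
    split_ifs with hn
    · exact e2 i j
    · rw [h i hi j hj (not_not.1 hn)]; simp
  have e5 : ∑ i ∈ s, ∑ j ∈ s, (if near i j then (A i + A j) / 2 else 0)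
      = ∑ i ∈ s, ∑ j ∈ s, if near i j then A i else 0 := by
    have a1 : ∀ i j, (if near i j then (A i + A j) / 2 else 0)
        = (if near i j then A i else 0) / 2 + (if near j i then A j else 0) / 2 := by
      intro i j
      have : near i j ↔ near j i := by simp only [hnear]; tauto
      by_cases hn : near i j
      · simp [hn, this.1 hn]; ring
      · simp [hn, mt this.2 hn]
    simp only [a1, Finset.sum_add_distrib]
    rw [Finset.sum_comm (f := fun i j => (if near j i then A j else 0) / 2)]
    simp only [← Finset.sum_div]
    ring
  rw [e3]
  refine e4.trans (e5.le.trans ?_)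
  rw [Finset.mul_sum]
  refine Finset.sum_le_sum fun i _ => ?_
  rw [← Finset.sum_filter, Finset.sum_const, nsmul_eq_mul]
  refine mul_le_mul_of_nonneg_right ?_ (hA0 i)
  have : ({j ∈ s | near i j} : Finset ℕ) ⊆ Finset.Ico (i + 1 - N) (i + N) := by
    intro j hj
    simp only [Finset.mem_filter, hnear] at hj
    simp only [Finset.mem_Ico]
    omega
  have hc := Finset.card_le_card this
  rw [Nat.card_Ico] at hc
  have : ({j ∈ s | near i j} : Finset ℕ).card ≤ 2 * N := by omega
  exact_mod_cast this

end Decoupling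

section Blocks

/-- The sum of `a p` over the `p < P` in the `q`-th block of length `K ^ L`. -/
def blockSum {M : Type*} [AddCommMonoid M] (K P : ℕ) (a : ℕ → M) (L q : ℕ) : M :=
  ∑ p ∈ Finset.range P with p / K ^ L = q, a p

theorem blockSum_add {M : Type*} [AddCommMonoid M] (K P : ℕ) (a : ℕ → M) (e j q : ℕ) :
    blockSum K P a (e + j) q
      = ∑ q' ∈ Finset.range P with q' / K ^ j = q, blockSum K P a e q' := by
  unfold blockSum
  rw [← Finset.sum_fiberwise_of_maps_to (g := fun p => p / K ^ e)
    (t := {q' ∈ Finset.range P | q' / K ^ j = q})]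
  · refine Finset.sum_congr rfl fun q' hq' => Finset.sum_congr ?_ fun _ _ => rfl
    simp only [Finset.mem_filter, Finset.mem_range] at hq'
    ext p
    simp only [Finset.mem_filter, Finset.mem_range]
    constructor
    · rintro ⟨⟨h1, h2⟩, h3⟩
      exact ⟨h1, h3⟩
    · rintro ⟨h1, h2⟩
      refine ⟨⟨h1, ?_⟩, h2⟩
      rw [pow_add, ← Nat.div_div_eq_div_mul, h2, hq'.2]
  · intro p hp
    simp only [Finset.mem_filter, Finset.mem_range] at hp ⊢
    refine ⟨(Nat.div_le_self _ _).trans_lt hp.1, ?_⟩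
    rw [Nat.div_div_eq_div_mul, ← pow_add, hp.2]

theorem card_block_le (K P j q : ℕ) (hK : 1 ≤ K) :
    ({q' ∈ Finset.range P | q' / K ^ j = q} : Finset ℕ).card ≤ K ^ j := by
  have hpos : 0 < K ^ j := pow_pos (by omega) j
  have : ({q' ∈ Finset.range P | q' / K ^ j = q} : Finset ℕ)
      ⊆ Finset.Ico (q * K ^ j) (q * K ^ j + K ^ j) := by
    intro q' hq'
    simp only [Finset.mem_filter, Finset.mem_Ico] at hq' ⊢
    have h := Nat.div_add_mod q' (K ^ j)
    have h2 := Nat.mod_lt q' hpos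
    rw [hq'.2, mul_comm] at h
    generalize q' % K ^ j = y at h h2
    omega
  have hc := Finset.card_le_card this
  rw [Nat.card_Ico] at hc
  omega

theorem blockSum_nonneg (K P : ℕ) {Q : ℕ → ℝ} (hQ : ∀ p, 0 ≤ Q p) (L q : ℕ) :
    0 ≤ blockSum K P Q L q := Finset.sum_nonneg fun p _ => hQ p

end Blocks

theorem sum_pow_three_le {ι : Type*} (s : Finset ι) {a : ι → ℝ} (ha : ∀ i ∈ s, 0 ≤ a i) :
    ∑ i ∈ s, a i ^ 3 ≤ (∑ i ∈ s, a i) ^ 3 := by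
  have h0 := Finset.sum_nonneg ha
  have : ∀ i ∈ s, a i ^ 3 ≤ a i * (∑ i ∈ s, a i) ^ 2 := fun i hi => by
    have h1 : a i ≤ ∑ i ∈ s, a i := Finset.single_le_sum ha hi
    have h2 : a i ^ 2 ≤ (∑ i ∈ s, a i) ^ 2 := pow_le_pow_left₀ (ha i hi) h1 2
    calc a i ^ 3 = a i * a i ^ 2 := by ring
      _ ≤ _ := mul_le_mul_of_nonneg_left h2 (ha i hi)
  calc ∑ i ∈ s, a i ^ 3 ≤ ∑ i ∈ s, a i * (∑ i ∈ s, a i) ^ 2 := Finset.sum_le_sum this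
    _ = (∑ i ∈ s, a i) ^ 3 := by rw [← Finset.sum_mul]; ring

theorem norm_sum_pow_six_le {ι : Type*} (s : Finset ι) (z : ι → ℂ) :
    ‖∑ i ∈ s, z i‖ ^ 6 ≤ (s.card : ℝ) ^ 5 * ∑ i ∈ s, ‖z i‖ ^ 6 :=
  (pow_le_pow_left₀ (norm_nonneg _) (norm_sum_le _ _) 6).trans
    (pow_sum_le_card_mul_sum_pow (fun _ _ => norm_nonneg _) 5)

/-- Broad-narrow dichotomy for a sum of at most `K` nonnegative numbers. -/
theorem sum_pow_six_le_narrow_add_broad (s : Finset ℕ) (K : ℕ) (hs : s.card ≤ K) (a : ℕ → ℝ)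
    (ha : ∀ i, 0 ≤ a i) :
    (∑ i ∈ s, a i) ^ 6 ≤ 4 ^ 6 * ∑ i ∈ s, a i ^ 6 + (K : ℝ) ^ 8 *
      ∑ i ∈ s, ∑ j ∈ s with (i + 2 ≤ j ∨ j + 2 ≤ i), a i ^ 2 * a j ^ 4 := by
  rcases s.eq_empty_or_nonempty with rfl | hne
  · simp
  obtain ⟨k, hk, hmax⟩ := Finset.exists_max_image s a hne
  have hKpos : 0 < (K : ℝ) := by
    have := Finset.card_pos.2 hne
    exact_mod_cast this.trans_le hs
  have hsK : (s.card : ℝ) ≤ K := by exact_mod_cast hs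
  have hA0 : 0 ≤ ∑ i ∈ s, a i := Finset.sum_nonneg fun i _ => ha i
  have hn0 : 0 ≤ ∑ i ∈ s, a i ^ 6 := Finset.sum_nonneg fun i _ => pow_nonneg (ha i) _
  have hb0 : ∀ i, 0 ≤ ∑ j ∈ s with (i + 2 ≤ j ∨ j + 2 ≤ i), a i ^ 2 * a j ^ 4 := fun i =>
    Finset.sum_nonneg fun j _ => mul_nonneg (pow_nonneg (ha i) _) (pow_nonneg (ha j) _)
  have hbb0 : 0 ≤ ∑ i ∈ s, ∑ j ∈ s with (i + 2 ≤ j ∨ j + 2 ≤ i), a i ^ 2 * a j ^ 4 :=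
    Finset.sum_nonneg fun i _ => hb0 i
  by_cases hex : ∃ j ∈ s, (j + 2 ≤ k ∨ k + 2 ≤ j) ∧ a k ≤ K * a j
  · obtain ⟨j, hj, hfar, hle⟩ := hex
    have h1 : ∑ i ∈ s, a i ≤ K * a k :=
      (Finset.sum_le_card_nsmul s a (a k) hmax).trans (by
        rw [nsmul_eq_mul]; exact mul_le_mul_of_nonneg_right hsK (ha k))
    have h2 : a j ^ 2 * a k ^ 4
        ≤ ∑ i ∈ s, ∑ j ∈ s with (i + 2 ≤ j ∨ j + 2 ≤ i), a i ^ 2 * a j ^ 4 := by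
      refine le_trans ?_ (Finset.single_le_sum (fun i _ => hb0 i) hj)
      refine Finset.single_le_sum (f := fun k => a j ^ 2 * a k ^ 4) (fun i _ =>
        mul_nonneg (pow_nonneg (ha _) _) (pow_nonneg (ha _) _)) ?_
      simp [hk, hfar]
    calc (∑ i ∈ s, a i) ^ 6 ≤ (K * a k) ^ 6 := pow_le_pow_left₀ hA0 h1 6
      _ = K ^ 6 * a k ^ 4 * a k ^ 2 := by ring
      _ ≤ K ^ 6 * a k ^ 4 * (K * a j) ^ 2 := by
        refine mul_le_mul_of_nonneg_left (pow_le_pow_left₀ (ha k) hle 2) ?_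
        exact mul_nonneg (by positivity) (pow_nonneg (ha k) _)
      _ = K ^ 8 * (a j ^ 2 * a k ^ 4) := by ring
      _ ≤ K ^ 8 * _ := mul_le_mul_of_nonneg_left h2 (by positivity)
      _ ≤ _ := le_add_of_nonneg_left (by positivity)
  · push Not at hex
    have h1 : ∑ i ∈ s, a i ≤ 4 * a k := by
      rw [← Finset.sum_filter_add_sum_filter_not s (fun j => j + 2 ≤ k ∨ k + 2 ≤ j)]
      have hfar : ∑ i ∈ s with (i + 2 ≤ k ∨ k + 2 ≤ i), a i ≤ a k := by
        have : ∀ i ∈ ({i ∈ s | (i + 2 ≤ k ∨ k + 2 ≤ i)} : Finset ℕ), a i ≤ a k / K := by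
          intro i hi
          rw [Finset.mem_filter] at hi
          rw [le_div_iff₀ hKpos, mul_comm]
          exact (hex i hi.1 hi.2).le
        refine (Finset.sum_le_card_nsmul _ _ _ this).trans ?_
        rw [nsmul_eq_mul]
        have hc : (({i ∈ s | (i + 2 ≤ k ∨ k + 2 ≤ i)} : Finset ℕ).card : ℝ) ≤ K := by
          exact_mod_cast (Finset.card_filter_le _ _).trans hs
        calc _ ≤ (K : ℝ) * (a k / K) :=
              mul_le_mul_of_nonneg_right hc (div_nonneg (ha k) hKpos.le)
          _ = a k := by field_simp
      have hnear : ∑ i ∈ s with ¬ (i + 2 ≤ k ∨ k + 2 ≤ i), a i ≤ 3 * a k := by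
        refine (Finset.sum_le_card_nsmul _ _ (a k)
          fun i hi => hmax i (Finset.mem_filter.1 hi).1).trans ?_
        rw [nsmul_eq_mul]
        refine mul_le_mul_of_nonneg_right ?_ (ha k)
        have : ({i ∈ s | ¬ (i + 2 ≤ k ∨ k + 2 ≤ i)} : Finset ℕ) ⊆ Finset.Icc (k - 1) (k + 1) := by
          intro i hi
          simp only [Finset.mem_filter, Finset.mem_Icc] at hi ⊢
          omega
        have hc := Finset.card_le_card this
        rw [Nat.card_Icc] at hc
        have : ({i ∈ s | ¬ (i + 2 ≤ k ∨ k + 2 ≤ i)} : Finset ℕ).card ≤ 3 := by omega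
        exact_mod_cast this
      linarith
    calc (∑ i ∈ s, a i) ^ 6 ≤ (4 * a k) ^ 6 := pow_le_pow_left₀ hA0 h1 6
      _ = 4 ^ 6 * a k ^ 6 := by ring
      _ ≤ 4 ^ 6 * ∑ i ∈ s, a i ^ 6 := mul_le_mul_of_nonneg_left
        (Finset.single_le_sum (f := fun i => a i ^ 6) (fun i _ => pow_nonneg (ha i) _) hk)
        (by norm_num)
      _ ≤ _ := le_add_of_nonneg_right (by positivity)

section Decoupling

variable {X : Type*} [TopologicalSpace X] [SecondCountableTopology X] [MeasurableSpace X]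
  [BorelSpace X] (m : Measure X) [IsFiniteMeasure m]

/-- Hölder's inequality with exponents `3` and `3 / 2`, stated through upper bounds. -/
theorem integral_sq_mul_pow_four_le {f g : X → ℂ} (hf : IsBC f) (hg : IsBC g) {U a b : ℝ}
    (hU : 0 ≤ U) (ha : 0 ≤ a) (hb : 0 ≤ b) (hfa : ∫ x, ‖f x‖ ^ 6 ∂m ≤ U * a ^ 3)
    (hgb : ∫ x, ‖g x‖ ^ 6 ∂m ≤ U * b ^ 3) :
    ∫ x, ‖f x‖ ^ 2 * ‖g x‖ ^ 4 ∂m ≤ U * (a * b ^ 2) := by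
  have key : ∀ t : ℝ, 0 < t →
      ∫ x, ‖f x‖ ^ 2 * ‖g x‖ ^ 4 ∂m ≤ U * ((a + t) * (b + t) ^ 2) := by
    intro t ht
    have hat : 0 < a + t := by linarith
    have hbt : 0 < b + t := by linarith
    have pt : ∀ x, ‖f x‖ ^ 2 * ‖g x‖ ^ 4 ≤ ((a + t) * (b + t) ^ 2 / 3 / (a + t) ^ 3) * ‖f x‖ ^ 6
        + (2 * ((a + t) * (b + t) ^ 2 / 3) / (b + t) ^ 3) * ‖g x‖ ^ 6 := by
      intro x
      set p := ‖f x‖ ^ 2 / (a + t) with hp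
      set q := ‖g x‖ ^ 2 / (b + t) with hq
      have hp0 : 0 ≤ p := by positivity
      have hq0 : 0 ≤ q := by positivity
      have e1 : ‖f x‖ ^ 2 = p * (a + t) := by rw [hp]; field_simp
      have e2 : ‖g x‖ ^ 2 = q * (b + t) := by rw [hq]; field_simp
      have e3 : ‖f x‖ ^ 6 = (p * (a + t)) ^ 3 := by rw [← e1]; ring
      have e4 : ‖g x‖ ^ 6 = (q * (b + t)) ^ 3 := by rw [← e2]; ring
      have e5 : ‖g x‖ ^ 4 = (q * (b + t)) ^ 2 := by rw [← e2]; ring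
      rw [e1, e3, e4, e5]
      have amgm : p * q ^ 2 ≤ (p ^ 3 + 2 * q ^ 3) / 3 := by
        nlinarith [mul_nonneg (add_nonneg hp0 (add_nonneg hq0 hq0)) (sq_nonneg (p - q))]
      have : (a + t) * (b + t) ^ 2 / 3 / (a + t) ^ 3 * (p * (a + t)) ^ 3
          + 2 * ((a + t) * (b + t) ^ 2 / 3) / (b + t) ^ 3 * (q * (b + t)) ^ 3
          = ((p ^ 3 + 2 * q ^ 3) / 3) * ((a + t) * (b + t) ^ 2) := by
        field_simp
      rw [this]
      calc p * (a + t) * (q * (b + t)) ^ 2 = (p * q ^ 2) * ((a + t) * (b + t) ^ 2) := by ring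
        _ ≤ _ := mul_le_mul_of_nonneg_right amgm (by positivity)
    have hf6 := (hf.norm.pow 6).integrable (m := m)
    have hg6 := (hg.norm.pow 6).integrable (m := m)
    have h1 := integral_mono ((hf.norm.pow 2).mul (hg.norm.pow 4)).integrable
      ((hf6.const_mul _).add (hg6.const_mul _)) pt
    refine h1.trans ?_
    simp only [Pi.add_apply]
    rw [integral_add (hf6.const_mul _) (hg6.const_mul _), integral_const_mul, integral_const_mul]
    have hfa' : ∫ x, ‖f x‖ ^ 6 ∂m ≤ U * (a + t) ^ 3 :=
      hfa.trans (mul_le_mul_of_nonneg_left (pow_le_pow_left₀ ha (by linarith) 3) hU)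
    have hgb' : ∫ x, ‖g x‖ ^ 6 ∂m ≤ U * (b + t) ^ 3 :=
      hgb.trans (mul_le_mul_of_nonneg_left (pow_le_pow_left₀ hb (by linarith) 3) hU)
    calc _ ≤ ((a + t) * (b + t) ^ 2 / 3 / (a + t) ^ 3) * (U * (a + t) ^ 3)
        + (2 * ((a + t) * (b + t) ^ 2 / 3) / (b + t) ^ 3) * (U * (b + t) ^ 3) :=
          add_le_add (mul_le_mul_of_nonneg_left hfa' (by positivity))
            (mul_le_mul_of_nonneg_left hgb' (by positivity))
      _ = _ := by field_simp; ring
  have hlim : Filter.Tendsto (fun t : ℝ => U * ((a + t) * (b + t) ^ 2)) (nhdsWithin 0 (Ioi 0))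
      (nhds (U * (a * b ^ 2))) := by
    have : Continuous (fun t : ℝ => U * ((a + t) * (b + t) ^ 2)) := by fun_prop
    have := (this.tendsto 0).mono_left (nhdsWithin_le_nhds (s := Ioi 0))
    simpa using this
  exact ge_of_tendsto hlim (Filter.eventually_of_mem self_mem_nhdsWithin fun t ht => key t ht)

end Decoupling

theorem IsBC.blockSum {X : Type*} [TopologicalSpace X] {K P : ℕ} {G : ℕ → X → ℂ}
    (hG : ∀ p, IsBC (G p)) (L q : ℕ) :
    IsBC (fun x => blockSum K P (fun p => G p x) L q) :=
  IsBC.sum _ fun p _ => hG p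

section Decoupling

variable {X : Type*} [TopologicalSpace X] [SecondCountableTopology X] [MeasurableSpace X]
  [BorelSpace X] (m : Measure X) [IsFiniteMeasure m]

/-- The orthogonality needed for decoupling: inside a block of level `L ≤ T`, products of two far
apart blocks of level `L - 2 * b` are orthogonal to the fourth power of a transversal block of
level `L - b`. -/
def TransversalOrthogonality (K P T C d : ℕ) (G : ℕ → X → ℂ) : Prop :=
  ∀ L ≤ T, ∀ b, 1 ≤ b → b ≤ d → 2 * b ≤ L → ∀ i j j' : ℕ,
    j / K ^ (2 * b - 1) = j' / K ^ (2 * b - 1) → j / K ^ (2 * b) = i / K ^ b →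
    (j / K ^ (2 * b - 1) + 2 ≤ i / K ^ (b - 1) ∨ i / K ^ (b - 1) + 2 ≤ j / K ^ (2 * b - 1)) →
    (j + C * K ≤ j' ∨ j' + C * K ≤ j) →
    ∫ x, blockSum K P (fun p => G p x) (L - 2 * b) j
      * starRingEnd ℂ (blockSum K P (fun p => G p x) (L - 2 * b) j')
      * ((‖blockSum K P (fun p => G p x) (L - b) i‖ ^ 4 : ℝ) : ℂ) ∂m = 0

theorem bilinear_decoupling {K P T C d : ℕ} {G : ℕ → X → ℂ} (hG : ∀ p, IsBC (G p))
    (hK : 1 ≤ K) (hC : 1 ≤ C) (horth : TransversalOrthogonality m K P T C d G)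
    {Q : ℕ → ℝ} (hQ : ∀ p, 0 ≤ Q p) {B z : ℝ} (hB : 0 ≤ B) (hz : 1 ≤ z) {L : ℕ} (hL : L ≤ T)
    (ih : ∀ l < L, ∀ q, ∫ x, ‖blockSum K P (fun p => G p x) l q‖ ^ 6 ∂m
      ≤ B * z ^ (2 * l) * blockSum K P Q l q ^ 3) (N : ℕ) :
    ∀ b e i₁ i₂ : ℕ, 1 ≤ b → b * 2 ^ N ≤ L → b * 2 ^ N ≤ d → L - 2 * b ≤ e → e < L →
      i₁ / K ^ (L - e) = i₂ / K ^ b →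
      (i₁ / K ^ (L - 1 - e) + 2 ≤ i₂ / K ^ (b - 1) ∨ i₂ / K ^ (b - 1) + 2 ≤ i₁ / K ^ (L - 1 - e)) →
      ∫ x, ‖blockSum K P (fun p => G p x) e i₁‖ ^ 2
          * ‖blockSum K P (fun p => G p x) (L - b) i₂‖ ^ 4 ∂m
        ≤ (2 * C * K) ^ 2 * B * z ^ (2 * L) / z ^ (b * N)
          * (blockSum K P Q e i₁ * blockSum K P Q (L - b) i₂ ^ 2) := by
  have hz0 : 0 < z := by linarith
  have hCK : (1 : ℝ) ≤ 2 * C * K := by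
    have : (1 : ℝ) ≤ C := by exact_mod_cast hC
    have : (1 : ℝ) ≤ K := by exact_mod_cast hK
    nlinarith
  have hS := fun l q => blockSum_nonneg K P hQ l q
  induction N with
  | zero =>
    intro b e i₁ i₂ hb hbL _ _ heL _ _
    have hmono : ∀ l < L, ∀ q, ∫ x, ‖blockSum K P (fun p => G p x) l q‖ ^ 6 ∂m
        ≤ B * z ^ (2 * L) * blockSum K P Q l q ^ 3 := fun l hl q =>
      (ih l hl q).trans (mul_le_mul_of_nonneg_right (mul_le_mul_of_nonneg_left
        (pow_le_pow_right₀ hz (by omega)) hB) (pow_nonneg (hS l q) 3))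
    refine (integral_sq_mul_pow_four_le m (IsBC.blockSum hG e i₁) (IsBC.blockSum hG (L - b) i₂)
      (by positivity) (hS _ _) (hS _ _) (hmono e heL i₁) (hmono (L - b) (by omega) i₂)).trans ?_
    refine mul_le_mul_of_nonneg_right ?_ (mul_nonneg (hS _ _) (pow_nonneg (hS _ _) 2))
    have h1 : (1 : ℝ) ≤ (2 * C * K) ^ 2 := one_le_pow₀ hCK
    have : 0 ≤ B * z ^ (2 * L) := by positivity
    simp only [mul_zero, pow_zero, div_one]
    nlinarith
  | succ N IH =>
    intro b e i₁ i₂ hb hbL hbd heL' heL hpar hsep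
    have hbb : b * 2 ≤ b * 2 ^ (N + 1) := Nat.mul_le_mul_left b (by
      rw [pow_succ]; have := Nat.one_le_two_pow (n := N); omega)
    obtain ⟨k, rfl⟩ : ∃ k, e = (L - 2 * b) + k := ⟨e - (L - 2 * b), by omega⟩
    set J : Finset ℕ := {q' ∈ Finset.range P | q' / K ^ k = i₁} with hJ
    have hanc : ∀ j ∈ J, j / K ^ (2 * b - 1) = i₁ / K ^ (L - 1 - (L - 2 * b + k)) ∧
        j / K ^ (2 * b) = i₁ / K ^ (L - (L - 2 * b + k)) := by
      intro j hj
      have hj2 : j / K ^ k = i₁ := (Finset.mem_filter.1 hj).2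
      constructor
      · rw [← hj2, Nat.div_div_eq_div_mul, ← pow_add]; congr 2; omega
      · rw [← hj2, Nat.div_div_eq_div_mul, ← pow_add]; congr 2; omega
    have hbcF := fun l q => IsBC.blockSum (K := K) (P := P) hG l q
    have step1 := integral_sq_sum_le_of_almost_orthogonal m J
      (fun j x => blockSum K P (fun p => G p x) (L - 2 * b) j)
      (fun x => ‖blockSum K P (fun p => G p x) (L - b) i₂‖ ^ 4)
      (fun j => hbcF _ _) ((hbcF _ _).norm.pow 4) (fun x => by positivity) (C * K) (by
        intro j hj j' hj' hfar
        refine horth L hL b hb (by omega) (by omega) i₂ j j' ?_ ?_ ?_ hfar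
        · rw [(hanc j hj).1, (hanc j' hj').1]
        · rw [(hanc j hj).2, hpar]
        · rw [(hanc j hj).1]; exact hsep)
    have step2 : ∀ j ∈ J, ∫ x, ‖blockSum K P (fun p => G p x) (L - 2 * b) j‖ ^ 2
          * ‖blockSum K P (fun p => G p x) (L - b) i₂‖ ^ 4 ∂m
        ≤ (2 * C * K) * B * z ^ (2 * L) / z ^ (b * (N + 1))
          * (blockSum K P Q (L - 2 * b) j * blockSum K P Q (L - b) i₂ ^ 2) := by
      intro j hj
      have a1 := sq_integral_mul_le m
        (u := fun x => ‖blockSum K P (fun p => G p x) (L - b) i₂‖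
          * ‖blockSum K P (fun p => G p x) (L - 2 * b) j‖ ^ 2)
        (v := fun x => ‖blockSum K P (fun p => G p x) (L - b) i₂‖ ^ 3)
        ((hbcF _ _).norm.mul ((hbcF _ _).norm.pow 2)) ((hbcF _ _).norm.pow 3)
      have e1 : ∀ x, ‖blockSum K P (fun p => G p x) (L - b) i₂‖
          * ‖blockSum K P (fun p => G p x) (L - 2 * b) j‖ ^ 2
          * ‖blockSum K P (fun p => G p x) (L - b) i₂‖ ^ 3
          = ‖blockSum K P (fun p => G p x) (L - 2 * b) j‖ ^ 2
          * ‖blockSum K P (fun p => G p x) (L - b) i₂‖ ^ 4 := fun x => by ring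
      have e2 : ∀ x, (‖blockSum K P (fun p => G p x) (L - b) i₂‖
          * ‖blockSum K P (fun p => G p x) (L - 2 * b) j‖ ^ 2) ^ 2
          = ‖blockSum K P (fun p => G p x) (L - b) i₂‖ ^ 2
          * ‖blockSum K P (fun p => G p x) (L - 2 * b) j‖ ^ 4 := fun x => by ring
      have e3 : ∀ x, (‖blockSum K P (fun p => G p x) (L - b) i₂‖ ^ 3) ^ 2
          = ‖blockSum K P (fun p => G p x) (L - b) i₂‖ ^ 6 := fun x => by ring
      simp only [e1, e2, e3] at a1
      have a2 := IH (2 * b) (L - b) i₂ j (by omega) (by rw [pow_succ] at hbL; linarith)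
        (by rw [pow_succ] at hbd; linarith) (by omega) (by omega)
        (by rw [(hanc j hj).2, hpar]; congr 2; omega)
        (by
          rw [(hanc j hj).1]
          have : L - 1 - (L - b) = b - 1 := by omega
          rw [this]; exact hsep.symm)
      have a3 := ih (L - b) (by omega) i₂
      refine (abs_le_of_sq_le_sq' ?_ (mul_nonneg (by positivity)
        (mul_nonneg (hS _ _) (pow_nonneg (hS _ _) 2)))).2
      refine a1.trans ((mul_le_mul a2 a3 (integral_nonneg fun x => by positivity)
        (mul_nonneg (by positivity) (mul_nonneg (hS _ _) (pow_nonneg (hS _ _) 2)))).trans ?_)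
      have hzz : z ^ (2 * L) = z ^ (2 * (L - b)) * z ^ (2 * b) := by
        rw [← pow_add]; congr 1; omega
      have hz2 : z ^ (2 * b * N) = (z ^ (b * N)) ^ 2 := by rw [← pow_mul]; congr 1; ring
      have hz3 : z ^ (b * (N + 1)) = z ^ (b * N) * z ^ b := by rw [← pow_add]; congr 1
      have hz4 : z ^ (2 * b) = (z ^ b) ^ 2 := by rw [← pow_mul]; congr 1; ring
      rw [hzz, hz2, hz3, hz4]
      apply le_of_eq
      field_simp
    have hsplit : ∀ x, blockSum K P (fun p => G p x) (L - 2 * b + k) i₁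
        = ∑ j ∈ J, blockSum K P (fun p => G p x) (L - 2 * b) j := fun x =>
      blockSum_add K P (fun p => G p x) (L - 2 * b) k i₁
    have hsplitQ : blockSum K P Q (L - 2 * b + k) i₁
        = ∑ j ∈ J, blockSum K P Q (L - 2 * b) j := blockSum_add K P Q (L - 2 * b) k i₁
    simp only [hsplit, hsplitQ]
    refine step1.trans ((mul_le_mul_of_nonneg_left (Finset.sum_le_sum step2)
      (by positivity)).trans (le_of_eq ?_))
    rw [← Finset.mul_sum, ← Finset.sum_mul]
    push_cast
    ring

/-- `ℓ²` decoupling in `L⁶` under transversal orthogonality. -/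
theorem decoupling_of_transversalOrthogonality {K P T C n : ℕ} {G : ℕ → X → ℂ}
    (hG : ∀ p, IsBC (G p)) (hK : 1 ≤ K) (hC : 1 ≤ C)
    (horth : TransversalOrthogonality m K P T C (2 ^ n) G)
    {Q : ℕ → ℝ} (hQ : ∀ p, 0 ≤ Q p) (hGQ : ∀ p, ∫ x, ‖G p x‖ ^ 6 ∂m ≤ Q p ^ 3)
    {z : ℝ} (hz : 1 ≤ z) (hsmall : 4 ^ 6 / z ^ 2 + (K : ℝ) ^ 8 * (2 * C * K) ^ 2 / z ^ n ≤ 1)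
    {L : ℕ} (hL : L ≤ T) (q : ℕ) :
    ∫ x, ‖blockSum K P (fun p => G p x) L q‖ ^ 6 ∂m
      ≤ (K : ℝ) ^ (5 * 2 ^ n) * z ^ (2 * L) * blockSum K P Q L q ^ 3 := by
  have hz0 : 0 < z := by linarith
  have hK1 : (1 : ℝ) ≤ K := by exact_mod_cast hK
  have hS := fun l q => blockSum_nonneg K P hQ l q
  have hbcF := fun l q => IsBC.blockSum (K := K) (P := P) hG l q
  induction L using Nat.strong_induction_on generalizing q with
  | _ L ih =>
  rcases lt_or_ge L (2 ^ n) with hLn | hLn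
  · have h1 : ∀ x, ‖blockSum K P (fun p => G p x) L q‖ ^ 6 ≤ ((K : ℝ) ^ L) ^ 5 *
        ∑ p ∈ Finset.range P with p / K ^ L = q, ‖G p x‖ ^ 6 := fun x => by
      refine (norm_sum_pow_six_le _ _).trans (mul_le_mul_of_nonneg_right ?_
        (Finset.sum_nonneg fun _ _ => by positivity))
      refine pow_le_pow_left₀ (by positivity) ?_ 5
      exact_mod_cast card_block_le K P L q hK
    have h2 := integral_mono (μ := m) ((hbcF L q).norm.pow 6).integrable
      ((IsBC.sum _ fun p _ => (hG p).norm.pow 6).integrable.const_mul _) h1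
    refine h2.trans ?_
    rw [integral_const_mul, integral_finsetSum _ fun p _ => ((hG p).norm.pow 6).integrable]
    have h3 : ∑ p ∈ Finset.range P with p / K ^ L = q, ∫ x, ‖G p x‖ ^ 6 ∂m
        ≤ blockSum K P Q L q ^ 3 :=
      (Finset.sum_le_sum fun p _ => hGQ p).trans (sum_pow_three_le _ fun p _ => hQ p)
    have h4 : ((K : ℝ) ^ L) ^ 5 ≤ (K : ℝ) ^ (5 * 2 ^ n) * z ^ (2 * L) := by
      rw [← pow_mul]
      calc (K : ℝ) ^ (L * 5) ≤ (K : ℝ) ^ (5 * 2 ^ n) := pow_le_pow_right₀ hK1 (by omega)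
        _ ≤ _ := le_mul_of_one_le_right (by positivity) (one_le_pow₀ hz)
    exact mul_le_mul h4 h3 (Finset.sum_nonneg fun p _ => integral_nonneg fun x => by positivity)
      (by positivity)
  · set B : ℝ := (K : ℝ) ^ (5 * 2 ^ n) with hB
    have hB0 : 0 ≤ B := by positivity
    have hLpos : 1 ≤ L := Nat.one_le_two_pow.trans hLn
    have ih' : ∀ l < L, ∀ q, ∫ x, ‖blockSum K P (fun p => G p x) l q‖ ^ 6 ∂m
      ≤ B * z ^ (2 * l) * blockSum K P Q l q ^ 3 := fun l hl q => ih l hl (by omega) q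
    obtain ⟨l, rfl⟩ : ∃ l, L = l + 1 := ⟨L - 1, by omega⟩
    set J : Finset ℕ := {q' ∈ Finset.range P | q' / K ^ 1 = q} with hJ
    have hbil : ∀ i ∈ J, ∀ j ∈ J, (i + 2 ≤ j ∨ j + 2 ≤ i) →
        ∫ x, ‖blockSum K P (fun p => G p x) l i‖ ^ 2 * ‖blockSum K P (fun p => G p x) l j‖ ^ 4 ∂m
          ≤ (2 * C * K) ^ 2 * B * z ^ (2 * (l + 1)) / z ^ n
            * (blockSum K P Q l i * blockSum K P Q l j ^ 2) := by
      intro i hi j hj hfar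
      have := bilinear_decoupling m hG hK hC horth hQ hB0 hz hL ih' n 1 l i j le_rfl (by omega)
        (by omega) (by omega) (by omega) (by
          rw [Nat.add_sub_cancel_left, (Finset.mem_filter.1 hi).2, (Finset.mem_filter.1 hj).2])
        (by simpa using hfar)
      simpa using this
    have hsplit : ∀ x, blockSum K P (fun p => G p x) (l + 1) q
        = ∑ j ∈ J, blockSum K P (fun p => G p x) l j := fun x =>
      blockSum_add K P (fun p => G p x) l 1 q
    have hsplitQ : blockSum K P Q (l + 1) q = ∑ j ∈ J, blockSum K P Q l j :=
      blockSum_add K P Q l 1 q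
    have hcard : J.card ≤ K := (card_block_le K P 1 q hK).trans_eq (pow_one K)
    have pt : ∀ x, ‖blockSum K P (fun p => G p x) (l + 1) q‖ ^ 6
        ≤ 4 ^ 6 * ∑ i ∈ J, ‖blockSum K P (fun p => G p x) l i‖ ^ 6 + (K : ℝ) ^ 8 *
          ∑ i ∈ J, ∑ j ∈ J with (i + 2 ≤ j ∨ j + 2 ≤ i),
            ‖blockSum K P (fun p => G p x) l i‖ ^ 2 * ‖blockSum K P (fun p => G p x) l j‖ ^ 4 := by
      intro x
      rw [hsplit]
      exact (pow_le_pow_left₀ (norm_nonneg _) (norm_sum_le _ _) 6).trans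
        (sum_pow_six_le_narrow_add_broad J K hcard _ fun i => norm_nonneg _)
    have bc1 : IsBC (fun x => ∑ i ∈ J, ‖blockSum K P (fun p => G p x) l i‖ ^ 6) :=
      IsBC.sum _ fun i _ => (hbcF l i).norm.pow 6
    have bc2 : ∀ i, IsBC (fun x => ∑ j ∈ J with (i + 2 ≤ j ∨ j + 2 ≤ i),
        ‖blockSum K P (fun p => G p x) l i‖ ^ 2 * ‖blockSum K P (fun p => G p x) l j‖ ^ 4) :=
      fun i => IsBC.sum _ fun j _ => ((hbcF l i).norm.pow 2).mul ((hbcF l j).norm.pow 4)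
    have h1 := integral_mono (μ := m) ((hbcF (l + 1) q).norm.pow 6).integrable
      ((bc1.integrable.const_mul _).add ((IsBC.sum J fun i _ => bc2 i).integrable.const_mul _)) pt
    refine h1.trans ?_
    simp only [Pi.add_apply]
    rw [integral_add (bc1.integrable.const_mul _)
      ((IsBC.sum J fun i _ => bc2 i).integrable.const_mul _), integral_const_mul,
      integral_const_mul, integral_finsetSum _ fun i _ => ((hbcF l i).norm.pow 6).integrable,
      integral_finsetSum _ fun i _ => (bc2 i).integrable]
    set S := blockSum K P Q (l + 1) q with hSdef
    have hS0 : 0 ≤ S := hS _ _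
    have n1 : ∑ i ∈ J, ∫ x, ‖blockSum K P (fun p => G p x) l i‖ ^ 6 ∂m
        ≤ B * z ^ (2 * l) * S ^ 3 := by
      refine (Finset.sum_le_sum fun i _ => ih' l (by omega) i).trans ?_
      rw [← Finset.mul_sum]
      refine mul_le_mul_of_nonneg_left ?_ (by positivity)
      rw [hsplitQ]
      exact sum_pow_three_le _ fun i _ => hS l i
    have n2 : ∑ i ∈ J, ∫ x, ∑ j ∈ J with (i + 2 ≤ j ∨ j + 2 ≤ i),
        ‖blockSum K P (fun p => G p x) l i‖ ^ 2 * ‖blockSum K P (fun p => G p x) l j‖ ^ 4 ∂m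
        ≤ (2 * C * K) ^ 2 * B * z ^ (2 * (l + 1)) / z ^ n * S ^ 3 := by
      have a1 : ∀ i ∈ J, ∫ x, ∑ j ∈ J with (i + 2 ≤ j ∨ j + 2 ≤ i),
          ‖blockSum K P (fun p => G p x) l i‖ ^ 2 * ‖blockSum K P (fun p => G p x) l j‖ ^ 4 ∂m
          ≤ (2 * C * K) ^ 2 * B * z ^ (2 * (l + 1)) / z ^ n * (blockSum K P Q l i * S ^ 2) := by
        intro i hi
        rw [integral_finsetSum _ fun j _ =>
          (((hbcF l i).norm.pow 2).mul ((hbcF l j).norm.pow 4)).integrable]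
        refine (Finset.sum_le_sum fun j hj => hbil i hi j (Finset.mem_filter.1 hj).1
          (Finset.mem_filter.1 hj).2).trans ?_
        rw [← Finset.mul_sum, ← Finset.mul_sum]
        refine mul_le_mul_of_nonneg_left (mul_le_mul_of_nonneg_left ?_ (hS l i)) (by positivity)
        refine (Finset.sum_le_sum_of_subset_of_nonneg (Finset.filter_subset _ _)
          fun j _ _ => sq_nonneg _).trans ?_
        rw [hsplitQ]
        exact Finset.sum_sq_le_sq_sum_of_nonneg fun j _ => hS l j
      refine (Finset.sum_le_sum a1).trans (le_of_eq ?_)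
      rw [← Finset.mul_sum, ← Finset.sum_mul, ← hsplitQ]
      ring
    have n3 := add_le_add (mul_le_mul_of_nonneg_left n1 (show (0 : ℝ) ≤ 4 ^ 6 by norm_num))
      (mul_le_mul_of_nonneg_left n2 (show (0 : ℝ) ≤ (K : ℝ) ^ 8 by positivity))
    refine n3.trans ?_
    have hzz : z ^ (2 * (l + 1)) = z ^ (2 * l) * z ^ 2 := by rw [← pow_add]; congr 1
    calc _ = (4 ^ 6 / z ^ 2 + (K : ℝ) ^ 8 * (2 * C * K) ^ 2 / z ^ n)
          * (B * z ^ (2 * (l + 1)) * S ^ 3) := by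
          rw [hzz]; field_simp
      _ ≤ 1 * (B * z ^ (2 * (l + 1)) * S ^ 3) := mul_le_mul_of_nonneg_right hsmall (by positivity)
      _ = _ := one_mul _

end Decoupling

section Geometry

/-- The cross product on `E3`. -/
def cross (u v : E3) : E3 :=
  !₂[u 1 * v 2 - u 2 * v 1, u 2 * v 0 - u 0 * v 2, u 0 * v 1 - u 1 * v 0]

theorem inner_cross (u v w : E3) :
    ⟪cross u v, w⟫ = (u 1 * v 2 - u 2 * v 1) * w 0 + (u 2 * v 0 - u 0 * v 2) * w 1
      + (u 0 * v 1 - u 1 * v 0) * w 2 := by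
  simp [cross, PiLp.inner_apply, Fin.sum_univ_three]
  ring

theorem Continuous.cross {X : Type*} [TopologicalSpace X] {u v : X → E3} (hu : Continuous u)
    (hv : Continuous v) : Continuous fun x => cross (u x) (v x) := by
  refine (PiLp.continuous_toLp 2 _).comp (continuous_pi fun i => ?_)
  fin_cases i <;> simp <;> fun_prop

theorem inner_cross_ne_zero {u v w : E3} (h : LinearIndependent ℝ ![u, v, w]) :
    ⟪cross u v, w⟫ ≠ 0 := by
  have h2 := h.map' (WithLp.linearEquiv 2 ℝ (Fin 3 → ℝ)).toLinearMap (LinearEquiv.ker _)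
  have h3 : LinearIndependent ℝ (Matrix.of fun i => ((![u, v, w] i : E3) : Fin 3 → ℝ)).row := h2
  rw [Matrix.linearIndependent_rows_iff_isUnit, Matrix.isUnit_iff_isUnit_det,
    isUnit_iff_ne_zero, Matrix.det_fin_three] at h3
  rw [inner_cross]
  intro h0
  apply h3
  simp
  linarith

/-- Continuous nonvanishing of a pairing on the diagonal persists near the diagonal. -/
theorem exists_le_abs_inner_near_diagonal {e g : ℝ → E3} (he : Continuous e) (hg : Continuous g)
    {a b : ℝ} (hne : ∀ θ ∈ Icc a b, ⟪e θ, g θ⟫ ≠ 0) :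
    ∃ c > 0, ∃ h > 0, ∀ θ' ∈ Icc a b, ∀ θ ∈ Icc a b, |θ - θ'| ≤ h → c ≤ |⟪e θ', g θ⟫| := by
  rcases (Icc a b).eq_empty_or_nonempty with hemp | hnon
  · exact ⟨1, one_pos, 1, one_pos, fun θ' h' => by simp [hemp] at h'⟩
  obtain ⟨θ₀, hθ₀, hmin⟩ := isCompact_Icc.exists_isMinOn hnon
    (f := fun θ => |⟪e θ, g θ⟫|) (by fun_prop)
  have hc : 0 < |⟪e θ₀, g θ₀⟫| := abs_pos.2 (hne θ₀ hθ₀)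
  have huc := (isCompact_Icc.prod isCompact_Icc).uniformContinuousOn_of_continuous
    (s := Icc a b ×ˢ Icc a b) (f := fun p : ℝ × ℝ => ⟪e p.1, g p.2⟫) (by fun_prop)
  rw [Metric.uniformContinuousOn_iff_le] at huc
  obtain ⟨h, hh, H⟩ := huc (|⟪e θ₀, g θ₀⟫| / 2) (by positivity)
  refine ⟨|⟪e θ₀, g θ₀⟫| / 2, by positivity, h, hh, fun θ' h' θ hθ hd => ?_⟩
  have h1 := H (θ', θ) ⟨h', hθ⟩ (θ', θ') ⟨h', h'⟩ (by
    rw [Prod.dist_eq]; simp [Real.dist_eq, hd])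
  have h2 : |⟪e θ₀, g θ₀⟫| ≤ |⟪e θ', g θ'⟫| := hmin h'
  rw [Real.dist_eq] at h1
  have h3 := abs_sub_abs_le_abs_sub (⟪e θ', g θ'⟫) (⟪e θ', g θ⟫)
  rw [abs_sub_comm] at h3
  simp only at h1
  linarith

/-- Two fields of test vectors along a nondegenerate curve, quantifying curvature and torsion of
the cone over the curve. -/
structure ConeFrame (γ : ℝ → E3) (a b : ℝ) (e f : ℝ → E3) (c C h : ℝ) : Prop where
  c_pos : 0 < c
  C_pos : 0 < C
  h_pos : 0 < h
  norm_e : ∀ θ ∈ Icc a b, ‖e θ‖ ≤ 1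
  norm_f : ∀ θ ∈ Icc a b, ‖f θ‖ ≤ 1
  inner_f_self : ∀ θ ∈ Icc a b, ⟪f θ, γ θ⟫ = 0
  le_inner_f : ∀ θ' ∈ Icc a b, ∀ θ ∈ Icc a b, |θ - θ'| ≤ h → c * |θ - θ'| ≤ |⟪f θ', γ θ⟫|
  inner_e_le : ∀ θ' ∈ Icc a b, ∀ θ ∈ Icc a b, |θ - θ'| ≤ h → |⟪e θ', γ θ⟫| ≤ C * (θ - θ') ^ 2
  le_inner_e : ∀ θ' ∈ Icc a b, ∀ θ₁ ∈ Icc a b, ∀ θ₂ ∈ Icc a b, |θ₁ - θ'| ≤ h → |θ₂ - θ'| ≤ h →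
    ∀ s, (∀ θ ∈ uIcc θ₁ θ₂, s ≤ |θ - θ'|) →
      c * s * |θ₁ - θ₂| ≤ |⟪e θ', γ θ₁⟫ - ⟪e θ', γ θ₂⟫|

theorem exists_mean_value {φ φ' : ℝ → ℝ} (hφ : ∀ t, HasDerivAt φ (φ' t) t) (s t : ℝ) :
    ∃ ζ ∈ uIcc s t, φ s - φ t = φ' ζ * (s - t) := by
  rcases lt_trichotomy s t with hst | rfl | hst
  · obtain ⟨ζ, hζ, h⟩ := exists_hasDerivAt_eq_slope φ φ' hst
      (fun x _ => (hφ x).continuousAt.continuousWithinAt) fun x _ => hφ x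
    refine ⟨ζ, by rw [uIcc_of_le hst.le]; exact ⟨hζ.1.le, hζ.2.le⟩, ?_⟩
    rw [h]; have : t - s ≠ 0 := by linarith
    field_simp; ring
  · exact ⟨s, by simp, by simp⟩
  · obtain ⟨ζ, hζ, h⟩ := exists_hasDerivAt_eq_slope φ φ' hst
      (fun x _ => (hφ x).continuousAt.continuousWithinAt) fun x _ => hφ x
    refine ⟨ζ, by rw [uIcc_of_ge hst.le]; exact ⟨hζ.1.le, hζ.2.le⟩, ?_⟩
    rw [h]; have : s - t ≠ 0 := by linarith
    field_simp

theorem exists_coneFrame {γ : ℝ → E3} (hγ : ContDiff ℝ 2 γ) {a b : ℝ}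
    (hnd : ∀ θ ∈ Icc a b, LinearIndependent ℝ ![γ θ, deriv γ θ, deriv (deriv γ) θ]) :
    ∃ e f c C h, ConeFrame γ a b e f c C h := by
  have hγ1 : ContDiff ℝ 1 (deriv γ) := by
    have : ContDiff ℝ (1 + 1) γ := by simpa [one_add_one_eq_two] using hγ
    exact (contDiff_succ_iff_deriv.1 this).2.2
  have c0 : Continuous γ := hγ.continuous
  have c1 : Continuous (deriv γ) := hγ1.continuous
  have c2 : Continuous (deriv (deriv γ)) := hγ1.continuous_deriv le_rfl
  have d0 : ∀ t, HasDerivAt γ (deriv γ t) t := fun t =>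
    (hγ.differentiable (by norm_num) t).hasDerivAt
  have d1 : ∀ t, HasDerivAt (deriv γ) (deriv (deriv γ) t) t := fun t =>
    (hγ1.differentiable (by norm_num) t).hasDerivAt
  set e₀ : ℝ → E3 := fun θ => cross (γ θ) (deriv γ θ) with he₀
  set f₀ : ℝ → E3 := fun θ => cross (γ θ) (deriv (deriv γ) θ) with hf₀
  have ce : Continuous e₀ := c0.cross c1
  have cf : Continuous f₀ := c0.cross c2
  obtain ⟨M, hM⟩ := isCompact_Icc.exists_bound_of_continuousOn (s := Icc a b) (f := e₀)
    ce.continuousOn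
  obtain ⟨M', hM'⟩ := isCompact_Icc.exists_bound_of_continuousOn (s := Icc a b) (f := f₀)
    cf.continuousOn
  obtain ⟨M'', hM''⟩ := isCompact_Icc.exists_bound_of_continuousOn (s := Icc a b)
    (f := deriv (deriv γ)) c2.continuousOn
  set N : ℝ := max 1 (max M M') with hN
  have hN0 : 0 < N := lt_of_lt_of_le one_pos (le_max_left _ _)
  set e : ℝ → E3 := fun θ => N⁻¹ • e₀ θ with he
  set f : ℝ → E3 := fun θ => N⁻¹ • f₀ θ with hf
  have ce' : Continuous e := by fun_prop
  have cf' : Continuous f := by fun_prop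
  obtain ⟨c₁, hc₁, h₁, hh₁, H₁⟩ := exists_le_abs_inner_near_diagonal (a := a) (b := b) ce' c2
    (fun θ hθ => by
      rw [he, inner_smul_left]
      exact mul_ne_zero (by simpa using hN0.ne') (inner_cross_ne_zero (hnd θ hθ)))
  obtain ⟨c₂, hc₂, h₂, hh₂, H₂⟩ := exists_le_abs_inner_near_diagonal (a := a) (b := b) cf' c1
    (fun θ hθ => by
      rw [hf, inner_smul_left]
      refine mul_ne_zero (by simpa using hN0.ne') ?_
      have := inner_cross_ne_zero (hnd θ hθ)
      rw [inner_cross] at this ⊢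
      contrapose! this
      linarith)
  have ne : ∀ θ ∈ Icc a b, ‖e θ‖ ≤ 1 := fun θ hθ => by
    rw [he, norm_smul, norm_inv, Real.norm_of_nonneg hN0.le, inv_mul_le_iff₀ hN0, mul_one]
    exact (hM θ hθ).trans ((le_max_left _ _).trans (le_max_right _ _))
  have nf : ∀ θ ∈ Icc a b, ‖f θ‖ ≤ 1 := fun θ hθ => by
    rw [hf, norm_smul, norm_inv, Real.norm_of_nonneg hN0.le, inv_mul_le_iff₀ hN0, mul_one]
    exact (hM' θ hθ).trans ((le_max_right _ _).trans (le_max_right _ _))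
  have ee : ∀ θ, ⟪e θ, γ θ⟫ = 0 := fun θ => by
    rw [he, inner_smul_left, inner_cross]; ring
  have ee' : ∀ θ, ⟪e θ, deriv γ θ⟫ = 0 := fun θ => by
    rw [he, inner_smul_left, inner_cross]; ring
  have ff : ∀ θ, ⟪f θ, γ θ⟫ = 0 := fun θ => by
    rw [hf, inner_smul_left, inner_cross]; ring
  have dinner : ∀ (v : E3) {g g' : ℝ → E3}, (∀ t, HasDerivAt g (g' t) t) → ∀ t,
      HasDerivAt (fun t => ⟪v, g t⟫) ⟪v, g' t⟫ t := fun v g g' hg t => by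
    exact (innerSL ℝ v).hasFDerivAt.comp_hasDerivAt t (hg t)
  have sub : ∀ {x y : ℝ}, x ∈ Icc a b → y ∈ Icc a b → ∀ z ∈ uIcc x y, z ∈ Icc a b :=
    fun hx hy z hz => uIcc_subset_Icc hx hy hz
  have near : ∀ {x y h : ℝ}, |x - y| ≤ h → ∀ z ∈ uIcc x y, |z - y| ≤ h := fun hxy z hz => by
    rcases mem_uIcc.1 hz with ⟨h1, h2⟩ | ⟨h1, h2⟩ <;> rw [abs_le] at hxy ⊢ <;>
      constructor <;> linarith
  have firstD : ∀ θ' ζ : ℝ, ∃ ξ ∈ uIcc ζ θ', ⟪e θ', deriv γ ζ⟫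
      = ⟪e θ', deriv (deriv γ) ξ⟫ * (ζ - θ') := fun θ' ζ => by
    obtain ⟨ξ, hξ, h⟩ := exists_mean_value (dinner (e θ') d1) ζ θ'
    exact ⟨ξ, hξ, by rw [← h, ee', sub_zero]⟩
  refine ⟨e, f, min c₁ c₂, max 1 M'', min h₁ h₂, ⟨by positivity, by positivity, by positivity,
    ne, nf, fun θ _ => ff θ, ?_, ?_, ?_⟩⟩
  · intro θ' hθ' θ hθ hd
    obtain ⟨ζ, hζ, h⟩ := exists_mean_value (dinner (f θ') d0) θ θ'
    rw [ff, sub_zero] at h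
    rw [h, abs_mul]
    refine mul_le_mul_of_nonneg_right ((min_le_right _ _).trans (H₂ θ' hθ' ζ (sub hθ hθ' ζ hζ)
      ((near hd ζ hζ).trans (min_le_right _ _)))) (abs_nonneg _)
  · intro θ' hθ' θ hθ hd
    obtain ⟨ζ, hζ, h⟩ := exists_mean_value (dinner (e θ') d0) θ θ'
    obtain ⟨ξ, hξ, h'⟩ := firstD θ' ζ
    rw [ee, sub_zero, h'] at h
    rw [h, abs_mul, abs_mul, ← sq_abs (θ - θ'), sq, ← mul_assoc]
    refine mul_le_mul_of_nonneg_right (mul_le_mul ?_ (near le_rfl ζ hζ) (abs_nonneg _)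
      (by positivity)) (abs_nonneg _)
    have hξm := sub (sub hθ hθ' ζ hζ) hθ' ξ hξ
    calc |⟪e θ', deriv (deriv γ) ξ⟫| ≤ ‖e θ'‖ * ‖deriv (deriv γ) ξ‖ := abs_real_inner_le_norm _ _
      _ ≤ 1 * M'' := mul_le_mul (ne θ' hθ') (hM'' ξ hξm) (norm_nonneg _) zero_le_one
      _ ≤ _ := by rw [one_mul]; exact le_max_right _ _
  · intro θ' hθ' θ₁ hθ₁ θ₂ hθ₂ hd₁ hd₂ s hs
    obtain ⟨ζ, hζ, h⟩ := exists_mean_value (dinner (e θ') d0) θ₁ θ₂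
    obtain ⟨ξ, hξ, h'⟩ := firstD θ' ζ
    rw [h, h', abs_mul, abs_mul]
    have hζm := sub hθ₁ hθ₂ ζ hζ
    have hζd : |ζ - θ'| ≤ min h₁ h₂ := by
      rcases mem_uIcc.1 hζ with ⟨g1, g2⟩ | ⟨g1, g2⟩ <;> rw [abs_le] at hd₁ hd₂ ⊢ <;>
        constructor <;> linarith
    refine mul_le_mul_of_nonneg_right ?_ (abs_nonneg _)
    refine (mul_le_mul_of_nonneg_left (hs ζ hζ) (by positivity)).trans
      (mul_le_mul_of_nonneg_right ?_ (abs_nonneg _))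
    exact (min_le_left _ _).trans (H₁ θ' hθ' ξ (sub hζm hθ' ξ hξ)
      ((near hζd ξ hξ).trans (min_le_left _ _)))

end Geometry

section Spectrum

open scoped Pointwise

/-- The character of `E3` with frequency `ξ`. -/
def chr (ξ x : E3) : ℂ := Complex.exp (⟪x, ξ⟫ * Complex.I)

theorem norm_chr (ξ x : E3) : ‖chr ξ x‖ = 1 := Complex.norm_exp_ofReal_mul_I _

theorem continuous_chr (ξ : E3) : Continuous (chr ξ) := by
  unfold chr
  fun_prop

theorem isBC_chr (ξ : E3) : IsBC (chr ξ) := ⟨continuous_chr ξ, 1, fun x => (norm_chr ξ x).le⟩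

theorem chr_add (ξ η : E3) : chr (ξ + η) = chr ξ * chr η := by
  ext x
  simp only [chr, Pi.mul_apply, ← Complex.exp_add, inner_add_right]
  push_cast
  ring_nf

theorem conj_chr (ξ x : E3) : starRingEnd ℂ (chr ξ x) = chr (-ξ) x := by
  simp [chr, ← Complex.exp_conj]

/-- Trigonometric polynomials on `E3` with frequencies in `S`. -/
def HasSpectrum (S : Set E3) (f : E3 → ℂ) : Prop := f ∈ Submodule.span ℂ (chr '' S)

namespace HasSpectrum

variable {S T : Set E3} {f g : E3 → ℂ}

theorem chr {ξ : E3} (h : ξ ∈ S) : HasSpectrum S (chr ξ) :=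
  Submodule.subset_span (mem_image_of_mem _ h)

theorem mono (h : HasSpectrum S f) (hST : S ⊆ T) : HasSpectrum T f :=
  Submodule.span_mono (image_mono hST) h

theorem sum {ι : Type*} {F : ι → E3 → ℂ} (s : Finset ι) (h : ∀ i ∈ s, HasSpectrum S (F i)) :
    HasSpectrum S (fun x => ∑ i ∈ s, F i x) := by
  have := Submodule.sum_mem (Submodule.span ℂ (_root_.chr '' S)) h
  rwa [Finset.sum_fn] at this

theorem const_mul (c : ℂ) (h : HasSpectrum S f) : HasSpectrum S (fun x => c * f x) :=
  Submodule.smul_mem _ c h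

theorem mul (hf : HasSpectrum S f) (hg : HasSpectrum T g) :
    HasSpectrum (S + T) (fun x => f x * g x) := by
  have h := Submodule.mul_mem_mul hf hg
  rw [Submodule.span_mul_span] at h
  refine Submodule.span_mono ?_ h
  rintro _ ⟨_, ⟨ξ, hξ, rfl⟩, _, ⟨η, hη, rfl⟩, rfl⟩
  exact ⟨ξ + η, add_mem_add hξ hη, chr_add ξ η⟩

theorem conj (hf : HasSpectrum S f) : HasSpectrum (-S) (fun x => starRingEnd ℂ (f x)) := by
  induction hf using Submodule.span_induction with
  | mem f h =>
    obtain ⟨ξ, hξ, rfl⟩ := h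
    simp only [conj_chr]
    exact HasSpectrum.chr (by simpa using hξ)
  | zero =>
    simp only [Pi.zero_apply, map_zero]
    exact Submodule.zero_mem _
  | add f g _ _ hf hg =>
    simp only [Pi.add_apply, map_add]
    exact Submodule.add_mem _ hf hg
  | smul c f _ hf =>
    simp only [Pi.smul_apply, smul_eq_mul, map_mul]
    exact const_mul _ hf

theorem isBC (hf : HasSpectrum S f) : IsBC f := by
  induction hf using Submodule.span_induction with
  | mem f h =>
    obtain ⟨ξ, -, rfl⟩ := h
    exact isBC_chr ξ
  | zero => exact IsBC.const 0
  | add f g _ _ hf hg => exact hf.add hg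
  | smul c f _ hf => exact (IsBC.const c).mul hf

end HasSpectrum

/-- Measures whose Fourier transform vanishes outside the unit ball. -/
def BandLimited (m : Measure E3) : Prop := ∀ ξ : E3, 1 ≤ ‖ξ‖ → ∫ x, chr ξ x ∂m = 0

theorem BandLimited.integral_eq_zero {m : Measure E3} [IsFiniteMeasure m] (hm : BandLimited m)
    {S : Set E3} (hS : ∀ ξ ∈ S, 1 ≤ ‖ξ‖) {f : E3 → ℂ} (hf : HasSpectrum S f) :
    ∫ x, f x ∂m = 0 := by
  induction hf using Submodule.span_induction with
  | mem f h =>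
    obtain ⟨ξ, hξ, rfl⟩ := h
    exact hm ξ (hS ξ hξ)
  | zero => simp
  | add f g hf hg hf' hg' =>
    simp only [Pi.add_apply]
    rw [integral_add (HasSpectrum.isBC hf).integrable (HasSpectrum.isBC hg).integrable, hf', hg',
      add_zero]
  | smul c f _ hf => simp only [Pi.smul_apply, integral_smul, hf, smul_zero]

end Spectrum

section Cone

open scoped Pointwise

/-- The `q`-th cell of length `σ` to the right of `θ₀`. -/
def cell (θ₀ σ : ℝ) (q : ℕ) : Set ℝ := Ico (θ₀ + q * σ) (θ₀ + (q + 1) * σ)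

theorem cell_subset {θ₀ σ : ℝ} (hσ : 0 < σ) {p q M : ℕ} (hM : 0 < M) (h : p / M = q) :
    cell θ₀ σ p ⊆ cell θ₀ (σ * M) q := by
  have h1 : q * M ≤ p := by rw [← h]; exact Nat.div_mul_le_self p M
  have h2 : p + 1 ≤ (q + 1) * M := by
    rw [← h, mul_comm]; exact Nat.lt_mul_div_succ p hM
  have h1' : (q : ℝ) * M ≤ p := by exact_mod_cast h1
  have h2' : (p : ℝ) + 1 ≤ (q + 1) * M := by exact_mod_cast h2
  refine Ico_subset_Ico ?_ ?_
  · nlinarith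
  · nlinarith

theorem le_sub_of_mem_cell {θ₀ σ x y : ℝ} (hσ : 0 < σ) {u v n : ℕ} (hx : x ∈ cell θ₀ σ u)
    (hy : y ∈ cell θ₀ σ v) (h : u + n ≤ v) : ((n : ℝ) - 1) * σ ≤ y - x := by
  have h' : (u : ℝ) + n ≤ v := by exact_mod_cast h
  have := hx.2
  have := hy.1
  nlinarith

theorem le_abs_sub_of_mem_cell {θ₀ σ x y : ℝ} (hσ : 0 < σ) {u v n : ℕ} (hx : x ∈ cell θ₀ σ u)
    (hy : y ∈ cell θ₀ σ v) (h : u + n ≤ v ∨ v + n ≤ u) : ((n : ℝ) - 1) * σ ≤ |x - y| := by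
  rcases h with h | h
  · rw [abs_sub_comm]; exact (le_sub_of_mem_cell hσ hx hy h).trans (le_abs_self _)
  · exact (le_sub_of_mem_cell hσ hy hx h).trans (le_abs_self _)

theorem abs_sub_le_of_mem_cell {θ₀ σ x y : ℝ} {u : ℕ} (hx : x ∈ cell θ₀ σ u)
    (hy : y ∈ cell θ₀ σ u) : |x - y| ≤ σ := by
  rw [abs_le]
  constructor <;> nlinarith [hx.1, hx.2, hy.1, hy.2]

/-- The part of the cone over `γ` above `J` with heights between `r` and `(1 + κ) * r`. -/
def coneArc (γ : ℝ → E3) (J : Set ℝ) (r κ : ℝ) : Set E3 :=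
  {ξ | ∃ n ∈ Icc r ((1 + κ) * r), ∃ θ ∈ J, ξ = n • γ θ}

theorem coneArc_mono {γ : ℝ → E3} {J J' : Set ℝ} (h : J ⊆ J') (r κ : ℝ) :
    coneArc γ J r κ ⊆ coneArc γ J' r κ := by
  rintro _ ⟨n, hn, θ, hθ, rfl⟩
  exact ⟨n, hn, θ, h hθ, rfl⟩

variable {γ e f : ℝ → E3} {a b c C₀ h : ℝ}

set_option maxHeartbeats 1000000 in
theorem ConeFrame.one_le_norm_of_transversal (H : ConeFrame γ a b e f c C₀ h)
    {K C d L B : ℕ} (hK : 1 ≤ K) (hBd : B ≤ d) (hB : 1 ≤ B) (hBL : 2 * B ≤ L)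
    {θ₀ ρ r κ : ℝ} (hρ : 0 < ρ)
    (hlen : ρ * K ^ L ≤ h) (hr : 0 < r) (hrρ : 1 ≤ r * ρ ^ 2) (hκ0 : 0 ≤ κ) (hκ1 : κ ≤ 1)
    (hκ : κ * K ^ (2 * d) ≤ 1) (hC : 1 + 7 * C₀ ≤ c * (C - 1))
    {i j j' : ℕ} (hjj : j / K ^ (2 * B - 1) = j' / K ^ (2 * B - 1))
    (hji : j / K ^ (2 * B) = i / K ^ B)
    (hsep : j / K ^ (2 * B - 1) + 2 ≤ i / K ^ (B - 1) ∨ i / K ^ (B - 1) + 2 ≤ j / K ^ (2 * B - 1))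
    (hfar : j + C * K ≤ j' ∨ j' + C * K ≤ j) {J J' I : Set ℝ}
    (hJ : J = Icc a b ∩ cell θ₀ (ρ * K ^ (L - 2 * B)) j)
    (hJ' : J' = Icc a b ∩ cell θ₀ (ρ * K ^ (L - 2 * B)) j')
    (hI : I = Icc a b ∩ cell θ₀ (ρ * K ^ (L - B)) i)
    {ξ : E3} (hξ : ξ ∈ coneArc γ J r κ + -coneArc γ J' r κ
      + ((coneArc γ I r κ + -coneArc γ I r κ) + (coneArc γ I r κ + -coneArc γ I r κ))) :
    1 ≤ ‖ξ‖ := by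
  have hK0 : 0 < K := hK
  have hK1 : (1 : ℝ) ≤ K := by exact_mod_cast hK
  obtain ⟨_, ⟨_, ⟨n₁, hn₁, θ₁, hθ₁, rfl⟩, x₂, hx₂, rfl⟩, _, ⟨_, ⟨_, ⟨n₃, hn₃, θ', hθ', rfl⟩,
    x₄, hx₄, rfl⟩, _, ⟨_, ⟨n₅, hn₅, θ₅, hθ₅, rfl⟩, x₆, hx₆, rfl⟩, rfl⟩, rfl⟩ := hξ
  obtain ⟨n₂, hn₂, θ₂, hθ₂, h₂⟩ := hx₂
  obtain ⟨n₄, hn₄, θ₄, hθ₄, h₄⟩ := hx₄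
  obtain ⟨n₆, hn₆, θ₆, hθ₆, h₆⟩ := hx₆
  rw [neg_eq_iff_eq_neg] at h₂ h₄ h₆
  subst h₂ h₄ h₆
  rw [hJ] at hθ₁
  rw [hJ'] at hθ₂
  rw [hI] at hθ' hθ₄ hθ₅ hθ₆
  obtain ⟨ab₁, hθ₁⟩ := hθ₁
  obtain ⟨ab₂, hθ₂⟩ := hθ₂
  obtain ⟨ab', hθ'⟩ := hθ'
  obtain ⟨ab₄, hθ₄⟩ := hθ₄
  obtain ⟨ab₅, hθ₅⟩ := hθ₅
  obtain ⟨ab₆, hθ₆⟩ := hθ₆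
  have pos : ∀ l, 0 < ρ * (K : ℝ) ^ l := fun l => by positivity
  have up : ∀ {l k : ℕ} {x : ℝ} {q : ℕ}, x ∈ cell θ₀ (ρ * K ^ l) q →
      x ∈ cell θ₀ (ρ * K ^ (l + k)) (q / K ^ k) := fun {l k x q} hx => by
    have := cell_subset (pos l) (Nat.pow_pos hK0) (rfl : q / K ^ k = _) hx
    rw [Nat.cast_pow, mul_assoc, ← pow_add] at this
    exact this
  have upTo : ∀ {l : ℕ} (k l' : ℕ) {x : ℝ} {q : ℕ}, l' = l + k → x ∈ cell θ₀ (ρ * K ^ l) q →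
      x ∈ cell θ₀ (ρ * K ^ l') (q / K ^ k) := fun k l' x q hl hx => by
    rw [hl]; exact up hx
  have L₁ := upTo (2 * B) L (by omega) hθ₁
  have L₂ := upTo (2 * B) L (by omega) hθ₂
  have L' := upTo B L (by omega) hθ'
  have hj'i : j' / K ^ (2 * B) = i / K ^ B := by
    have h2 : 2 * B = (2 * B - 1) + 1 := by omega
    rw [← hji, h2, pow_succ, ← Nat.div_div_eq_div_mul, ← Nat.div_div_eq_div_mul, hjj]
  rw [hji] at L₁
  rw [hj'i] at L₂
  have D₁ : |θ₁ - θ'| ≤ ρ * K ^ L := abs_sub_le_of_mem_cell L₁ L'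
  have D₂ : |θ₂ - θ'| ≤ ρ * K ^ L := abs_sub_le_of_mem_cell L₂ L'
  have M₁ := upTo (2 * B - 1) (L - 1) (by omega) hθ₁
  have M₂ := upTo (2 * B - 1) (L - 1) (by omega) hθ₂
  have M' := upTo (B - 1) (L - 1) (by omega) hθ'
  rw [← hjj] at M₂
  have hs : ∀ θ ∈ uIcc θ₁ θ₂, ρ * (K : ℝ) ^ (L - 1) ≤ |θ - θ'| := fun θ hθ => by
    have hm : θ ∈ cell θ₀ (ρ * K ^ (L - 1)) (j / K ^ (2 * B - 1)) := by
      rcases mem_uIcc.1 hθ with g | g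
      · exact ⟨M₁.1.trans g.1, g.2.trans_lt M₂.2⟩
      · exact ⟨M₂.1.trans g.1, g.2.trans_lt M₁.2⟩
    have := le_abs_sub_of_mem_cell (pos _) hm M' hsep
    norm_num at this
    linarith
  have hle := H.le_inner_e θ' ab' θ₁ ab₁ θ₂ ab₂ (D₁.trans hlen) (D₂.trans hlen) _ hs
  have hdist : ((C : ℝ) - 1) * K * (ρ * K ^ (L - 2 * B)) ≤ |θ₁ - θ₂| := by
    have := le_abs_sub_of_mem_cell (pos _) hθ₁ hθ₂ hfar
    refine le_trans (mul_le_mul_of_nonneg_right ?_ (pos _).le) this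
    push_cast
    nlinarith
  set S : ℝ := ρ * K ^ (L - B) with hS
  have hS2 : (ρ * (K : ℝ) ^ (L - 1)) * (K * (ρ * K ^ (L - 2 * B))) = S ^ 2 := by
    have e1 : (K : ℝ) ^ (L - 1) * (K * K ^ (L - 2 * B)) = (K ^ (L - B)) ^ 2 := by
      rw [← pow_succ', ← pow_add, ← pow_mul]; congr 1; omega
    rw [hS, mul_pow, ← e1]; ring
  have hS3 : (ρ * (K : ℝ) ^ L) ^ 2 = S ^ 2 * K ^ (2 * B) := by
    have e1 : ((K : ℝ) ^ L) ^ 2 = (K ^ (L - B)) ^ 2 * K ^ (2 * B) := by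
      rw [← pow_mul, ← pow_mul, ← pow_add]; congr 1; omega
    rw [hS, mul_pow, e1]; ring
  have hSρ : ρ ≤ S := le_mul_of_one_le_right hρ.le (one_le_pow₀ hK1)
  have hc0 := H.c_pos
  have hC0 := H.C_pos
  set ψ : ℝ → ℝ := fun θ => ⟪e θ', γ θ⟫ with hψ
  have main₁ : c * (C - 1) * S ^ 2 ≤ |ψ θ₁ - ψ θ₂| := by
    refine le_trans ?_ hle
    calc c * (C - 1) * S ^ 2
        = c * (ρ * K ^ (L - 1)) * (((C : ℝ) - 1) * K * (ρ * K ^ (L - 2 * B))) := by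
          rw [← hS2]; ring
      _ ≤ _ := mul_le_mul_of_nonneg_left hdist (mul_nonneg hc0.le (pos _).le)
  have hψ₂ : κ * |ψ θ₂| ≤ C₀ * S ^ 2 := by
    have g1 := H.inner_e_le θ' ab' θ₂ ab₂ (D₂.trans hlen)
    have g2 : (θ₂ - θ') ^ 2 ≤ S ^ 2 * K ^ (2 * B) := by
      rw [← hS3, ← sq_abs]; exact pow_le_pow_left₀ (abs_nonneg _) D₂ 2
    have g3 : κ * K ^ (2 * B) ≤ 1 := by
      refine le_trans (mul_le_mul_of_nonneg_left ?_ hκ0) hκ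
      exact pow_le_pow_right₀ hK1 (by omega)
    calc κ * |ψ θ₂| ≤ κ * (C₀ * (S ^ 2 * K ^ (2 * B))) :=
          mul_le_mul_of_nonneg_left (g1.trans (mul_le_mul_of_nonneg_left g2 hC0.le)) hκ0
      _ = (κ * K ^ (2 * B)) * (C₀ * S ^ 2) := by ring
      _ ≤ 1 * (C₀ * S ^ 2) := mul_le_mul_of_nonneg_right g3 (by positivity)
      _ = _ := one_mul _
  have hSh : S ≤ h := le_trans (mul_le_mul_of_nonneg_left
    (pow_le_pow_right₀ hK1 (by omega)) hρ.le) hlen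
  have hψi : ∀ n ∈ Icc r ((1 + κ) * r), ∀ θ ∈ Icc a b, θ ∈ cell θ₀ S i →
      |n * ψ θ| ≤ 2 * r * (C₀ * S ^ 2) := fun n hn θ hab hθ => by
    have g1 := abs_sub_le_of_mem_cell hθ hθ'
    have g2 := H.inner_e_le θ' ab' θ hab (g1.trans hSh)
    have g3 : (θ - θ') ^ 2 ≤ S ^ 2 := by
      rw [← sq_abs]; exact pow_le_pow_left₀ (abs_nonneg _) g1 2
    have hn0 : 0 ≤ n := hr.le.trans hn.1
    rw [abs_mul, abs_of_nonneg hn0]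
    refine mul_le_mul ?_ (g2.trans (mul_le_mul_of_nonneg_left g3 hC0.le)) (abs_nonneg _)
      (by positivity)
    nlinarith [hn.2]
  have hψ' : ψ θ' = 0 := by
    have := H.inner_e_le θ' ab' θ' ab' (by simpa using H.h_pos.le)
    simpa [hψ] using this
  have b₄ := hψi n₄ hn₄ θ₄ ab₄ hθ₄
  have b₅ := hψi n₅ hn₅ θ₅ ab₅ hθ₅
  have b₆ := hψi n₆ hn₆ θ₆ ab₆ hθ₆
  have b₁ : r * (c * (C - 1) * S ^ 2) ≤ |n₁ * (ψ θ₁ - ψ θ₂)| := by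
    rw [abs_mul, abs_of_nonneg (hr.le.trans hn₁.1)]
    refine mul_le_mul hn₁.1 main₁ ?_ (hr.le.trans hn₁.1)
    have : 0 ≤ c * (C - 1) := by nlinarith
    positivity
  have b₂ : |(n₁ - n₂) * ψ θ₂| ≤ r * (C₀ * S ^ 2) := by
    rw [abs_mul]
    have : |n₁ - n₂| ≤ κ * r := by
      rw [abs_le]; constructor <;> nlinarith [hn₁.1, hn₁.2, hn₂.1, hn₂.2]
    calc _ ≤ (κ * r) * |ψ θ₂| := mul_le_mul_of_nonneg_right this (abs_nonneg _)
      _ = r * (κ * |ψ θ₂|) := by ring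
      _ ≤ _ := mul_le_mul_of_nonneg_left hψ₂ hr.le
  set V : E3 := n₁ • γ θ₁ + -(n₂ • γ θ₂)
    + (n₃ • γ θ' + -(n₄ • γ θ₄) + (n₅ • γ θ₅ + -(n₆ • γ θ₆))) with hV
  have hVψ : ⟪e θ', V⟫ = n₁ * (ψ θ₁ - ψ θ₂) + ((n₁ - n₂) * ψ θ₂
      + (- (n₄ * ψ θ₄) + (n₅ * ψ θ₅ + -(n₆ * ψ θ₆)))) := by
    simp only [hV, inner_add_right, inner_neg_right, inner_smul_right]
    change n₁ * ψ θ₁ + -(n₂ * ψ θ₂) + (n₃ * ψ θ' + -(n₄ * ψ θ₄) + (n₅ * ψ θ₅ + -(n₆ * ψ θ₆))) = _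
    rw [hψ']; ring
  have hup : |⟪e θ', V⟫| ≤ ‖V‖ := (abs_real_inner_le_norm _ _).trans
    (mul_le_of_le_one_left (norm_nonneg _) (H.norm_e θ' ab'))
  refine le_trans ?_ hup
  have key : r * (c * (C - 1) * S ^ 2) - 7 * (r * (C₀ * S ^ 2)) ≤ |⟪e θ', V⟫| := by
    rw [hVψ]
    rw [abs_le] at b₂ b₄ b₅ b₆
    rcases le_abs.1 b₁ with b₁ | b₁
    · exact le_abs.2 (Or.inl (by linarith))
    · exact le_abs.2 (Or.inr (by linarith))
  refine le_trans ?_ key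
  have hrS : 1 ≤ r * S ^ 2 :=
    hrρ.trans (mul_le_mul_of_nonneg_left (pow_le_pow_left₀ hρ.le hSρ 2) hr.le)
  calc 1 ≤ r * S ^ 2 := hrS
    _ ≤ (r * S ^ 2) * (c * (C - 1) - 7 * C₀) :=
      le_mul_of_one_le_right (by linarith) (by linarith)
    _ = _ := by ring

theorem transversalOrthogonality_of_coneFrame (H : ConeFrame γ a b e f c C₀ h)
    {m : Measure E3} [IsFiniteMeasure m] (hm : BandLimited m)
    {K P T C d : ℕ} (hK : 1 ≤ K) {θ₀ ρ r κ : ℝ} (hρ : 0 < ρ) (hlen : ρ * K ^ T ≤ h)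
    (hr : 0 < r) (hrρ : T = 0 ∨ 1 ≤ r * ρ ^ 2) (hκ0 : 0 ≤ κ) (hκ1 : κ ≤ 1)
    (hκ : κ * K ^ (2 * d) ≤ 1) (hC : 1 + 7 * C₀ ≤ c * (C - 1)) {G : ℕ → E3 → ℂ}
    (hG : ∀ p, HasSpectrum (coneArc γ (Icc a b ∩ cell θ₀ ρ p) r κ) (G p)) :
    TransversalOrthogonality m K P T C d G := by
  have hK1 : (1 : ℝ) ≤ K := by exact_mod_cast hK
  intro L hL B hB hBd hBL i j j' hjj hji hsep hfar
  have hspec : ∀ l q, HasSpectrum (coneArc γ (Icc a b ∩ cell θ₀ (ρ * K ^ l) q) r κ)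
      (fun x => blockSum K P (fun p => G p x) l q) := fun l q => by
    refine HasSpectrum.sum _ fun p hp => (hG p).mono (coneArc_mono ?_ r κ)
    have := cell_subset (θ₀ := θ₀) hρ (Nat.pow_pos (n := l) hK) (Finset.mem_filter.1 hp).2
    rw [Nat.cast_pow] at this
    exact inter_subset_inter_right _ this
  have h4 : ∀ w : ℂ, ((‖w‖ ^ 4 : ℝ) : ℂ)
      = (w * starRingEnd ℂ w) * (w * starRingEnd ℂ w) := fun w => by
    rw [Complex.mul_conj, Complex.normSq_eq_norm_sq]; push_cast; ring
  simp only [h4]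
  have hi := (hspec (L - B) i).mul (hspec (L - B) i).conj
  refine hm.integral_eq_zero (fun ξ hξ => ?_)
    (((hspec (L - 2 * B) j).mul (hspec (L - 2 * B) j').conj).mul (hi.mul hi))
  refine H.one_le_norm_of_transversal hK hBd hB hBL hρ (le_trans ?_ hlen) hr
    (hrρ.resolve_left (by omega)) hκ0 hκ1 hκ hC hjj hji hsep hfar rfl rfl rfl hξ
  exact mul_le_mul_of_nonneg_left (pow_le_pow_right₀ hK1 hL) hρ.le

end Cone

section ConeEstimate

open scoped Pointwise

variable {γ e f : ℝ → E3} {a b c C₀ h : ℝ}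

theorem mem_cell_floor {θ₀ σ x : ℝ} (hσ : 0 < σ) (hx : θ₀ ≤ x) :
    x ∈ cell θ₀ σ ⌊(x - θ₀) / σ⌋₊ := by
  have h1 := Nat.floor_le (div_nonneg (sub_nonneg.2 hx) hσ.le)
  have h2 := Nat.lt_floor_add_one ((x - θ₀) / σ)
  rw [le_div_iff₀ hσ] at h1
  rw [div_lt_iff₀ hσ] at h2
  constructor <;> linarith

theorem HasSpectrum.weighted_sum {ι : Type*} {s : Finset ι} {θ w : ι → ℝ} {F : ι → E3 → ℂ}
    {r κ : ℝ} {J : Set ℝ} (hJ : ∀ k ∈ s, θ k ∈ J)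
    (hF : ∀ k ∈ s, HasSpectrum (coneArc γ {θ k} r κ) (F k)) :
    HasSpectrum (coneArc γ J r κ) (fun x => ∑ k ∈ s, (w k : ℂ) * F k x) :=
  HasSpectrum.sum s fun k hk =>
    ((hF k hk).mono (coneArc_mono (by simpa using hJ k hk) r κ)).const_mul _

/-- Square function bound: arcs of length `1 / r` on the cone at height `r` are almost
orthogonal. -/
theorem ConeFrame.integral_sq_le (H : ConeFrame γ a b e f c C₀ h) {m : Measure E3}
    [IsFiniteMeasure m] (hm : BandLimited m) {ι : Type*} {s : Finset ι} {θ w : ι → ℝ}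
    {F : ι → E3 → ℂ} {r κ θ₀ W A : ℝ} {N : ℕ} (hN : 1 ≤ c * (N - 1)) (hr : 0 < r)
    (hθ : ∀ k ∈ s, θ k ∈ Icc a b) (hθ₀ : ∀ k ∈ s, θ₀ ≤ θ k)
    (hdiam : ∀ k ∈ s, ∀ l ∈ s, |θ k - θ l| ≤ h) (hw : ∀ k ∈ s, 0 ≤ w k)
    (hF : ∀ k ∈ s, HasSpectrum (coneArc γ {θ k} r κ) (F k))
    (hW : ∀ q, ∑ k ∈ s with θ k ∈ Ico (θ₀ + q * (1 / r)) (θ₀ + (q + 1) * (1 / r)),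
      w k ≤ W)
    (hA : ∀ k ∈ s, ∫ x, ‖F k x‖ ^ 2 ∂m ≤ A) :
    ∫ x, ‖∑ k ∈ s, (w k : ℂ) * F k x‖ ^ 2 ∂m ≤ 2 * N * (W * A * ∑ k ∈ s, w k) := by
  classical
  have hr1 : 0 < 1 / r := by positivity
  set g : ι → ℕ := fun k => ⌊(θ k - θ₀) / (1 / r)⌋₊ with hg
  have hgc : ∀ k ∈ s, θ k ∈ cell θ₀ (1 / r) (g k) := fun k hk => mem_cell_floor hr1 (hθ₀ k hk)
  have hbc : ∀ k ∈ s, IsBC (F k) := fun k hk => (hF k hk).isBC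
  set v : ℕ → E3 → ℂ := fun q x => ∑ k ∈ s with g k = q, (w k : ℂ) * F k x with hv
  have hsum : ∀ x, ∑ q ∈ s.image g, v q x = ∑ k ∈ s, (w k : ℂ) * F k x := fun x =>
    Finset.sum_fiberwise_of_maps_to (fun k hk => Finset.mem_image_of_mem g hk) _
  have hspec : ∀ q, HasSpectrum (coneArc γ {t | ∃ k ∈ s, t = θ k ∧ g k = q} r κ) (v q) := fun q =>
    HasSpectrum.weighted_sum (fun k hk => ⟨k, (Finset.mem_filter.1 hk).1, rfl,
      (Finset.mem_filter.1 hk).2⟩) fun k hk => hF k (Finset.mem_filter.1 hk).1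
  have horth := integral_sq_sum_le_of_almost_orthogonal m (s.image g) v (fun _ => 1)
    (fun q => (hspec q).isBC) (IsBC.const 1) (fun _ => zero_le_one) N (by
      intro i _ j _ hij
      simp only [Complex.ofReal_one, mul_one]
      refine hm.integral_eq_zero (fun ξ hξ => ?_) ((hspec i).mul (hspec j).conj)
      obtain ⟨_, ⟨n, hn, _, ⟨k, hk, rfl, hki⟩, rfl⟩, x₂, hx₂, rfl⟩ := hξ
      obtain ⟨n', hn', _, ⟨l, hl, rfl, hlj⟩, h₂⟩ := hx₂
      rw [neg_eq_iff_eq_neg] at h₂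
      subst h₂
      have d1 := le_abs_sub_of_mem_cell hr1 (hki ▸ hgc k hk) (hlj ▸ hgc l hl) hij
      have d2 := H.le_inner_f (θ l) (hθ l hl) (θ k) (hθ k hk) (hdiam k hk l hl)
      have hup : |⟪f (θ l), n • γ (θ k) + -(n' • γ (θ l))⟫| ≤ ‖n • γ (θ k) + -(n' • γ (θ l))‖ :=
        (abs_real_inner_le_norm _ _).trans
          (mul_le_of_le_one_left (norm_nonneg _) (H.norm_f _ (hθ l hl)))
      refine le_trans ?_ hup
      rw [inner_add_right, inner_neg_right, inner_smul_right, inner_smul_right,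
        H.inner_f_self _ (hθ l hl), mul_zero, neg_zero, add_zero, abs_mul,
        abs_of_nonneg (hr.le.trans hn.1)]
      have hc := H.c_pos
      calc 1 ≤ c * (N - 1) := hN
        _ = r * (c * ((N - 1) * (1 / r))) := by field_simp
        _ ≤ n * (c * |θ k - θ l|) := by
          refine mul_le_mul hn.1 (mul_le_mul_of_nonneg_left d1 hc.le) ?_ (hr.le.trans hn.1)
          have : 0 ≤ c * ((N : ℝ) - 1) := by linarith
          rw [← mul_assoc]; positivity
        _ ≤ _ := mul_le_mul_of_nonneg_left d2 (hr.le.trans hn.1))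
  simp only [mul_one, hsum] at horth
  refine horth.trans (mul_le_mul_of_nonneg_left ?_ (by positivity))
  have hq : ∀ q ∈ s.image g, ∫ x, ‖v q x‖ ^ 2 ∂m ≤ W * A * ∑ k ∈ s with g k = q, w k := by
    intro q _
    set t : Finset ι := {k ∈ s | g k = q} with ht
    have hts : ∀ k ∈ t, k ∈ s := fun k hk => (Finset.mem_filter.1 hk).1
    have hwt : ∑ k ∈ t, w k ≤ W := by
      refine le_trans (Finset.sum_le_sum_of_subset_of_nonneg ?_ fun k hk _ =>
        hw k (Finset.mem_filter.1 hk).1) (hW q)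
      intro k hk
      rw [Finset.mem_filter] at hk ⊢
      exact ⟨hk.1, hk.2 ▸ hgc k hk.1⟩
    have pt : ∀ x, ‖v q x‖ ^ 2 ≤ W * ∑ k ∈ t, w k * ‖F k x‖ ^ 2 := fun x => by
      have n1 : ‖v q x‖ ≤ ∑ k ∈ t, w k * ‖F k x‖ :=
        (norm_sum_le _ _).trans (Finset.sum_le_sum fun k hk => by
          rw [norm_mul, Complex.norm_real, Real.norm_of_nonneg (hw k (hts k hk))])
      have n2 := Finset.sum_sq_le_sum_mul_sum_of_sq_le_mul t (r := fun k => w k * ‖F k x‖)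
        (f := w) (g := fun k => w k * ‖F k x‖ ^ 2) (fun k hk => hw k (hts k hk))
        (fun k hk => mul_nonneg (hw k (hts k hk)) (sq_nonneg _)) (fun k _ => le_of_eq (by ring))
      refine (pow_le_pow_left₀ (norm_nonneg _) n1 2).trans (n2.trans ?_)
      exact mul_le_mul_of_nonneg_right hwt (Finset.sum_nonneg fun k hk =>
        mul_nonneg (hw k (hts k hk)) (sq_nonneg _))
    have bc : ∀ k ∈ t, IsBC (fun x => w k * ‖F k x‖ ^ 2) := fun k hk =>
      (IsBC.const (w k)).mul ((hbc k (hts k hk)).norm.pow 2)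
    refine (integral_mono (((hspec q).isBC).norm.pow 2).integrable
      (((IsBC.sum t bc).integrable).const_mul W) pt).trans ?_
    rw [integral_const_mul, integral_finsetSum _ fun k hk => (bc k hk).integrable, mul_assoc,
      Finset.mul_sum _ _ A]
    refine mul_le_mul_of_nonneg_left (Finset.sum_le_sum fun k hk => ?_)
      ((Finset.sum_nonneg fun k hk => hw k (hts k hk)).trans hwt)
    rw [integral_const_mul, mul_comm]
    exact mul_le_mul_of_nonneg_right (hA k (hts k hk)) (hw k (hts k hk))
  refine (Finset.sum_le_sum hq).trans (le_of_eq ?_)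
  rw [← Finset.mul_sum, Finset.sum_fiberwise_of_maps_to fun k hk => Finset.mem_image_of_mem g hk]

/-- `L⁶` bound for a packet supported in a single cell, from an `L²` and an `L^∞` bound. -/
theorem integral_pow_six_le {m : Measure E3} [IsFiniteMeasure m] {G : E3 → ℂ} (hG : IsBC G)
    {M I : ℝ} (hM : ∀ x, ‖G x‖ ≤ M) (hI : ∫ x, ‖G x‖ ^ 2 ∂m ≤ I) :
    ∫ x, ‖G x‖ ^ 6 ∂m ≤ M ^ 4 * I := by
  have pt : ∀ x, ‖G x‖ ^ 6 ≤ M ^ 4 * ‖G x‖ ^ 2 := fun x => by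
    calc ‖G x‖ ^ 6 = ‖G x‖ ^ 4 * ‖G x‖ ^ 2 := by ring
      _ ≤ _ := mul_le_mul_of_nonneg_right (pow_le_pow_left₀ (norm_nonneg _) (hM x) 4)
        (sq_nonneg _)
  refine (integral_mono (hG.norm.pow 6).integrable ((hG.norm.pow 2).integrable.const_mul _)
    pt).trans ?_
  rw [integral_const_mul]
  exact mul_le_mul_of_nonneg_left hI (by positivity)

theorem exists_scale {K : ℕ} (hK : 2 ≤ K) {h r : ℝ} (hh : 0 < h) (hr : 1 ≤ r) :
    ∃ T : ℕ, h / K ^ T ≤ K * (1 / Real.sqrt r) ∧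
      (T = 0 ∨ (1 ≤ r * (h / K ^ T) ^ 2 ∧ (K : ℝ) ^ T ≤ h * r)) := by
  classical
  have hK2 : (2 : ℝ) ≤ K := by exact_mod_cast hK
  have hsr : 0 < Real.sqrt r := Real.sqrt_pos.2 (by linarith)
  have hsq : Real.sqrt r ^ 2 = r := Real.sq_sqrt (by linarith)
  have hex : ∃ T : ℕ, h / (K : ℝ) ^ T ≤ K * (1 / Real.sqrt r) := by
    obtain ⟨T, hT⟩ := pow_unbounded_of_one_lt (h * Real.sqrt r) (show (1 : ℝ) < K by linarith)
    refine ⟨T, ?_⟩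
    rw [div_le_iff₀ (by positivity), mul_one_div, div_mul_eq_mul_div, le_div_iff₀ hsr]
    exact hT.le.trans (le_mul_of_one_le_left (by positivity) (by linarith))
  refine ⟨Nat.find hex, Nat.find_spec hex, ?_⟩
  rcases Nat.eq_zero_or_pos (Nat.find hex) with h0 | hpos
  · exact Or.inl h0
  right
  have hmin := Nat.find_min hex (m := Nat.find hex - 1) (by omega)
  obtain ⟨t, ht⟩ : ∃ t, Nat.find hex = t + 1 := ⟨Nat.find hex - 1, by omega⟩
  rw [ht] at hmin ⊢
  rw [Nat.add_sub_cancel, not_le, lt_div_iff₀ (by positivity), mul_one_div, div_mul_eq_mul_div,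
    div_lt_iff₀ hsr, ← pow_succ'] at hmin
  have h1 : 1 ≤ Real.sqrt r := by rw [Real.one_le_sqrt]; exact hr
  constructor
  · have : 1 ≤ Real.sqrt r * (h / K ^ (t + 1)) := by
      rw [mul_div_assoc', le_div_iff₀ (by positivity)]; linarith
    calc (1 : ℝ) ≤ (Real.sqrt r * (h / K ^ (t + 1))) ^ 2 := one_le_pow₀ this
      _ = _ := by rw [mul_pow, hsq]
  · nlinarith [mul_nonneg hh.le (sub_nonneg.2 h1)]

/-- The `L⁶` estimate for functions with spectrum on a thin slab of the cone. -/
theorem ConeFrame.exists_integral_pow_six_le (H : ConeFrame γ a b e f c C₀ h) {η β : ℝ}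
    (hη : 0 < η) (hβ1 : β ≤ 1) :
    ∃ κ > 0, κ ≤ 1 ∧ ∃ C > 0, ∀ m : Measure E3, IsFiniteMeasure m → BandLimited m →
      ∀ (ι : Type) (s : Finset ι) (θ w : ι → ℝ) (F : ι → E3 → ℂ) (r θ₀ Λ A B : ℝ), 1 ≤ r →
      (∀ k ∈ s, θ k ∈ Icc a b) → (∀ k ∈ s, θ k ∈ Ico θ₀ (θ₀ + h)) → (∀ k ∈ s, 0 ≤ w k) →
      (∀ k ∈ s, HasSpectrum (coneArc γ {θ k} r κ) (F k)) →
      (∀ x ρ, 1 / r ≤ ρ → ∑ k ∈ s with θ k ∈ Ico x (x + ρ), w k ≤ Λ * ρ ^ β) →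
      0 ≤ A → 0 ≤ B → (∀ k ∈ s, ∫ x, ‖F k x‖ ^ 2 ∂m ≤ A) → (∀ k ∈ s, ∀ x, ‖F k x‖ ≤ B) →
      ∫ x, ‖∑ k ∈ s, (w k : ℂ) * F k x‖ ^ 6 ∂m
        ≤ C * r ^ η * (Λ ^ 3 * r ^ (-(2 * β)) * A * B ^ 4 * (∑ k ∈ s, w k) ^ 3) := by
  classical
  have hh := H.h_pos
  obtain ⟨C₁, hC₁⟩ : ∃ C₁ : ℕ, (1 + 7 * C₀) / c + 1 ≤ C₁ := exists_nat_ge _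
  have hC₁' : 1 + 7 * C₀ ≤ c * (C₁ - 1) := by
    have : (1 + 7 * C₀) / c ≤ C₁ - 1 := by linarith
    rwa [div_le_iff₀ H.c_pos, mul_comm _ c] at this
  have hC₁1 : 1 ≤ C₁ := by
    by_contra! h0
    have : C₁ = 0 := by omega
    subst this
    have := H.c_pos
    have := H.C_pos
    push_cast at hC₁'
    linarith
  obtain ⟨K, hK2, hKη⟩ : ∃ K : ℕ, 2 ≤ K ∧ (2 * 4 ^ 6 : ℝ) ≤ (K : ℝ) ^ η := by
    have := ((tendsto_rpow_atTop hη).comp tendsto_natCast_atTop_atTop).eventually_ge_atTop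
      (2 * 4 ^ 6 : ℝ)
    obtain ⟨K, hK⟩ := (this.and (Filter.eventually_ge_atTop 2)).exists
    exact ⟨K, hK.2, hK.1⟩
  have hK1 : 1 ≤ K := by omega
  have hK1' : (1 : ℝ) < K := by exact_mod_cast (by omega : 1 < K)
  have hK0 : (0 : ℝ) < K := by linarith
  set z : ℝ := (K : ℝ) ^ (η / 2) with hz
  have hz1 : 1 < z := Real.one_lt_rpow hK1' (by positivity)
  have hzpow : ∀ T : ℕ, z ^ (2 * T) = ((K : ℝ) ^ T) ^ η := fun T => by
    rw [hz, ← Real.rpow_mul_natCast hK0.le, ← Real.rpow_natCast_mul hK0.le]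
    congr 1; push_cast; ring
  obtain ⟨n, hn⟩ := pow_unbounded_of_one_lt (2 * ((K : ℝ) ^ 8 * (2 * C₁ * K) ^ 2)) hz1
  have hsmall : 4 ^ 6 / z ^ 2 + (K : ℝ) ^ 8 * (2 * C₁ * K) ^ 2 / z ^ n ≤ 1 := by
    have h1 : 4 ^ 6 / z ^ 2 ≤ 1 / 2 := by
      have := hzpow 1
      rw [mul_one, pow_one] at this
      rw [this, div_le_iff₀ (by positivity)]; linarith
    have h2 : (K : ℝ) ^ 8 * (2 * C₁ * K) ^ 2 / z ^ n ≤ 1 / 2 := by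
      rw [div_le_iff₀ (by positivity)]; linarith
    linarith
  set κ : ℝ := 1 / (K : ℝ) ^ (2 * 2 ^ n) with hκ
  have hκ1 : κ ≤ 1 := by
    rw [hκ, div_le_one (by positivity)]; exact one_le_pow₀ hK1'.le
  refine ⟨κ, by positivity, hκ1, (K : ℝ) ^ (5 * 2 ^ n) * (max 1 h) ^ η * (2 * C₁ * K ^ 2),
    by positivity, ?_⟩
  intro m _ hm ι s θ w F r θ₀ Λ A B hr hθ hθI hw hF hΛ hA0 hB0 hA hB
  have hr0 : 0 < r := by linarith
  obtain ⟨T, hT1, hT2⟩ := exists_scale hK2 hh hr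
  set ρ : ℝ := h / (K : ℝ) ^ T with hρ
  have hρ0 : 0 < ρ := by positivity
  have hρT : ρ * (K : ℝ) ^ T = h := by rw [hρ]; field_simp
  have hΛ0 : 0 ≤ Λ := by
    have h1 := hΛ 0 1 (by rw [div_le_one hr0]; exact hr)
    rw [Real.one_rpow, mul_one] at h1
    exact (Finset.sum_nonneg fun k hk => hw k (Finset.mem_filter.1 hk).1).trans h1
  set g : ι → ℕ := fun k => ⌊(θ k - θ₀) / ρ⌋₊ with hg
  have hgc : ∀ k ∈ s, θ k ∈ cell θ₀ ρ (g k) := fun k hk => mem_cell_floor hρ0 (hθI k hk).1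
  have hgP : ∀ k ∈ s, g k ∈ Finset.range (K ^ T) := fun k hk => by
    rw [Finset.mem_range, hg, Nat.floor_lt (div_nonneg (sub_nonneg.2 (hθI k hk).1) hρ0.le),
      div_lt_iff₀ hρ0]
    push_cast
    rw [mul_comm, hρT]
    linarith [(hθI k hk).2]
  set wp : ℕ → ℝ := fun p => ∑ k ∈ s with g k = p, w k with hwp
  have hts : ∀ {p k}, k ∈ ({k ∈ s | g k = p} : Finset ι) → k ∈ s := fun hk =>
    (Finset.mem_filter.1 hk).1
  have hwp0 : ∀ p, 0 ≤ wp p := fun p => Finset.sum_nonneg fun k hk => hw k (hts hk)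
  set W : ℝ := Λ * (1 / r) ^ β with hWdef
  set W' : ℝ := Λ * (K * (1 / Real.sqrt r)) ^ β with hW'def
  have hW0 : 0 ≤ W := by positivity
  have hW'0 : 0 ≤ W' := by positivity
  have hwpW : ∀ p, wp p ≤ W' := fun p => by
    refine le_trans (Finset.sum_le_sum_of_subset_of_nonneg ?_ fun k hk _ =>
      hw k (Finset.mem_filter.1 hk).1) (hΛ (θ₀ + p * ρ) (K * (1 / Real.sqrt r)) ?_)
    · intro k hk
      have hks := hts hk
      have hkc := hgc k hks
      rw [(Finset.mem_filter.1 hk).2] at hkc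
      rw [Finset.mem_filter]
      exact ⟨hks, hkc.1, hkc.2.trans_le (by linarith)⟩
    · have h1 : 1 ≤ Real.sqrt r := by rw [Real.one_le_sqrt]; exact hr
      have h2 : 1 / r ≤ 1 / Real.sqrt r := one_div_le_one_div_of_le (by linarith) (by
        have := Real.sq_sqrt hr0.le
        nlinarith)
      refine h2.trans (le_mul_of_one_le_left (by positivity) hK1'.le)
  set G : ℕ → E3 → ℂ := fun p x => ∑ k ∈ s with g k = p, (w k : ℂ) * F k x with hGdef
  have hG : ∀ p, HasSpectrum (coneArc γ (Icc a b ∩ cell θ₀ ρ p) r κ) (G p) := fun p =>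
    HasSpectrum.weighted_sum (fun k hk => ⟨hθ k (hts hk), by
      have := hgc k (hts hk); rwa [(Finset.mem_filter.1 hk).2] at this⟩) fun k hk => hF k (hts hk)
  have hGB : ∀ p x, ‖G p x‖ ≤ B * wp p := fun p x => by
    refine (norm_sum_le _ _).trans ?_
    rw [hwp, Finset.mul_sum]
    refine Finset.sum_le_sum fun k hk => ?_
    rw [norm_mul, Complex.norm_real, Real.norm_of_nonneg (hw k (hts hk)), mul_comm]
    exact mul_le_mul_of_nonneg_right (hB k (hts hk) x) (hw k (hts hk))
  have hG2 : ∀ p, ∫ x, ‖G p x‖ ^ 2 ∂m ≤ 2 * C₁ * (W * A * wp p) := fun p => by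
    refine H.integral_sq_le hm (θ₀ := θ₀) (κ := κ) (by linarith [H.C_pos]) hr0
      (fun k hk => hθ k (hts hk)) (fun k hk => (hθI k (hts hk)).1) ?_ (fun k hk => hw k (hts hk))
      (fun k hk => hF k (hts hk)) ?_ (fun k hk => hA k (hts hk))
    · intro k hk l hl
      have h1 := hθI k (hts hk)
      have h2 := hθI l (hts hl)
      rw [abs_le]; constructor <;> linarith [h1.1, h1.2, h2.1, h2.2]
    · intro q
      refine le_trans (Finset.sum_le_sum_of_subset_of_nonneg ?_ fun k hk _ =>
        hw k (Finset.mem_filter.1 hk).1) (hΛ (θ₀ + q * (1 / r)) (1 / r) le_rfl)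
      intro k hk
      obtain ⟨h1, h2⟩ := Finset.mem_filter.1 hk
      rw [Finset.mem_filter]
      refine ⟨hts h1, h2.1, h2.2.trans_le (by linarith)⟩
  set D : ℝ := 2 * C₁ * (W * A) * B ^ 4 * W' ^ 2 with hD
  have hD0 : 0 ≤ D := by positivity
  set D3 : ℝ := D ^ ((1 : ℝ) / 3) with hD3
  have hD3' : D3 ^ 3 = D := by
    rw [hD3, ← Real.rpow_mul_natCast hD0]; norm_num
  have hGQ : ∀ p, ∫ x, ‖G p x‖ ^ 6 ∂m ≤ (D3 * wp p) ^ 3 := fun p => by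
    refine (integral_pow_six_le (hG p).isBC (hGB p) (hG2 p)).trans ?_
    rw [mul_pow D3, hD3']
    calc (B * wp p) ^ 4 * (2 * C₁ * (W * A * wp p))
        = (2 * C₁ * (W * A) * B ^ 4 * wp p ^ 3) * wp p ^ 2 := by ring
      _ ≤ (2 * C₁ * (W * A) * B ^ 4 * wp p ^ 3) * W' ^ 2 :=
        mul_le_mul_of_nonneg_left (pow_le_pow_left₀ (hwp0 p) (hwpW p) 2)
          (mul_nonneg (by positivity) (pow_nonneg (hwp0 p) 3))
      _ = _ := by rw [hD]; ring
  have horth := transversalOrthogonality_of_coneFrame H hm (P := K ^ T) (T := T) (C := C₁)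
    (d := 2 ^ n) hK1 hρ0 hρT.le hr0 (hT2.imp_right And.left) (by positivity : 0 ≤ κ) hκ1
    (by rw [hκ]; field_simp; rfl) hC₁' hG
  have hdec := decoupling_of_transversalOrthogonality m (fun p => (hG p).isBC) hK1 hC₁1 horth
    (fun p => mul_nonneg (by positivity) (hwp0 p)) hGQ hz1.le hsmall le_rfl 0
  have hall : ({p ∈ Finset.range (K ^ T) | p / K ^ T = 0} : Finset ℕ) = Finset.range (K ^ T) :=
    Finset.filter_true_of_mem fun p hp => Nat.div_eq_of_lt (Finset.mem_range.1 hp)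
  have e1 : ∀ x, blockSum K (K ^ T) (fun p => G p x) T 0 = ∑ k ∈ s, (w k : ℂ) * F k x := fun x => by
    rw [blockSum, hall]
    exact Finset.sum_fiberwise_of_maps_to hgP _
  have e2 : blockSum K (K ^ T) (fun p => D3 * wp p) T 0 = D3 * ∑ k ∈ s, w k := by
    rw [blockSum, hall, ← Finset.mul_sum]
    congr 1
    exact Finset.sum_fiberwise_of_maps_to hgP _
  simp only [e1, e2] at hdec
  refine hdec.trans ?_
  rw [mul_pow D3, hD3', hzpow]
  have hzT : ((K : ℝ) ^ T) ^ η ≤ (max 1 h) ^ η * r ^ η := by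
    rw [← Real.mul_rpow (by positivity) hr0.le]
    refine Real.rpow_le_rpow (by positivity) ?_ hη.le
    rcases hT2 with hT0 | ⟨-, hT2⟩
    · rw [hT0, pow_zero]
      nlinarith [le_max_left 1 h]
    · exact hT2.trans (mul_le_mul_of_nonneg_right (le_max_right _ _) hr0.le)
  have hWW : W * W' ^ 2 ≤ K ^ 2 * (Λ ^ 3 * r ^ (-(2 * β))) := by
    have a1 : (1 / r) ^ β = r ^ (-β) := by rw [one_div, Real.inv_rpow hr0.le, Real.rpow_neg hr0.le]
    have a2 : ((K * (1 / Real.sqrt r)) ^ β) ^ 2 = (K : ℝ) ^ (2 * β) * r ^ (-β) := by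
      rw [Real.mul_rpow hK0.le (by positivity), mul_pow, ← a1, ← Real.rpow_mul_natCast hK0.le,
        ← Real.rpow_mul_natCast (by positivity)]
      congr 1
      · congr 1; push_cast; ring
      · rw [mul_comm β, Real.rpow_mul (by positivity)]
        congr 1
        push_cast
        rw [Real.rpow_two, div_pow, one_pow, Real.sq_sqrt hr0.le]
    have a3 : (K : ℝ) ^ (2 * β) ≤ K ^ 2 := by
      rw [← Real.rpow_two]; exact Real.rpow_le_rpow_of_exponent_le hK1'.le (by linarith)
    have a4 : r ^ (-(2 * β)) = r ^ (-β) * r ^ (-β) := by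
      rw [← Real.rpow_add hr0]; congr 1; ring
    calc W * W' ^ 2 = (K : ℝ) ^ (2 * β) * (Λ ^ 3 * r ^ (-(2 * β))) := by
          rw [hWdef, hW'def, mul_pow, a2, a1, a4]; ring
      _ ≤ _ := mul_le_mul_of_nonneg_right a3 (by positivity)
  have hw0 : 0 ≤ ∑ k ∈ s, w k := Finset.sum_nonneg hw
  calc (K : ℝ) ^ (5 * 2 ^ n) * ((K : ℝ) ^ T) ^ η * (D * (∑ k ∈ s, w k) ^ 3)
      = ((K : ℝ) ^ (5 * 2 ^ n) * (2 * C₁ * A * B ^ 4 * (∑ k ∈ s, w k) ^ 3)) *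
        (((K : ℝ) ^ T) ^ η * (W * W' ^ 2)) := by rw [hD]; ring
    _ ≤ ((K : ℝ) ^ (5 * 2 ^ n) * (2 * C₁ * A * B ^ 4 * (∑ k ∈ s, w k) ^ 3)) *
        (((max 1 h) ^ η * r ^ η) * (K ^ 2 * (Λ ^ 3 * r ^ (-(2 * β))))) :=
        mul_le_mul_of_nonneg_left (mul_le_mul hzT hWW (by positivity) (by positivity))
          (by positivity)
    _ = _ := by ring

end ConeEstimate

section Smoothing

open scoped SchwartzMap FourierTransform

/-- A smooth function with compact support equal to `1` on the ball of radius `ρ` and vanishing off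
the ball of radius `2 * ρ`. -/
theorem exists_schwartz_bump {ρ : ℝ} (hρ : 0 < ρ) :
    ∃ b : 𝓢(E3, ℂ), (∀ x, ‖x‖ ≤ ρ → b x = 1) ∧ ∀ x, 2 * ρ ≤ ‖x‖ → b x = 0 := by
  let g : ContDiffBump (0 : E3) := ⟨ρ, 2 * ρ, hρ, by linarith⟩
  have h₁ : HasCompactSupport (fun x => (g x : ℂ)) :=
    g.hasCompactSupport.comp_left (g := ((↑) : ℝ → ℂ)) (by simp)
  have h₂ : ContDiff ℝ (⊤ : ℕ∞) (fun x => (g x : ℂ)) := Complex.ofRealCLM.contDiff.comp g.contDiff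
  refine ⟨h₁.toSchwartzMap h₂, fun x hx => ?_, fun x hx => ?_⟩
  · have : g x = 1 := g.one_of_mem_closedBall (by simpa using hx)
    simp [this]
  · have : g x = 0 := g.zero_of_le_dist (by simpa using hx)
    simp [this]

theorem fourier_mul_chr (b : 𝓢(E3, ℂ)) (ξ : E3) : ∃ b' : 𝓢(E3, ℂ),
    (∀ x, b' x = b (x + (2 * Real.pi)⁻¹ • ξ)) ∧ ∀ x, 𝓕 b' x = 𝓕 b x * chr ξ x := by
  refine ⟨b.compSubConstCLM ℂ (-((2 * Real.pi)⁻¹ • ξ)), fun x => by simp, fun x => ?_⟩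
  have h := congrFun (VectorFourier.fourierIntegral_comp_add_right Real.fourierChar volume
    (innerₗ E3) b ((2 * Real.pi)⁻¹ • ξ)) x
  have h1 : (b ∘ fun v => v + (2 * Real.pi)⁻¹ • ξ) =
      b.compSubConstCLM ℂ (-((2 * Real.pi)⁻¹ • ξ)) := by
    ext v
    simp
  rw [h1] at h
  rw [SchwartzMap.fourier_coe, SchwartzMap.fourier_coe]
  refine h.trans ?_
  rw [Circle.smul_def, Real.fourierChar_apply, smul_eq_mul, mul_comm]
  congr 2
  simp only [innerₗ_apply_apply, real_inner_smul_left, real_inner_comm x ξ]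
  congr 2
  field_simp

theorem exists_bandLimited_ne_zero : ∃ ν : Measure E3, IsFiniteMeasure ν ∧ ν ≠ 0 ∧
    BandLimited ν := by
  obtain ⟨b, hb1, hb0⟩ := exists_schwartz_bump (ρ := (8 * Real.pi)⁻¹) (by positivity)
  have hmeas : Measurable fun x => ENNReal.ofReal (‖𝓕 b x‖ ^ 2) :=
    ((𝓕 b).continuous.norm.pow 2).measurable.ennreal_ofReal
  have hint : Integrable (fun x => ‖𝓕 b x‖ ^ 2) := (MeasureTheory.memLp_two_iff_integrable_sq_norm
    (𝓕 b).continuous.aestronglyMeasurable).1 ((𝓕 b).memLp 2)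
  have hfin : ∫⁻ x, ENNReal.ofReal (‖𝓕 b x‖ ^ 2) ≠ ∞ := hint.lintegral_lt_top.ne
  refine ⟨volume.withDensity fun x => ENNReal.ofReal (‖𝓕 b x‖ ^ 2),
    isFiniteMeasure_withDensity hfin, fun h0 => ?_, fun ξ hξ => ?_⟩
  · have h1 : ∫ x, ‖𝓕 b x‖ ^ 2 = 0 := by
      rw [integral_eq_lintegral_of_nonneg_ae (.of_forall fun x => by positivity)
        hint.aestronglyMeasurable, ← setLIntegral_univ,
        ← withDensity_apply _ MeasurableSet.univ, h0]
      simp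
    rw [SchwartzMap.integral_norm_sq_fourier, integral_eq_zero_iff_of_nonneg
      (μ := volume) (f := fun x => ‖b x‖ ^ 2) (fun x => by positivity)
      ((memLp_two_iff_integrable_sq_norm
        b.continuous.aestronglyMeasurable).1 (b.memLp 2))] at h1
    have h2 := Continuous.ae_eq_iff_eq volume (by fun_prop) (by fun_prop) |>.1 h1
    have := congrFun h2 0
    simp [hb1 0 (by simp; positivity)] at this
  · rw [integral_withDensity_eq_integral_toReal_smul hmeas (by simp)]
    obtain ⟨b', hb', hF⟩ := fourier_mul_chr b ξ
    have : ∀ x, (ENNReal.ofReal (‖𝓕 b x‖ ^ 2)).toReal • chr ξ x = inner ℂ (𝓕 b x) (𝓕 b' x) := by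
      intro x
      rw [ENNReal.toReal_ofReal (by positivity), hF, RCLike.inner_apply, mul_right_comm,
        RCLike.mul_conj]
      simp
    simp_rw [this]
    rw [SchwartzMap.integral_inner_fourier_fourier]
    refine (integral_congr_ae (.of_forall fun x => ?_)).trans (integral_zero' _ _)
    by_cases hx : 2 * (8 * Real.pi)⁻¹ ≤ ‖x‖
    · simp [hb0 x hx]
    · have : b' x = 0 := by
        rw [hb']
        apply hb0
        have h1 : ‖(2 * Real.pi)⁻¹ • ξ‖ ≤ ‖x + (2 * Real.pi)⁻¹ • ξ‖ + ‖x‖ := by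
          simpa using norm_sub_le (x + (2 * Real.pi)⁻¹ • ξ) x
        rw [norm_smul, Real.norm_of_nonneg (by positivity)] at h1
        have h2 : (2 * Real.pi)⁻¹ ≤ (2 * Real.pi)⁻¹ * ‖ξ‖ :=
          le_mul_of_one_le_right (by positivity) hξ
        have h3 : (2 * Real.pi)⁻¹ = 4 * (8 * Real.pi)⁻¹ := by field_simp; norm_num
        rw [h3] at h1 h2 ⊢
        linarith
      simp [this]

theorem exists_reproducing : ∃ Φ : 𝓢(E3, ℂ), ∀ ξ : E3, ‖ξ‖ ≤ 2 →
    ∫ y, chr (-ξ) y * Φ y = 1 := by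
  obtain ⟨b, hb1, -⟩ := exists_schwartz_bump (ρ := 1) one_pos
  refine ⟨𝓕⁻ b, fun ξ hξ => ?_⟩
  have h1 : b ((2 * Real.pi)⁻¹ • ξ) = 1 := by
    apply hb1
    rw [norm_smul, Real.norm_of_nonneg (by positivity), inv_mul_le_one₀ (by positivity)]
    linarith [Real.pi_gt_three]
  have h2 : 𝓕 (𝓕⁻ b) = b := FourierTransform.fourier_fourierInv_eq b
  rw [← h1]
  nth_rewrite 2 [← h2]
  rw [SchwartzMap.fourier_coe, Real.fourier_eq']
  refine integral_congr_ae (.of_forall fun y => ?_)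
  simp only [smul_eq_mul, chr, inner_neg_right, real_inner_smul_right]
  congr 4
  field_simp

end Smoothing

section Smoothing

open scoped SchwartzMap FourierTransform

/-- The weight `(1 + ‖x‖) ^ (-4)`. -/
def decay (x : E3) : ℝ≥0∞ := ENNReal.ofReal ((1 + ‖x‖) ^ 4)⁻¹

theorem measurable_decay : Measurable decay := by
  unfold decay
  fun_prop

theorem decay_le_one (x : E3) : decay x ≤ 1 := by
  rw [decay, ENNReal.ofReal_le_one]
  exact inv_le_one_of_one_le₀ (one_le_pow₀ (by simp))

theorem lintegral_decay_ne_top : ∫⁻ x, decay x ≠ ∞ := by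
  have h := finite_integral_one_add_norm (μ := (volume : Measure E3)) (r := 4)
    (by simp; norm_num)
  refine ((lintegral_congr fun x => ?_).trans_lt h).ne
  rw [decay, Real.rpow_neg (by positivity)]
  norm_cast

theorem decay_le_mul {t : ℝ} (ht : 0 < t) {x y : E3} (h : 1 + ‖y‖ ≤ t * (1 + ‖x‖)) :
    decay x ≤ ENNReal.ofReal (t ^ 4) * decay y := by
  rw [decay, decay, ← ENNReal.ofReal_mul (by positivity)]
  refine ENNReal.ofReal_le_ofReal ?_
  rw [← div_eq_mul_inv, inv_le_comm₀ (by positivity) (by positivity), inv_div,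
    div_le_iff₀' (by positivity), ← mul_pow]
  gcongr

theorem exists_bandLimited_decay_le : ∃ m : Measure E3, IsFiniteMeasure m ∧ BandLimited m ∧
    ∃ c : ℝ≥0∞, c ≠ ∞ ∧ ∀ g : E3 → ℝ≥0∞, Measurable g →
      ∫⁻ x, decay x * g x ≤ c * ∫⁻ x, g x ∂m := by
  obtain ⟨ν, hν, hν0, hνB⟩ := exists_bandLimited_ne_zero
  obtain ⟨N, hN⟩ : ∃ N : ℕ, ν (closedBall 0 N) ≠ 0 := by
    by_contra! h
    apply hν0
    rw [← Measure.measure_univ_eq_zero, ← iUnion_closedBall_nat 0]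
    exact measure_iUnion_null h
  have hv : IsFiniteMeasure (volume.withDensity decay) :=
    isFiniteMeasure_withDensity lintegral_decay_ne_top
  refine ⟨ν.conv (volume.withDensity decay), inferInstance, fun ξ hξ => ?_,
    ENNReal.ofReal ((1 + N) ^ 4) * (ν (closedBall 0 N))⁻¹,
    ENNReal.mul_ne_top ENNReal.ofReal_ne_top (ENNReal.inv_ne_top.2 hN), fun g hg => ?_⟩
  · rw [integral_conv (isBC_chr ξ).integrable]
    have : ∀ x y, chr ξ (x + y) = chr ξ x * chr ξ y := by
      intro x y
      simp only [chr, inner_add_left, ← Complex.exp_add]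
      push_cast
      ring_nf
    simp_rw [this, integral_const_mul, integral_mul_const, hνB ξ hξ, zero_mul]
  · rw [Measure.lintegral_conv hg]
    have key : ∀ x ∈ closedBall (0 : E3) N, ∫⁻ y, decay y * g y ≤
        ENNReal.ofReal ((1 + N) ^ 4) * ∫⁻ y, g (x + y) ∂(volume.withDensity decay) := by
      intro x hx
      rw [lintegral_withDensity_eq_lintegral_mul _ measurable_decay (by fun_prop),
        ← lintegral_const_mul _ (by exact measurable_decay.mul (by fun_prop)),
        ← lintegral_add_left_eq_self _ x]
      refine lintegral_mono fun y => ?_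
      rw [Pi.mul_apply, ← mul_assoc]
      gcongr
      refine decay_le_mul (by positivity) ?_
      have h1 : ‖y‖ ≤ ‖x + y‖ + ‖x‖ := by simpa using norm_sub_le (x + y) x
      have h2 : ‖x‖ ≤ N := by simpa using hx
      nlinarith [norm_nonneg (x + y)]
    have h1 : ν (closedBall 0 N) * ∫⁻ y, decay y * g y ≤ ENNReal.ofReal ((1 + N) ^ 4) *
        ∫⁻ x, ∫⁻ y, g (x + y) ∂(volume.withDensity decay) ∂ν := by
      rw [← lintegral_const_mul' _ _ ENNReal.ofReal_ne_top, mul_comm, ← setLIntegral_const]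
      exact (setLIntegral_mono' measurableSet_closedBall key).trans (setLIntegral_le_lintegral _ _)
    rw [mul_right_comm, ← div_eq_mul_inv, ENNReal.le_div_iff_mul_le (.inl hN)
      (.inl (measure_ne_top _ _)), mul_comm]
    exact h1

theorem lintegral_pow_six_le {X : Type*} [MeasurableSpace X] (μ : Measure X) {f : X → ℝ≥0∞}
    (hf : AEMeasurable f μ) : (∫⁻ x, f x ∂μ) ^ 6 ≤ μ univ ^ 5 * ∫⁻ x, f x ^ 6 ∂μ := by
  have hpq : (6 : ℝ).HolderConjugate (6 / 5) := by
    rw [Real.holderConjugate_iff]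
    norm_num
  have h := ENNReal.lintegral_mul_le_Lp_mul_Lq μ hpq hf (aemeasurable_const (b := 1))
  simp only [Pi.mul_apply, mul_one, ENNReal.one_rpow, lintegral_const, one_mul] at h
  have h6 := pow_le_pow_left' h 6
  rw [mul_pow, ← ENNReal.rpow_natCast, ← ENNReal.rpow_natCast, ← ENNReal.rpow_natCast,
    ← ENNReal.rpow_mul, ← ENNReal.rpow_mul] at h6
  norm_num at h6
  rw [mul_comm]
  exact_mod_cast h6

theorem lintegral_decay_smul_le {α r : ℝ} (hα : α ≤ 3) (hr : 0 < r)
    {μ : Measure E3} (hμ : ∀ x s, 0 < s → μ (ball x s) ≤ ENNReal.ofReal (s ^ α)) (u : E3) :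
    ∫⁻ x, decay (r • (x - u)) ∂μ ≤ 16 * ENNReal.ofReal (r ^ (-α)) := by
  have h1 : ∀ x, decay (r • (x - u)) ≤ ∑' j : ℕ, (ball u (2 ^ (j + 1) / r)).indicator
      (fun _ => ENNReal.ofReal (((2 : ℝ) ^ j) ^ 4)⁻¹) x := by
    intro x
    obtain ⟨j, hj1, hj2⟩ := exists_nat_pow_near (x := 1 + ‖r • (x - u)‖) (y := 2)
      (by simp) one_lt_two
    refine le_trans ?_ (ENNReal.le_tsum j)
    rw [indicator_of_mem]
    · refine ENNReal.ofReal_le_ofReal ?_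
      gcongr
    · rw [norm_smul, Real.norm_of_nonneg hr.le] at hj2
      rw [mem_ball, dist_eq_norm, lt_div_iff₀ hr]
      linarith
  have h2 : ∀ j : ℕ, ∫⁻ x, (ball u (2 ^ (j + 1) / r)).indicator
      (fun _ => ENNReal.ofReal (((2 : ℝ) ^ j) ^ 4)⁻¹) x ∂μ ≤
      8 * ENNReal.ofReal (r ^ (-α)) * (2⁻¹) ^ j := by
    intro j
    rw [lintegral_indicator_const measurableSet_ball]
    have h3 : ((2 : ℝ) ^ (j + 1) / r) ^ α ≤ (2 ^ (j + 1)) ^ 3 * r ^ (-α) := by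
      rw [Real.div_rpow (by positivity) hr.le, Real.rpow_neg hr.le, div_eq_mul_inv]
      gcongr
      calc ((2 : ℝ) ^ (j + 1)) ^ α ≤ (2 ^ (j + 1)) ^ (3 : ℝ) :=
            Real.rpow_le_rpow_of_exponent_le (one_le_pow₀ one_le_two) hα
        _ = _ := by norm_cast
    have h4 : (2⁻¹ : ℝ≥0∞) ^ j = ENNReal.ofReal ((2⁻¹) ^ j) := by
      rw [ENNReal.ofReal_pow (by positivity), ENNReal.ofReal_inv_of_pos (by norm_num)]
      simp
    have h5 : (8 : ℝ≥0∞) = ENNReal.ofReal 8 := by simp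
    rw [h4, h5, ← ENNReal.ofReal_mul (by norm_num), ← ENNReal.ofReal_mul (by positivity)]
    calc _ ≤ ENNReal.ofReal ((((2 : ℝ) ^ j) ^ 4)⁻¹) *
          ENNReal.ofReal ((2 ^ (j + 1)) ^ 3 * r ^ (-α)) := by
          gcongr
          exact (hμ _ _ (by positivity)).trans (ENNReal.ofReal_le_ofReal h3)
      _ = _ := by
          rw [← ENNReal.ofReal_mul (by positivity)]
          congr 1
          rw [inv_pow]
          field_simp
          ring
  calc _ ≤ ∫⁻ x, ∑' j : ℕ, (ball u (2 ^ (j + 1) / r)).indicator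
        (fun _ => ENNReal.ofReal (((2 : ℝ) ^ j) ^ 4)⁻¹) x ∂μ := lintegral_mono h1
    _ = ∑' j : ℕ, ∫⁻ x, (ball u (2 ^ (j + 1) / r)).indicator
        (fun _ => ENNReal.ofReal (((2 : ℝ) ^ j) ^ 4)⁻¹) x ∂μ :=
        lintegral_tsum fun j => (measurable_const.indicator measurableSet_ball).aemeasurable
    _ ≤ ∑' j : ℕ, 8 * ENNReal.ofReal (r ^ (-α)) * (2⁻¹) ^ j := ENNReal.tsum_le_tsum h2
    _ = _ := by
        rw [ENNReal.tsum_mul_left, ENNReal.tsum_geometric, ENNReal.one_sub_inv_two, inv_inv,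
          mul_right_comm]
        norm_num

theorem lintegral_comp_smul_sub (f : E3 → ℝ≥0∞) (hf : Measurable f) {r : ℝ} (hr : 0 < r)
    (x : E3) : ∫⁻ y, f y = ENNReal.ofReal (r ^ 3) * ∫⁻ u, f (r • (x - u)) := by
  rw [lintegral_sub_left_eq_self (fun u => f (r • u)) x,
    ← lintegral_map hf (measurable_const_smul r), Measure.map_addHaar_smul _ hr.ne',
    lintegral_smul_measure, smul_eq_mul, ← mul_assoc, ← ENNReal.ofReal_mul (by positivity)]
  simp only [finrank_euclideanSpace, Fintype.card_fin]
  rw [abs_of_pos (by positivity), mul_inv_cancel₀ (by positivity)]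
  simp

theorem eq_integral_of_hasSpectrum {Φ : 𝓢(E3, ℂ)}
    (hΦ : ∀ ξ : E3, ‖ξ‖ ≤ 2 → ∫ y, chr (-ξ) y * Φ y = 1) {r : ℝ} (hr : 0 < r)
    {F : E3 → ℂ} (hF : HasSpectrum {ξ | ‖ξ‖ ≤ 2 * r} F) (x : E3) :
    F x = ∫ y, F (x - r⁻¹ • y) * Φ y := by
  have hint : ∀ G, HasSpectrum {ξ | ‖ξ‖ ≤ 2 * r} G →
      Integrable fun y => G (x - r⁻¹ • y) * Φ y := by
    intro G hG
    obtain ⟨hc, C, hC⟩ := hG.isBC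
    exact Φ.integrable.bdd_mul (c := C) (by fun_prop) (.of_forall fun y => hC _)
  induction hF using Submodule.span_induction with
  | mem f h =>
    obtain ⟨ξ, hξ, rfl⟩ := h
    have h1 : ∀ y, chr ξ (x - r⁻¹ • y) = chr ξ x * chr (-(r⁻¹ • ξ)) y := by
      intro y
      simp only [chr, inner_sub_left, real_inner_smul_left, inner_neg_right,
        real_inner_smul_right, ← Complex.exp_add]
      push_cast
      ring_nf
    simp_rw [h1, mul_assoc]
    rw [integral_const_mul, hΦ _ ?_, mul_one]
    rw [norm_smul, Real.norm_of_nonneg (by positivity), inv_mul_le_iff₀ hr, mul_comm]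
    exact hξ
  | zero => simp
  | add f g hf hg ihf ihg =>
    simp only [Pi.add_apply, add_mul]
    rw [integral_add (hint f hf) (hint g hg), ← ihf, ← ihg]
  | smul c f hf ih =>
    simp only [Pi.smul_apply, smul_eq_mul, mul_assoc]
    rw [integral_const_mul, ← ih]

/-- A band-limited measure that controls sixth moments against Frostman measures. -/
theorem exists_bandLimited_lintegral_pow_six_le : ∃ m : Measure E3, IsFiniteMeasure m ∧
    BandLimited m ∧ ∃ C : ℝ≥0∞, C ≠ ∞ ∧ ∀ (α r : ℝ), α ≤ 3 → 1 ≤ r → ∀ μ : Measure E3,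
      IsFiniteMeasure μ → μ (closedBall 0 1)ᶜ = 0 →
      (∀ x s, 0 < s → μ (ball x s) ≤ ENNReal.ofReal (s ^ α)) →
      ∀ F : E3 → ℂ, HasSpectrum {ξ | ‖ξ‖ ≤ 2 * r} F →
        ∫⁻ x, ‖F x‖ₑ ^ 6 ∂μ ≤ C * ENNReal.ofReal (r ^ (3 - α)) * ∫⁻ x, ‖F x‖ₑ ^ 6 ∂m := by
  obtain ⟨m, hm, hmB, c, hc, hmc⟩ := exists_bandLimited_decay_le
  obtain ⟨Φ, hΦ⟩ := exists_reproducing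
  obtain ⟨C₁, hC₁⟩ : ∃ C₁ : ℝ, ∀ y, ‖Φ y‖ₑ ≤ ENNReal.ofReal C₁ * (decay y * decay y) := by
    refine ⟨2 ^ 8 * (Finset.Iic (8, 0)).sup (fun m => SchwartzMap.seminorm ℂ m.1 m.2) Φ,
      fun y => ?_⟩
    have h := SchwartzMap.one_add_le_sup_seminorm_apply (𝕜 := ℂ) (m := (8, 0)) (k := 8) (n := 0)
      le_rfl le_rfl Φ y
    rw [norm_iteratedFDeriv_zero] at h
    rw [decay, ← ENNReal.ofReal_mul (by positivity), ← ENNReal.ofReal_mul (by positivity),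
      ← ofReal_norm]
    refine ENNReal.ofReal_le_ofReal ?_
    rw [← mul_inv, ← div_eq_mul_inv, le_div_iff₀ (by positivity)]
    refine Eq.trans_le ?_ h
    ring
  have hDm : Measurable fun y => decay y * decay y := measurable_decay.mul measurable_decay
  set v := (volume : Measure E3).withDensity fun y => decay y * decay y with hv
  have hvfin : v univ ≠ ∞ := by
    rw [hv, withDensity_apply _ MeasurableSet.univ, setLIntegral_univ]
    refine ((lintegral_mono fun x => ?_).trans_lt lintegral_decay_ne_top.lt_top).ne
    exact mul_le_of_le_one_left' (decay_le_one x)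
  refine ⟨m, hm, hmB, ENNReal.ofReal C₁ ^ 6 * v univ ^ 5 * (16 * 16) * c, by finiteness,
    fun α r hα hr μ hμf hμ1 hμ F hF => ?_⟩
  have hr0 : 0 < r := by linarith
  have hFc : Continuous F := hF.isBC.1
  have hFm : Measurable fun x => ‖F x‖ₑ ^ 6 := by fun_prop
  have h1 : ∀ x, ‖F x‖ₑ ^ 6 ≤ ENNReal.ofReal C₁ ^ 6 * v univ ^ 5 * (ENNReal.ofReal (r ^ 3) *
      ∫⁻ u, decay (r • (x - u)) * decay (r • (x - u)) * ‖F u‖ₑ ^ 6) := by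
    intro x
    have hm1 : Measurable fun y => ‖F (x - r⁻¹ • y)‖ₑ :=
      Continuous.measurable (by fun_prop)
    have h2 : ‖F x‖ₑ ≤ ENNReal.ofReal C₁ * ∫⁻ y, ‖F (x - r⁻¹ • y)‖ₑ ∂v := by
      rw [hv, lintegral_withDensity_eq_lintegral_mul _ hDm hm1,
        ← lintegral_const_mul' _ _ ENNReal.ofReal_ne_top, eq_integral_of_hasSpectrum hΦ hr0 hF x]
      refine (enorm_integral_le_lintegral_enorm _).trans (lintegral_mono fun y => ?_)
      rw [enorm_mul, Pi.mul_apply, ← mul_assoc, mul_comm]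
      gcongr
      exact hC₁ y
    have h3 := pow_le_pow_left' h2 6
    rw [mul_pow] at h3
    refine h3.trans ?_
    rw [mul_assoc]
    gcongr
    refine (lintegral_pow_six_le v hm1.aemeasurable).trans_eq ?_
    rw [hv, lintegral_withDensity_eq_lintegral_mul _ hDm (hm1.pow_const 6),
      lintegral_comp_smul_sub _ (hDm.mul (hm1.pow_const 6)) hr0 x]
    congr 2
    refine lintegral_congr fun u => ?_
    simp [smul_smul, inv_mul_cancel₀ hr0.ne']
  have hDm2 : Measurable fun p : E3 × E3 => decay (r • (p.1 - p.2)) :=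
    measurable_decay.comp (by fun_prop)
  have h4 : ∫⁻ x, (∫⁻ u, decay (r • (x - u)) * decay (r • (x - u)) * ‖F u‖ₑ ^ 6) ∂μ ≤
      16 * 16 * ENNReal.ofReal (r ^ (-α)) * ∫⁻ u, decay u * ‖F u‖ₑ ^ 6 := by
    rw [lintegral_lintegral_swap ((hDm2.mul hDm2).mul (hFm.comp measurable_snd)).aemeasurable,
      ← lintegral_const_mul' _ _ (by finiteness)]
    refine lintegral_mono fun u => ?_
    rw [lintegral_mul_const' _ _ (by finiteness), ← mul_assoc]
    gcongr
    have hsupp : ∀ᵐ x ∂μ, x ∈ closedBall (0 : E3) 1 := hμ1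
    calc ∫⁻ x, decay (r • (x - u)) * decay (r • (x - u)) ∂μ
        ≤ ∫⁻ x, 16 * decay u * decay (r • (x - u)) ∂μ := by
          refine lintegral_mono_ae (hsupp.mono fun x hx => ?_)
          gcongr
          refine (decay_le_mul two_pos (y := u) ?_).trans_eq (by norm_num)
          rw [norm_smul, Real.norm_of_nonneg hr0.le]
          have h5 : ‖x‖ ≤ 1 := by simpa using hx
          have h6 : ‖u‖ ≤ ‖x‖ + ‖x - u‖ := by simpa using norm_sub_le x (x - u)
          nlinarith [norm_nonneg (x - u)]
      _ = 16 * decay u * ∫⁻ x, decay (r • (x - u)) ∂μ := 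
          lintegral_const_mul' _ _ (by unfold decay; finiteness)
      _ ≤ 16 * decay u * (16 * ENNReal.ofReal (r ^ (-α))) := by
          gcongr
          exact lintegral_decay_smul_le hα hr0 hμ u
      _ = _ := by ring
  calc _ ≤ ∫⁻ x, ENNReal.ofReal C₁ ^ 6 * v univ ^ 5 * (ENNReal.ofReal (r ^ 3) *
      ∫⁻ u, decay (r • (x - u)) * decay (r • (x - u)) * ‖F u‖ₑ ^ 6) ∂μ := lintegral_mono h1
    _ = ENNReal.ofReal C₁ ^ 6 * v univ ^ 5 * (ENNReal.ofReal (r ^ 3) *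
      ∫⁻ x, (∫⁻ u, decay (r • (x - u)) * decay (r • (x - u)) * ‖F u‖ₑ ^ 6) ∂μ) := by
        rw [lintegral_const_mul' _ _ (by finiteness), lintegral_const_mul' _ _ (by finiteness)]
    _ ≤ ENNReal.ofReal C₁ ^ 6 * v univ ^ 5 * (ENNReal.ofReal (r ^ 3) *
      (16 * 16 * ENNReal.ofReal (r ^ (-α)) * (c * ∫⁻ u, ‖F u‖ₑ ^ 6 ∂m))) := by
        gcongr
        exact h4.trans (by gcongr; exact hmc _ hFm)
    _ = _ := by
        have : ENNReal.ofReal (r ^ (3 - α)) =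
            ENNReal.ofReal (r ^ 3) * ENNReal.ofReal (r ^ (-α)) := by
          rw [← ENNReal.ofReal_mul (by positivity), sub_eq_add_neg, Real.rpow_add hr0]
          norm_cast
        rw [this]
        ring

end Smoothing

section Fejer

/-- The point `exp (i v)` of the unit circle. -/
def osc (v : ℝ) : ℂ := Complex.exp (Complex.I * v)

theorem norm_osc (v : ℝ) : ‖osc v‖ = 1 := Complex.norm_exp_I_mul_ofReal v

theorem osc_pow (v : ℝ) (n : ℕ) : osc v ^ n = osc (n * v) := by
  rw [osc, osc, ← Complex.exp_nat_mul]
  push_cast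
  ring_nf

theorem osc_add (u v : ℝ) : osc (u + v) = osc u * osc v := by
  rw [osc, osc, osc, ← Complex.exp_add]
  push_cast
  ring_nf

theorem conj_osc (v : ℝ) : starRingEnd ℂ (osc v) = osc (-v) := by
  simp [osc, ← Complex.exp_conj]

@[fun_prop]
theorem continuous_osc : Continuous osc := by
  unfold osc
  fun_prop

theorem osc_periodic : Function.Periodic osc (2 * Real.pi) := fun v => by
  have := Complex.exp_periodic (Complex.I * v)
  rw [osc, osc, ← this]
  push_cast
  ring_nf

theorem integral_osc {n : ℤ} (hn : n ≠ 0) : ∫ u in (-Real.pi)..Real.pi, osc (n * u) = 0 := by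
  have h : ∀ u : ℝ, osc (n * u) = Complex.exp ((Complex.I * n) * u) := fun u => by
    rw [osc]; push_cast; ring_nf
  simp_rw [h]
  rw [integral_exp_mul_complex (by simpa using hn), Complex.exp_eq_exp_iff_exists_int.2, sub_self,
    zero_div]
  exact ⟨n, by push_cast; ring⟩

theorem sq_norm_geom_sum {z : ℂ} (hz : ‖z‖ = 1) (N : ℕ) :
    ‖∑ i ∈ Finset.range N, z ^ i‖ ^ 2 =
      2 * (∑ d ∈ Finset.range N, ((N : ℂ) - d) * z ^ d).re - N := by
  induction N with
  | zero => simp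
  | succ N ih =>
    have h1 : ∑ d ∈ Finset.range (N + 1), (((N + 1 : ℕ) : ℂ) - d) * z ^ d =
        ∑ d ∈ Finset.range N, ((N : ℂ) - d) * z ^ d + ∑ i ∈ Finset.range (N + 1), z ^ i := by
      rw [Finset.sum_range_succ, Finset.sum_range_succ (fun i => z ^ i), ← add_assoc,
        ← Finset.sum_add_distrib]
      congr 1
      · exact Finset.sum_congr rfl fun d _ => by push_cast; ring
      · push_cast; ring
    have h2 : ∑ i ∈ Finset.range (N + 1), z ^ i = z * (∑ i ∈ Finset.range N, z ^ i) + 1 := by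
      rw [Finset.sum_range_succ', Finset.mul_sum]
      congr 1
      exact Finset.sum_congr rfl fun i _ => by ring
    have h3 : ‖z * (∑ i ∈ Finset.range N, z ^ i) + 1‖ ^ 2 = ‖∑ i ∈ Finset.range N, z ^ i‖ ^ 2
        + 2 * (z * ∑ i ∈ Finset.range N, z ^ i).re + 1 := by
      have := Complex.normSq_add (z * (∑ i ∈ Finset.range N, z ^ i)) 1
      rw [← Complex.sq_norm, ← Complex.sq_norm, ← Complex.sq_norm, norm_mul, hz] at this
      rw [this]
      simp
      ring
    rw [h1, h2, h3, ih, Complex.add_re, Complex.add_re, Complex.one_re]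
    push_cast
    ring

/-- The Fourier multiplier of the Fejér kernel. -/
def fejerWeight (N n : ℕ) : ℝ := 1 - n / N

theorem fejerWeight_mem {N n : ℕ} (h : n ≤ N) : fejerWeight N n ∈ Icc (0 : ℝ) 1 := by
  have : (n : ℝ) / N ≤ 1 := div_le_one_of_le₀ (by exact_mod_cast h) (by positivity)
  have : 0 ≤ (n : ℝ) / N := by positivity
  constructor <;> simp only [fejerWeight] <;> linarith

/-- The part of the Fejér kernel with frequencies in `[p, q)`. -/
def fejerPiece (N p q : ℕ) (v : ℝ) : ℂ :=
  ∑ n ∈ Finset.Ico p q, (fejerWeight N n : ℂ) * osc v ^ n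

@[fun_prop]
theorem continuous_fejerPiece (N p q : ℕ) : Continuous (fejerPiece N p q) := by
  unfold fejerPiece
  fun_prop

theorem norm_fejerPiece_le {N p q : ℕ} (hq : q ≤ N) (v : ℝ) : ‖fejerPiece N p q v‖ ≤ N := by
  refine (norm_sum_le_of_le _ (f := fun n => (fejerWeight N n : ℂ) * osc v ^ n) (n := fun _ => 1)
    fun n hn => ?_).trans ?_
  · have := fejerWeight_mem (N := N) (n := n) (by simp at hn; omega)
    rw [norm_mul, norm_pow, norm_osc, one_pow, mul_one, Complex.norm_real,
      Real.norm_of_nonneg this.1]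
    exact this.2
  · simp only [Finset.sum_const, Nat.card_Ico, nsmul_eq_mul, mul_one]
    exact_mod_cast (Nat.sub_le _ _).trans hq

theorem norm_mul_fejerPiece_le {N p q : ℕ} (hpq : p ≤ q) (hq : q ≤ N) (v : ℝ) :
    ‖osc v - 1‖ * ‖fejerPiece N p q v‖ ≤ 2 := by
  have h : ∀ q, p ≤ q → (osc v - 1) * fejerPiece N p q v =
      fejerWeight N q * osc v ^ q - fejerWeight N p * osc v ^ p +
        (N : ℂ)⁻¹ * ∑ n ∈ Finset.Ico p q, osc v ^ (n + 1) := by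
    intro q hq
    induction q, hq using Nat.le_induction with
    | base => simp [fejerPiece]
    | succ q hq ih =>
      rw [fejerPiece, Finset.sum_Ico_succ_top hq, mul_add, ← fejerPiece, ih,
        Finset.sum_Ico_succ_top hq]
      simp only [fejerWeight]
      push_cast
      ring
  rw [← norm_mul, h q hpq]
  have h1 : ‖∑ n ∈ Finset.Ico p q, osc v ^ (n + 1)‖ ≤ (q : ℝ) - p := by
    refine (norm_sum_le_of_le _ (n := fun _ => 1) fun n _ => ?_).trans ?_
    · simp [norm_osc]
    · simp [Nat.cast_sub hpq]
  have hp := fejerWeight_mem (N := N) (n := p) (by omega)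
  have hq' := fejerWeight_mem hq
  calc _ ≤ ‖(fejerWeight N q : ℂ) * osc v ^ q‖ + ‖(fejerWeight N p : ℂ) * osc v ^ p‖
        + ‖(N : ℂ)⁻¹ * ∑ n ∈ Finset.Ico p q, osc v ^ (n + 1)‖ :=
        (norm_add_le _ _).trans (by gcongr; exact norm_sub_le _ _)
    _ ≤ fejerWeight N q + fejerWeight N p + (N : ℝ)⁻¹ * ((q : ℝ) - p) := by
        rw [norm_mul, norm_mul, norm_mul, norm_pow, norm_pow, norm_osc, one_pow, one_pow, mul_one,
          mul_one, Complex.norm_real, Complex.norm_real, Real.norm_of_nonneg hp.1,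
          Real.norm_of_nonneg hq'.1]
        gcongr
        simp
    _ = 2 - 2 * (p / N) := by simp only [fejerWeight]; ring
    _ ≤ 2 := by
        have : 0 ≤ (p : ℝ) / N := by positivity
        linarith

theorem norm_fejerPiece_le_rpow {N p q : ℕ} (hpq : p ≤ q) (hq : q ≤ N) {η : ℝ} (hη : 0 < η)
    (hη1 : η ≤ 1) {v : ℝ} (hv : v ≠ 0) (hv1 : |v| ≤ Real.pi) :
    ‖fejerPiece N p q v‖ ≤ N ^ η * Real.pi * |v| ^ (η - 1) := by
  have hv0 : 0 < |v| := abs_pos.2 hv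
  have h1 : 2 * (|v| / Real.pi) ≤ ‖osc v - 1‖ := by
    rw [osc, Complex.norm_exp_I_mul_ofReal_sub_one, norm_mul, Real.norm_two, Real.norm_eq_abs,
      Real.abs_sin_eq_sin_abs_of_abs_le_pi (by rw [abs_div, abs_two]; linarith [abs_nonneg v]),
      abs_div, abs_two]
    have := Real.mul_le_sin (x := |v| / 2) (by positivity) (by linarith)
    have h : 2 / Real.pi * (|v| / 2) = |v| / Real.pi := by ring
    rw [h] at this
    linarith
  have h2 : ‖fejerPiece N p q v‖ ≤ Real.pi * |v|⁻¹ := by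
    have h3 := norm_mul_fejerPiece_le hpq hq v
    have h4 : |v| / Real.pi * ‖fejerPiece N p q v‖ ≤ 1 := by
      nlinarith [norm_nonneg (fejerPiece N p q v)]
    have h5 : Real.pi * |v|⁻¹ = 1 / (|v| / Real.pi) := by field_simp
    rw [h5, le_div_iff₀' (by positivity)]
    exact h4
  calc ‖fejerPiece N p q v‖ = ‖fejerPiece N p q v‖ ^ η * ‖fejerPiece N p q v‖ ^ (1 - η) := by
        rw [← Real.rpow_add' (norm_nonneg _) (by simp)]
        simp
    _ ≤ N ^ η * (Real.pi * |v|⁻¹) ^ (1 - η) := by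
        have : 0 ≤ 1 - η := by linarith
        gcongr
        exact norm_fejerPiece_le hq v
    _ ≤ N ^ η * (Real.pi * |v| ^ (η - 1)) := by
        rw [Real.mul_rpow (by positivity) (by positivity), Real.inv_rpow hv0.le,
          ← Real.rpow_neg hv0.le, neg_sub]
        gcongr
        exact Real.rpow_le_self_of_one_le (by linarith [Real.pi_gt_three]) (by linarith)
    _ = _ := by ring

theorem integral_norm_fejerPiece_le {N p q : ℕ} (hpq : p ≤ q) (hq : q ≤ N) {η : ℝ} (hη : 0 < η)
    (hη1 : η ≤ 1) :
    ∫ v in (-Real.pi)..Real.pi, ‖fejerPiece N p q v‖ ≤ 2 * Real.pi ^ (1 + η) / η * N ^ η := by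
  have hc : ∀ a b, IntervalIntegrable (fun v => ‖fejerPiece N p q v‖) volume a b :=
    fun a b => Continuous.intervalIntegrable (by fun_prop) _ _
  have key : ∀ g : ℝ → ℝ, Continuous g →
      (∀ v, 0 < v → v ≤ Real.pi → g v ≤ N ^ η * Real.pi * v ^ (η - 1)) →
      ∫ v in (0)..Real.pi, g v ≤ Real.pi ^ (1 + η) / η * N ^ η := by
    intro g hg hle
    have h1 : ∫ v in (0)..Real.pi, g v ≤ ∫ v in (0)..Real.pi, N ^ η * Real.pi * v ^ (η - 1) := by
      refine intervalIntegral.integral_mono_on_of_le_Ioo Real.pi_pos.le (hg.intervalIntegrable _ _)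
        ((intervalIntegral.intervalIntegrable_rpow' (by linarith)).const_mul _)
        fun v hv => hle v hv.1 hv.2.le
    refine h1.trans_eq ?_
    rw [intervalIntegral.integral_const_mul, integral_rpow (.inl (by linarith)), sub_add_cancel,
      Real.zero_rpow hη.ne', Real.rpow_add Real.pi_pos, Real.rpow_one]
    ring
  rw [← intervalIntegral.integral_add_adjacent_intervals (hc (-Real.pi) 0) (hc 0 Real.pi)]
  have h2 : ∫ v in (-Real.pi)..0, ‖fejerPiece N p q v‖ =
      ∫ v in (0)..Real.pi, ‖fejerPiece N p q (-v)‖ := by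
    rw [intervalIntegral.integral_comp_neg (fun v => ‖fejerPiece N p q v‖)]
    simp
  rw [h2]
  have h3 := key (fun v => ‖fejerPiece N p q (-v)‖) (by fun_prop) fun v hv hv1 => by
    have := norm_fejerPiece_le_rpow hpq hq hη hη1 (v := -v) (by simpa using hv.ne')
      (by rwa [abs_neg, abs_of_pos hv])
    rwa [abs_neg, abs_of_pos hv] at this
  have h4 := key (fun v => ‖fejerPiece N p q v‖) (by fun_prop) fun v hv hv1 => by
    have := norm_fejerPiece_le_rpow hpq hq hη hη1 (v := v) hv.ne'
      (by rwa [abs_of_pos hv])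
    rwa [abs_of_pos hv] at this
  calc _ ≤ _ := add_le_add h3 h4
    _ = _ := by ring

/-- The Fourier coefficients of the convolution of the indicator of `E` with the Fejér kernel. -/
def fejerCoeff (E : Set ℝ) (N n : ℕ) : ℂ := fejerWeight N n * ∫ u in E, osc (-u) ^ n

section

variable {E : Set ℝ} {N : ℕ}

theorem volume_ne_top_of_subset (hE : E ⊆ Icc (-2) 2) : volume E ≠ ∞ :=
  ((measure_mono hE).trans_lt (by simp)).ne

theorem integrableOn_of_subset {F : Type*} [NormedAddCommGroup F] (hE : E ⊆ Icc (-2) 2)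
    {g : ℝ → F} (hg : Continuous g) : IntegrableOn g E :=
  (hg.integrableOn_Icc).mono_set hE

theorem sum_fejerCoeff_eq (hE : E ⊆ Icc (-2) 2) (p q : ℕ) (s : ℝ) :
    ∑ n ∈ Finset.Ico p q, fejerCoeff E N n * osc s ^ n = ∫ u in E, fejerPiece N p q (s - u) := by
  simp only [fejerPiece]
  rw [integral_finsetSum _ fun n _ => integrableOn_of_subset hE (by fun_prop)]
  refine Finset.sum_congr rfl fun n _ => ?_
  rw [fejerCoeff, integral_const_mul, mul_assoc, ← integral_mul_const]
  congr 2 with u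
  rw [sub_eq_add_neg, osc_add, mul_pow, mul_comm]

theorem norm_sum_fejerCoeff_le (hE : E ⊆ Icc (-2) 2) {p q : ℕ} (hpq : p ≤ q)
    (hq : q ≤ N) {η : ℝ} (hη : 0 < η) (hη1 : η ≤ 1) (s : ℝ) :
    ‖∑ n ∈ Finset.Ico p q, fejerCoeff E N n * osc s ^ n‖ ≤
      2 * Real.pi ^ (1 + η) / η * N ^ η := by
  rw [sum_fejerCoeff_eq hE]
  have hper : Function.Periodic (fun v => ‖fejerPiece N p q v‖) (2 * Real.pi) := fun v => by
    simp only [fejerPiece, osc_periodic v]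
  have hpi := Real.pi_gt_three
  calc ‖∫ u in E, fejerPiece N p q (s - u)‖ ≤ ∫ u in E, ‖fejerPiece N p q (s - u)‖ :=
        norm_integral_le_integral_norm _
    _ ≤ ∫ u in Ioc (-Real.pi) Real.pi, ‖fejerPiece N p q (s - u)‖ := by
        refine setIntegral_mono_set (Continuous.integrableOn_Ioc (by fun_prop))
          (.of_forall fun u => norm_nonneg _) (LE.le.eventuallyLE fun u hu => ?_)
        have := hE hu
        exact ⟨by linarith [this.1], by linarith [this.2]⟩
    _ = ∫ u in (-Real.pi)..Real.pi, ‖fejerPiece N p q (s - u)‖ :=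
        (intervalIntegral.integral_of_le (by linarith)).symm
    _ = ∫ u in (s - Real.pi)..(s - Real.pi) + 2 * Real.pi, ‖fejerPiece N p q u‖ := by
        rw [intervalIntegral.integral_comp_sub_left (fun u => ‖fejerPiece N p q u‖)]
        congr 1
        ring
    _ = ∫ u in (-Real.pi)..Real.pi, ‖fejerPiece N p q u‖ := by
        rw [hper.intervalIntegral_add_eq _ (-Real.pi)]
        congr 1
        ring
    _ ≤ _ := integral_norm_fejerPiece_le hpq hq hη hη1

theorem norm_fejerCoeff_le {n : ℕ} (hn : n ≤ N) :
    ‖fejerCoeff E N n‖ ≤ ‖∫ u in E, osc (-u) ^ n‖ := by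
  have := fejerWeight_mem hn
  rw [fejerCoeff, norm_mul, Complex.norm_real, Real.norm_of_nonneg this.1]
  exact mul_le_of_le_one_left (norm_nonneg _) this.2

theorem sum_sq_fejerCoeff_le (hE : E ⊆ Icc (-2) 2) :
    ∑ n ∈ Finset.range N, ‖fejerCoeff E N n‖ ^ 2 ≤ 4 * Real.pi * volume.real E := by
  set a : ℕ → ℂ := fun n => ∫ u in E, osc (-u) ^ n with ha
  set S := ∑ n ∈ Finset.range N, ‖a n‖ ^ 2 with hS
  have hS0 : 0 ≤ S := Finset.sum_nonneg fun n _ => by positivity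
  set g : ℝ → ℝ := fun u => ‖∑ n ∈ Finset.range N, a n * osc u ^ n‖ with hg
  have hfin : IsFiniteMeasure (volume.restrict E) :=
    ⟨by simpa using (volume_ne_top_of_subset hE).lt_top⟩
  have hbc : ∀ n, IsBC fun u => a n * osc u ^ n := fun n =>
    ⟨by fun_prop, ‖a n‖, fun u => by simp [norm_osc]⟩
  have h1 : S ≤ ∫ u in E, g u := by
    have h2 : (S : ℂ) = ∫ u in E, ∑ n ∈ Finset.range N, starRingEnd ℂ (a n * osc u ^ n) := by
      rw [integral_finsetSum _ fun n _ => integrableOn_of_subset hE (by fun_prop), hS]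
      push_cast
      refine Finset.sum_congr rfl fun n _ => ?_
      simp only [map_mul, map_pow, conj_osc]
      rw [integral_const_mul, mul_comm]
      exact (Complex.mul_conj' _).symm
    calc S = ‖(S : ℂ)‖ := by rw [Complex.norm_real, Real.norm_of_nonneg hS0]
      _ ≤ ∫ u in E, ‖∑ n ∈ Finset.range N, starRingEnd ℂ (a n * osc u ^ n)‖ := by
          rw [h2]
          exact norm_integral_le_integral_norm _
      _ = _ := by
          simp only [hg, ← map_sum, RCLike.norm_conj]
  have h3 : (∫ u in E, g u) ^ 2 ≤ (∫ u in E, g u ^ 2) * volume.real E := by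
    have := sq_integral_mul_le (m := volume.restrict E) (u := g) (v := fun _ => 1)
      (IsBC.norm (IsBC.sum _ fun n _ => hbc n)) (IsBC.const 1)
    simpa using this
  have hpi := Real.pi_gt_three
  have h4 : ∫ u in E, g u ^ 2 ≤ ∫ u in Ioc (-Real.pi) Real.pi, g u ^ 2 := by
    refine setIntegral_mono_set (Continuous.integrableOn_Ioc (by fun_prop))
      (.of_forall fun u => by positivity) (LE.le.eventuallyLE fun u hu => ?_)
    have := hE hu
    exact ⟨by linarith [this.1], by linarith [this.2]⟩
  have h5 : ∫ u in Ioc (-Real.pi) Real.pi, g u ^ 2 ≤ 4 * Real.pi * S := by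
    have := integral_sq_sum_le_of_almost_orthogonal (m := volume.restrict (Ioc (-Real.pi) Real.pi))
      (Finset.range N) (fun n u => a n * osc u ^ n) (fun _ => 1) hbc (IsBC.const 1) (by simp) 1 ?_
    · simp only [mul_one, norm_mul, norm_pow, norm_osc, one_pow, Nat.cast_one, integral_const,
        MeasurableSet.univ, measureReal_restrict_apply, univ_inter, Real.volume_real_Ioc,
        smul_eq_mul, ← Finset.mul_sum] at this
      rw [max_eq_left (by linarith)] at this
      refine this.trans_eq ?_
      ring
    · intro i _ j _ hij
      have hij' : (i : ℤ) - j ≠ 0 := by omega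
      have h6 : ∀ u, a i * osc u ^ i * starRingEnd ℂ (a j * osc u ^ j) * ((1 : ℝ) : ℂ) =
          a i * starRingEnd ℂ (a j) * osc (((i : ℤ) - j : ℤ) * u) := by
        intro u
        have h7 : osc (((i : ℤ) - j : ℤ) * u) = osc (i * u) * osc (j * -u) := by
          rw [← osc_add]
          push_cast
          ring_nf
        rw [h7, map_mul, map_pow, conj_osc, osc_pow, osc_pow]
        push_cast
        ring
      simp_rw [h6]
      rw [integral_const_mul, ← intervalIntegral.integral_of_le (by linarith), integral_osc hij',
        mul_zero]
  have h8 : S ≤ 4 * Real.pi * volume.real E := by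
    by_contra! h
    have hE0 : 0 ≤ volume.real E := measureReal_nonneg
    have hSpos : 0 < S := lt_of_le_of_lt (by positivity) h
    have : S ^ 2 ≤ 4 * Real.pi * S * volume.real E := by
      refine (pow_le_pow_left₀ hS0 h1 2).trans (h3.trans ?_)
      gcongr
      exact h4.trans h5
    nlinarith
  refine le_trans (Finset.sum_le_sum fun n hn => ?_) h8
  gcongr
  exact norm_fejerCoeff_le (Finset.mem_range.1 hn).le

theorem fejerKernel_eq (hN : 1 ≤ N) (v : ℝ) :
    ‖∑ i ∈ Finset.range N, osc v ^ i‖ ^ 2 / N = 2 * (fejerPiece N 1 N v).re + 1 := by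
  have hN0 : (N : ℝ) ≠ 0 := by positivity
  have h1 : ∑ d ∈ Finset.range N, ((N : ℂ) - d) * osc v ^ d = N * (1 + fejerPiece N 1 N v) := by
    rw [Finset.range_eq_Ico, Finset.sum_eq_sum_Ico_succ_bot hN, fejerPiece, mul_add, Finset.mul_sum]
    congr 1
    · simp
    · refine Finset.sum_congr rfl fun n _ => ?_
      rw [fejerWeight]
      have : (N : ℂ) ≠ 0 := by exact_mod_cast hN0
      push_cast
      field_simp
  rw [sq_norm_geom_sum (norm_osc v), h1, ← Complex.ofReal_natCast, Complex.re_ofReal_mul]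
  simp
  field_simp
  ring

theorem le_fejerKernel (hN : 1 ≤ N) {v : ℝ} (hv : |v| ≤ 1 / N) :
    (N : ℝ) / 4 ≤ ‖∑ i ∈ Finset.range N, osc v ^ i‖ ^ 2 / N := by
  have hN0 : (0 : ℝ) < N := by positivity
  have h1 : (N : ℝ) / 2 ≤ ‖∑ i ∈ Finset.range N, osc v ^ i‖ := by
    refine le_trans ?_ (Complex.re_le_norm _)
    rw [Complex.re_sum]
    calc (N : ℝ) / 2 = ∑ i ∈ Finset.range N, (1 / 2 : ℝ) := by simp; ring
      _ ≤ _ := by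
          refine Finset.sum_le_sum fun i hi => ?_
          rw [osc_pow, osc, mul_comm, Complex.exp_ofReal_mul_I_re]
          have hi' : (i : ℝ) ≤ N := by exact_mod_cast (Finset.mem_range.1 hi).le
          have h2 : |(i : ℝ) * v| ≤ 1 := by
            rw [abs_mul, Nat.abs_cast]
            rw [le_div_iff₀' hN0] at hv
            exact (mul_le_mul_of_nonneg_right hi' (abs_nonneg v)).trans hv
          have := Real.one_sub_sq_div_two_le_cos (x := i * v)
          have h3 : ((i : ℝ) * v) ^ 2 ≤ 1 := (sq_le_one_iff_abs_le_one _).2 h2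
          linarith
  rw [le_div_iff₀ hN0]
  nlinarith

theorem integral_fejerKernel_eq (hE : E ⊆ Icc (-2) 2) (hN : 1 ≤ N) (s : ℝ) :
    ∫ u in E, ‖∑ i ∈ Finset.range N, osc (s - u) ^ i‖ ^ 2 / N =
      2 * (∑ n ∈ Finset.Ico 1 N, fejerCoeff E N n * osc s ^ n).re + volume.real E := by
  have hint : IntegrableOn (fun u => fejerPiece N 1 N (s - u)) E :=
    integrableOn_of_subset hE (by fun_prop)
  rw [sum_fejerCoeff_eq hE, ← RCLike.re_eq_complex_re, ← integral_re hint, ← integral_const_mul]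
  have h3 : volume.real E = ∫ u in E, (1 : ℝ) := by simp
  rw [h3, ← integral_add (integrableOn_of_subset hE (by fun_prop))
    (integrableOn_of_subset hE (by fun_prop))]
  congr 1 with u
  exact fejerKernel_eq hN _

theorem half_le_fejer (hE : E ⊆ Icc (-2) 2) (hN : 1 ≤ N) {s : ℝ}
    (hs : Icc (s - 1 / N) (s + 1 / N) ⊆ E) :
    1 / 2 ≤ 2 * (∑ n ∈ Finset.Ico 1 N, fejerCoeff E N n * osc s ^ n).re + volume.real E := by
  have hN0 : (0 : ℝ) < N := by positivity
  rw [← integral_fejerKernel_eq hE hN]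
  calc (1 / 2 : ℝ) = ∫ u in Icc (s - 1 / N) (s + 1 / N), (N : ℝ) / 4 := by
        rw [setIntegral_const, Real.volume_real_Icc_of_le (by linarith [one_div_pos.2 hN0]),
          smul_eq_mul]
        field_simp
        ring
    _ ≤ ∫ u in Icc (s - 1 / N) (s + 1 / N), ‖∑ i ∈ Finset.range N, osc (s - u) ^ i‖ ^ 2 / N := by
        refine setIntegral_mono_on (by simp) (Continuous.integrableOn_Icc (by fun_prop))
          measurableSet_Icc fun u hu => le_fejerKernel hN ?_
        rw [abs_le]
        exact ⟨by linarith [hu.2], by linarith [hu.1]⟩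
    _ ≤ _ := setIntegral_mono_set (integrableOn_of_subset hE (by fun_prop))
        (.of_forall fun u => by positivity) (LE.le.eventuallyLE hs)

theorem fejer_nonneg (hE : E ⊆ Icc (-2) 2) (hN : 1 ≤ N) (s : ℝ) :
    0 ≤ 2 * (∑ n ∈ Finset.Ico 1 N, fejerCoeff E N n * osc s ^ n).re + volume.real E := by
  rw [← integral_fejerKernel_eq hE hN]
  exact integral_nonneg fun u => by positivity

end

end Fejer

section Core

variable {γ : ℝ → E3} {a b c C₀ h : ℝ} {e f : ℝ → E3}

theorem chr_nat_smul (n : ℕ) (ξ x : E3) : chr ((n : ℝ) • ξ) x = osc ⟪x, ξ⟫ ^ n := by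
  rw [osc_pow, chr, osc, real_inner_smul_right, mul_comm]

theorem BandLimited.integral_sq_norm_le {m : Measure E3} [IsFiniteMeasure m] (hm : BandLimited m)
    {ξ : E3} (hξ : ‖ξ‖ = 1) (s : Finset ℕ) (d : ℕ → ℂ) :
    ∫ x, ‖∑ n ∈ s, d n * osc ⟪x, ξ⟫ ^ n‖ ^ 2 ∂m ≤ 2 * m.real univ * ∑ n ∈ s, ‖d n‖ ^ 2 := by
  have hbc : ∀ n, IsBC fun x : E3 => d n * osc ⟪x, ξ⟫ ^ n := fun n =>
    ⟨by fun_prop, ‖d n‖, fun u => by simp [norm_osc]⟩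
  have := integral_sq_sum_le_of_almost_orthogonal (m := m) s (fun n x => d n * osc ⟪x, ξ⟫ ^ n)
    (fun _ => 1) hbc (IsBC.const 1) (by simp) 1 ?_
  · simp only [mul_one, norm_mul, norm_pow, norm_osc, one_pow, Nat.cast_one, integral_const,
      smul_eq_mul, ← Finset.mul_sum] at this
    refine this.trans_eq ?_
    ring
  · intro i _ j _ hij
    have h6 : ∀ x : E3, d i * osc ⟪x, ξ⟫ ^ i * starRingEnd ℂ (d j * osc ⟪x, ξ⟫ ^ j) *
        ((1 : ℝ) : ℂ) = d i * starRingEnd ℂ (d j) * chr (((i : ℝ) - j) • ξ) x := by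
      intro x
      have h7 : chr (((i : ℝ) - j) • ξ) x = chr ((i : ℝ) • ξ) x * chr (-((j : ℝ) • ξ)) x := by
        rw [sub_smul, sub_eq_add_neg, chr_add, Pi.mul_apply]
      rw [h7, ← conj_chr, chr_nat_smul, chr_nat_smul, map_mul]
      push_cast
      ring
    simp_rw [h6]
    rw [integral_const_mul, hm _ ?_, mul_zero]
    rw [norm_smul, hξ, mul_one, Real.norm_eq_abs, le_abs]
    rcases hij with hij | hij
    · right
      have : (i : ℝ) + 1 ≤ j := by exact_mod_cast hij
      linarith
    · left
      have : (j : ℝ) + 1 ≤ i := by exact_mod_cast hij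
      linarith

theorem ConeFrame.exists_integral_norm_piece_le (H : ConeFrame γ a b e f c C₀ h)
    (hsphere : ∀ θ ∈ Icc a b, ‖γ θ‖ = 1) {η β : ℝ} (hη : 0 < η) (hη1 : η ≤ 1) (hβ0 : 0 ≤ β)
    (hβ1 : β ≤ 1) : ∃ κ > 0, κ ≤ 1 ∧ ∃ C > 0, ∀ μ : Measure E3, IsFiniteMeasure μ →
      μ (closedBall 0 1)ᶜ = 0 →
      (∀ x s, 0 < s → μ (ball x s) ≤ ENNReal.ofReal (s ^ (3 - 2 * β))) →
      ∀ (N p q : ℕ) (r : ℝ), 1 ≤ r → r ≤ p → p ≤ q → q ≤ N → (∀ n < q, (n : ℝ) ≤ (1 + κ) * r) →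
      ∀ (ι : Type) (s : Finset ι) (θ w : ι → ℝ) (E : ι → Set ℝ) (θ₀ Λ A : ℝ), 0 ≤ Λ → 0 ≤ A →
      (∀ k ∈ s, θ k ∈ Icc a b) → (∀ k ∈ s, θ k ∈ Ico θ₀ (θ₀ + h)) → (∀ k ∈ s, 0 ≤ w k) →
      (∀ k ∈ s, E k ⊆ Icc (-2) 2) → (∀ k ∈ s, volume.real (E k) ≤ A) →
      (∀ x ρ, 1 / r ≤ ρ → ∑ k ∈ s with θ k ∈ Ico x (x + ρ), w k ≤ Λ * ρ ^ β) →
      (∫ x, ‖∑ k ∈ s, (w k : ℂ) *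
        ∑ n ∈ Finset.Ico p q, fejerCoeff (E k) N n * osc ⟪x, γ (θ k)⟫ ^ n‖ ∂μ) ^ 6 ≤
        C * (N : ℝ) ^ (5 * η) * (μ.real univ ^ 5 * Λ ^ 3 * A * (∑ k ∈ s, w k) ^ 3) := by
  obtain ⟨κ, hκ0, hκ1, C₆, hC₆, h6⟩ := H.exists_integral_pow_six_le hη hβ1
  obtain ⟨m, hm, hmB, C₈, hC₈, h8⟩ := exists_bandLimited_lintegral_pow_six_le
  set B₀ : ℝ := 2 * Real.pi ^ (1 + η) / η with hB₀
  refine ⟨κ, hκ0, hκ1, C₈.toReal * C₆ * (8 * Real.pi * m.real univ) * B₀ ^ 4 + 1, by positivity,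
    fun μ hμ hμ1 hμF N p q r hr hrp hpq hqN hn ι s θ w E θ₀ Λ A hΛ hA hθ hθ₀ hw hE hEA hF => ?_⟩
  have hr0 : 0 < r := by linarith
  set F : ι → E3 → ℂ := fun k x =>
    ∑ n ∈ Finset.Ico p q, fejerCoeff (E k) N n * osc ⟪x, γ (θ k)⟫ ^ n with hFdef
  set G : E3 → ℂ := fun x => ∑ k ∈ s, (w k : ℂ) * F k x with hG
  have hspec : ∀ k ∈ s, HasSpectrum (coneArc γ {θ k} r κ) (F k) := by
    intro k hk
    refine HasSpectrum.sum _ fun n hn' => ?_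
    simp_rw [← chr_nat_smul]
    refine HasSpectrum.const_mul _ (HasSpectrum.chr ⟨n, ⟨?_, ?_⟩, θ k, rfl, rfl⟩)
    · rw [Finset.mem_Ico] at hn'
      exact hrp.trans (by exact_mod_cast hn'.1)
    · exact hn n (Finset.mem_Ico.1 hn').2
  have hspecG : HasSpectrum {ξ | ‖ξ‖ ≤ 2 * r} G := by
    refine HasSpectrum.sum _ fun k hk => HasSpectrum.const_mul _ ((hspec k hk).mono ?_)
    rintro _ ⟨n, hn', _, rfl, rfl⟩
    rw [Set.mem_ofPred_eq, norm_smul, hsphere _ (hθ k hk), mul_one, Real.norm_of_nonneg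
      (hr0.le.trans hn'.1)]
    nlinarith [hn'.2]
  have hsq : ∀ k ∈ s, ∫ x, ‖F k x‖ ^ 2 ∂m ≤ 8 * Real.pi * m.real univ * A := by
    intro k hk
    have h1 := hmB.integral_sq_norm_le (hsphere _ (hθ k hk)) (Finset.Ico p q)
      (fejerCoeff (E k) N)
    have h2 : ∑ n ∈ Finset.Ico p q, ‖fejerCoeff (E k) N n‖ ^ 2 ≤ 4 * Real.pi * A := by
      refine le_trans (Finset.sum_le_sum_of_subset_of_nonneg (t := Finset.range N) ?_
        fun _ _ _ => by positivity) ((sum_sq_fejerCoeff_le (hE k hk)).trans ?_)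
      · intro n hn
        simp only [Finset.mem_Ico, Finset.mem_range] at hn ⊢
        omega
      · gcongr
        exact hEA k hk
    refine h1.trans ?_
    calc _ ≤ 2 * m.real univ * (4 * Real.pi * A) := by gcongr
      _ = _ := by ring
  have hsup : ∀ k ∈ s, ∀ x, ‖F k x‖ ≤ B₀ * (N : ℝ) ^ η := fun k hk x =>
    norm_sum_fejerCoeff_le (hE k hk) hpq hqN hη hη1 _
  have key := h6 m hm hmB ι s θ w F r θ₀ Λ _ _ hr hθ hθ₀ hw hspec hF (by positivity)
    (by positivity) hsq hsup
  have hGc : IsBC G := hspecG.isBC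
  have hint6 : Integrable (fun x => ‖G x‖ ^ 6) m := (hGc.norm.pow 6).integrable
  have h9 := h8 (3 - 2 * β) r (by linarith) hr μ hμ hμ1 hμF G hspecG
  have h10 : ∫⁻ x, ‖G x‖ₑ ^ 6 ∂m = ENNReal.ofReal (∫ x, ‖G x‖ ^ 6 ∂m) := by
    rw [ofReal_integral_eq_lintegral_ofReal hint6 (.of_forall fun x => by positivity)]
    refine lintegral_congr fun x => ?_
    rw [ENNReal.ofReal_pow (norm_nonneg _), ofReal_norm]
  have h11 := lintegral_pow_six_le μ (f := fun x => ‖G x‖ₑ) (by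
    have := hGc.1
    fun_prop)
  rw [← ofReal_integral_norm_eq_lintegral_enorm hGc.integrable] at h11
  have h12 := h11.trans (mul_le_mul_right h9 (μ univ ^ 5))
  rw [h10, ← ENNReal.ofReal_toReal hC₈, ← ENNReal.ofReal_toReal (measure_ne_top μ univ),
    ← ENNReal.ofReal_pow (integral_nonneg fun x => norm_nonneg _),
    ← ENNReal.ofReal_pow ENNReal.toReal_nonneg, ← ENNReal.ofReal_mul ENNReal.toReal_nonneg,
    ← ENNReal.ofReal_mul (by positivity), ← ENNReal.ofReal_mul (by positivity),
    ENNReal.ofReal_le_ofReal_iff (by positivity)] at h12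
  have hw0 : 0 ≤ ∑ k ∈ s, w k := Finset.sum_nonneg hw
  have hrN : r ^ η ≤ (N : ℝ) ^ η := by
    gcongr
    exact hrp.trans (by exact_mod_cast hpq.trans hqN)
  have hN5 : (N : ℝ) ^ η * ((N : ℝ) ^ η) ^ 4 = (N : ℝ) ^ (5 * η) := by
    rw [← Real.rpow_natCast, ← Real.rpow_mul (by positivity), ← Real.rpow_add]
    · congr 1
      push_cast
      ring
    · exact hr0.trans_le (hrp.trans (by exact_mod_cast hpq.trans hqN))
  have hrr : r ^ (3 - (3 - 2 * β)) * r ^ (-(2 * β)) = 1 := by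
    rw [← Real.rpow_add hr0]
    simp
  refine h12.trans ?_
  calc _ ≤ μ.real univ ^ 5 * (C₈.toReal * r ^ (3 - (3 - 2 * β)) * (C₆ * (N : ℝ) ^ η *
        (Λ ^ 3 * r ^ (-(2 * β)) * (8 * Real.pi * m.real univ * A) * (B₀ * (N : ℝ) ^ η) ^ 4 *
          (∑ k ∈ s, w k) ^ 3))) := by
        rw [Measure.real]
        gcongr
        refine key.trans ?_
        gcongr
    _ = (C₈.toReal * C₆ * (8 * Real.pi * m.real univ) * B₀ ^ 4) *
        ((N : ℝ) ^ η * ((N : ℝ) ^ η) ^ 4) * (r ^ (3 - (3 - 2 * β)) * r ^ (-(2 * β))) *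
        (μ.real univ ^ 5 * Λ ^ 3 * A * (∑ k ∈ s, w k) ^ 3) := by ring
    _ ≤ _ := by
        rw [hN5, hrr, mul_one]
        gcongr
        linarith

end Core

section Sum

variable {γ : ℝ → E3} {a b c C₀ h : ℝ} {e f : ℝ → E3}

theorem isBC_sum_fejerCoeff {ι : Type*} (s : Finset ι) (w : ι → ℝ) (E : ι → Set ℝ) (ξ : ι → E3)
    (N : ℕ) (t : Finset ℕ) :
    IsBC fun x => ∑ k ∈ s, (w k : ℂ) * ∑ n ∈ t, fejerCoeff (E k) N n * osc ⟪x, ξ k⟫ ^ n :=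
  IsBC.sum _ fun k _ => (IsBC.const _).mul <| IsBC.sum _ fun n _ => (IsBC.const _).mul <|
    IsBC.pow (f := fun x => osc ⟪x, ξ k⟫) ⟨continuous_osc.comp (by fun_prop), 1,
      fun _ => (norm_osc _).le⟩ n

theorem sum_range_sum_Ico {M : Type*} [AddCommMonoid M] {u : ℕ → ℕ} (hu : Monotone u) (g : ℕ → M)
    (m : ℕ) : ∑ i ∈ Finset.range m, ∑ n ∈ Finset.Ico (u i) (u (i + 1)), g n =
      ∑ n ∈ Finset.Ico (u 0) (u m), g n := by
  induction m with
  | zero => simp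
  | succ m ih =>
    rw [Finset.sum_range_succ, ih, Finset.sum_Ico_consecutive _ (hu m.zero_le) (hu m.le_succ)]

theorem exists_pow_ge_and_le_rpow {q η R : ℝ} (hq : 1 < q) (hη : 0 < η) (hR : 1 ≤ R) :
    ∃ m : ℕ, R ≤ q ^ m ∧ (m : ℝ) ≤ (1 / (η * Real.log q) + 1) * R ^ η := by
  have hl : 0 < Real.log q := Real.log_pos hq
  have hR0 : 0 < R := by linarith
  refine ⟨⌈Real.log R / Real.log q⌉₊, ?_, ?_⟩
  · rw [← Real.log_le_log_iff hR0 (by positivity), Real.log_pow, ← div_le_iff₀ hl]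
    exact Nat.le_ceil _
  · have h1 := (Nat.ceil_lt_add_one (div_nonneg (Real.log_nonneg hR) hl.le)).le
    have h2 := Real.log_le_rpow_div hR0.le hη
    have h3 : 1 ≤ R ^ η := Real.one_le_rpow hR hη.le
    calc _ ≤ _ := h1
      _ ≤ R ^ η / η / Real.log q + R ^ η := by gcongr
      _ = _ := by field_simp

theorem ConeFrame.exists_integral_norm_sum_le (H : ConeFrame γ a b e f c C₀ h)
    (hsphere : ∀ θ ∈ Icc a b, ‖γ θ‖ = 1) {η β : ℝ} (hη : 0 < η) (hη1 : η ≤ 1) (hβ0 : 0 ≤ β)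
    (hβ1 : β ≤ 1) : ∃ C > 0, ∀ μ : Measure E3, IsFiniteMeasure μ →
      μ (closedBall 0 1)ᶜ = 0 →
      (∀ x s, 0 < s → μ (ball x s) ≤ ENNReal.ofReal (s ^ (3 - 2 * β))) → ∀ R : ℝ, 1 ≤ R →
      ∀ (ι : Type) (s : Finset ι) (θ w : ι → ℝ) (E : ι → Set ℝ) (θ₀ Λ A : ℝ), 0 ≤ Λ → 0 ≤ A →
      (∀ k ∈ s, θ k ∈ Icc a b) → (∀ k ∈ s, θ k ∈ Ico θ₀ (θ₀ + h)) → (∀ k ∈ s, 0 ≤ w k) →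
      (∀ k ∈ s, E k ⊆ Icc (-2) 2) → (∀ k ∈ s, volume.real (E k) ≤ A) →
      (∀ x ρ, 1 / R ≤ ρ → ∑ k ∈ s with θ k ∈ Ico x (x + ρ), w k ≤ Λ * ρ ^ β) →
      ∫ x, ‖∑ k ∈ s, (w k : ℂ) * ∑ n ∈ Finset.Ico 1 ⌈R⌉₊,
        fejerCoeff (E k) ⌈R⌉₊ n * osc ⟪x, γ (θ k)⟫ ^ n‖ ∂μ ≤
        C * R ^ (2 * η) * (μ.real univ ^ 5 * Λ ^ 3 * A * (∑ k ∈ s, w k) ^ 3) ^ (1 / 6 : ℝ) := by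
  obtain ⟨κ, hκ, -, C, hC, hpiece⟩ := H.exists_integral_norm_piece_le hsphere hη hη1 hβ0 hβ1
  have hl : 0 < Real.log (1 + κ) := Real.log_pos (by linarith)
  refine ⟨(1 / (η * Real.log (1 + κ)) + 1) * (C * 32) ^ (1 / 6 : ℝ), by positivity,
    fun μ hμ hμ1 hμF R hR ι s θ w E θ₀ Λ A hΛ hA hθ hθ₀ hw hE hEA hF => ?_⟩
  have hR0 : 0 < R := by linarith
  obtain ⟨m, hmR, hm⟩ := exists_pow_ge_and_le_rpow (q := 1 + κ) (by linarith) hη hR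
  set N := ⌈R⌉₊ with hN
  have hN1 : 1 ≤ N := Nat.one_le_ceil_iff.2 hR0
  have hN2 : (N : ℝ) ≤ 2 * R := by linarith [(Nat.ceil_lt_add_one hR0.le).le]
  set u : ℕ → ℕ := fun i => min N ⌈(1 + κ) ^ i⌉₊ with hu
  have hmono : Monotone u := fun i j hij => min_le_min le_rfl
    (Nat.ceil_mono (pow_le_pow_right₀ (by linarith) hij))
  have hu0 : u 0 = 1 := by simp [hu, hN1]
  have hum : u m = N := min_eq_left (Nat.ceil_mono hmR)
  have hw0 : 0 ≤ ∑ k ∈ s, w k := Finset.sum_nonneg hw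
  set X : ℝ := μ.real univ ^ 5 * Λ ^ 3 * A * (∑ k ∈ s, w k) ^ 3 with hX
  have hX0 : 0 ≤ X := by positivity
  set G : ℕ → E3 → ℂ := fun i x => ∑ k ∈ s, (w k : ℂ) *
    ∑ n ∈ Finset.Ico (u i) (u (i + 1)), fejerCoeff (E k) N n * osc ⟪x, γ (θ k)⟫ ^ n with hG
  have hGb : ∀ i, IsBC (G i) := fun i => isBC_sum_fejerCoeff _ _ _ _ _ _
  have hN5 : (N : ℝ) ^ (5 * η) ≤ 32 * R ^ (5 * η) := by
    calc (N : ℝ) ^ (5 * η) ≤ (2 * R) ^ (5 * η) := by gcongr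
      _ = 2 ^ (5 * η) * R ^ (5 * η) := Real.mul_rpow (by norm_num) hR0.le
      _ ≤ 2 ^ (5 : ℝ) * R ^ (5 * η) := by
          gcongr
          · norm_num
          · linarith
      _ = _ := by norm_num
  have hbound : ∀ i, ∫ x, ‖G i x‖ ∂μ ≤ ((C * 32) ^ (1 / 6 : ℝ)) * R ^ η * X ^ (1 / 6 : ℝ) := by
    intro i
    rcases (hmono i.le_succ).eq_or_lt with hi | hi
    · simp only [hG, ← Nat.succ_eq_add_one, ← hi, Finset.Ico_self, Finset.sum_empty, mul_zero,
        Finset.sum_const_zero, norm_zero, integral_zero]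
      positivity
    · have h1 : ⌈(1 + κ) ^ i⌉₊ < N := by
        by_contra! hcon
        rw [hu] at hi
        simp only [min_eq_left hcon] at hi
        exact absurd hi (not_lt.2 (min_le_left _ _))
      have h2 : (1 + κ) ^ i ≤ R := by
        by_contra! hcon
        exact absurd (Nat.ceil_mono hcon.le) (not_le.2 h1)
      have h3 : (1 : ℝ) ≤ (1 + κ) ^ i := one_le_pow₀ (by linarith)
      have h4 := hpiece μ hμ hμ1 hμF N (u i) (u (i + 1)) ((1 + κ) ^ i) h3
        (by rw [hu]; simp only [min_eq_right h1.le]; exact Nat.le_ceil _) hi.le (min_le_left _ _)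
        (fun n hn => by
          rw [← pow_succ']
          exact (Nat.lt_ceil.1 (hn.trans_le (min_le_right _ _))).le)
        ι s θ w E θ₀ Λ A hΛ hA hθ hθ₀ hw hE hEA (fun x ρ hρ => hF x ρ (le_trans (by gcongr) hρ))
      have h5 : (∫ x, ‖G i x‖ ∂μ) ^ 6 ≤ C * 32 * R ^ (6 * η) * X := by
        refine h4.trans ?_
        calc C * (N : ℝ) ^ (5 * η) * X ≤ C * (32 * R ^ (6 * η)) * X := by
              gcongr
              refine hN5.trans ?_
              gcongr
              norm_num
          _ = _ := by ring
      calc ∫ x, ‖G i x‖ ∂μ = ((∫ x, ‖G i x‖ ∂μ) ^ 6) ^ (1 / 6 : ℝ) := by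
            rw [← Real.rpow_natCast, ← Real.rpow_mul (integral_nonneg fun x => norm_nonneg _)]
            norm_num
        _ ≤ (C * 32 * R ^ (6 * η) * X) ^ (1 / 6 : ℝ) := by
            gcongr
        _ = _ := by
            rw [Real.mul_rpow (by positivity) hX0, Real.mul_rpow (by positivity) (by positivity),
              ← Real.rpow_mul hR0.le]
            congr 3
            ring
  calc _ = ∫ x, ‖∑ i ∈ Finset.range m, G i x‖ ∂μ := by
        refine integral_congr_ae (.of_forall fun x => ?_)
        simp only [hG]
        rw [Finset.sum_comm]
        simp_rw [← Finset.mul_sum, sum_range_sum_Ico hmono, hu0, hum]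
    _ ≤ ∫ x, ∑ i ∈ Finset.range m, ‖G i x‖ ∂μ :=
        integral_mono (IsBC.sum _ fun i _ => hGb i).norm.integrable
          (IsBC.sum _ fun i _ => (hGb i).norm).integrable fun x => norm_sum_le _ _
    _ = ∑ i ∈ Finset.range m, ∫ x, ‖G i x‖ ∂μ :=
        integral_finsetSum _ fun i _ => (hGb i).norm.integrable
    _ ≤ m * (((C * 32) ^ (1 / 6 : ℝ)) * R ^ η * X ^ (1 / 6 : ℝ)) := by
        refine (Finset.sum_le_card_nsmul _ _ _ fun i _ => hbound i).trans (le_of_eq ?_)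
        rw [Finset.card_range, nsmul_eq_mul]
    _ ≤ ((1 / (η * Real.log (1 + κ)) + 1) * R ^ η) *
        (((C * 32) ^ (1 / 6 : ℝ)) * R ^ η * X ^ (1 / 6 : ℝ)) := by gcongr
    _ = ((1 / (η * Real.log (1 + κ)) + 1) * (C * 32) ^ (1 / 6 : ℝ)) * (R ^ η * R ^ η) *
        X ^ (1 / 6 : ℝ) := by ring
    _ = _ := by
        rw [← Real.rpow_add hR0, two_mul]

end Sum

section Slabs

variable {γ : ℝ → E3} {a b c C₀ h : ℝ} {e f : ℝ → E3}

/-- The union of the slabs `{x | |⟪x, ξ⟫ - c| ≤ R⁻¹}` over `c ∈ D`. -/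
def slabs (ξ : E3) (R : ℝ) (D : Finset ℝ) : Set E3 := {x | ∃ c ∈ D, |⟪x, ξ⟫ - c| ≤ R⁻¹}

theorem measurableSet_slabs (ξ : E3) (R : ℝ) (D : Finset ℝ) : MeasurableSet (slabs ξ R D) := by
  have : slabs ξ R D = ⋃ c ∈ D, {x | |⟪x, ξ⟫ - c| ≤ R⁻¹} := by
    ext x
    simp [slabs]
  rw [this]
  exact Finset.measurableSet_biUnion _ fun c _ =>
    (isClosed_le (by fun_prop) continuous_const).measurableSet

theorem measure_univ_le_eight {μ : Measure E3} {β : ℝ} (hβ0 : 0 ≤ β)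
    (hμ1 : μ (closedBall 0 1)ᶜ = 0)
    (hμF : ∀ x s, 0 < s → μ (ball x s) ≤ ENNReal.ofReal (s ^ (3 - 2 * β))) : μ univ ≤ 8 := by
  have h1 : μ univ ≤ μ (ball 0 2) := by
    refine (measure_mono_ae ?_ : μ univ ≤ μ (ball 0 2))
    have h2 : ∀ᵐ x ∂μ, x ∈ closedBall (0 : E3) 1 := hμ1
    filter_upwards [h2] with x hx _
    exact closedBall_subset_ball (by norm_num) hx
  refine h1.trans ((hμF 0 2 (by norm_num)).trans ?_)
  rw [ENNReal.ofReal_le_iff_le_toReal (by norm_num)]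
  calc (2 : ℝ) ^ (3 - 2 * β) ≤ 2 ^ (3 : ℝ) :=
        Real.rpow_le_rpow_of_exponent_le (by norm_num) (by linarith)
    _ = _ := by norm_num

/-- The neighbourhood of radius `2 / R` of `D`, within `[-2, 2]`. -/
def fattened (R : ℝ) (D : Finset ℝ) : Set ℝ :=
  (⋃ c ∈ D, Icc (c - 2 / R) (c + 2 / R)) ∩ Icc (-2) 2

theorem volume_fattened_le {R : ℝ} (hR : 0 < R) (D : Finset ℝ) :
    volume.real (fattened R D) ≤ D.card * (4 / R) := by
  have h0 : 0 < 2 / R := by positivity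
  have hfin : volume (⋃ c ∈ D, Icc (c - 2 / R) (c + 2 / R)) ≠ ∞ :=
    (Bornology.isBounded_biUnion_finset D |>.2 fun c _ => isBounded_Icc _ _).measure_lt_top.ne
  refine (measureReal_mono inter_subset_left hfin).trans
    ((measureReal_biUnion_finset_le _ _).trans (le_of_eq ?_))
  rw [Finset.sum_congr rfl fun c _ => Real.volume_real_Icc_of_le
    (show c - 2 / R ≤ c + 2 / R by linarith)]
  rw [Finset.sum_congr rfl (g := fun _ => 4 / R) fun c _ => by ring, Finset.sum_const,
    nsmul_eq_mul]

theorem Icc_subset_fattened {R s : ℝ} (hR : 1 ≤ R) {D : Finset ℝ} (hs : |s| ≤ 1)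
    (hD : ∃ c ∈ D, |s - c| ≤ R⁻¹) {N : ℕ} (hN : R ≤ N) :
    Icc (s - 1 / N) (s + 1 / N) ⊆ fattened R D := by
  obtain ⟨c, hc, hsc⟩ := hD
  have hR0 : 0 < R := by linarith
  have h1 : 1 / (N : ℝ) ≤ R⁻¹ := by rw [← one_div]; gcongr
  have h2 : R⁻¹ ≤ 1 := inv_le_one_of_one_le₀ hR
  rw [abs_le] at hs hsc
  intro u hu
  refine ⟨mem_biUnion hc ?_, ?_, ?_⟩
  · rw [mem_Icc, div_eq_mul_inv]
    constructor <;> linarith [hu.1, hu.2]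
  · linarith [hu.1]
  · linarith [hu.2]

theorem sum_mul_measureReal_slabs_le {μ : Measure E3} [IsFiniteMeasure μ]
    (hμ1 : μ (closedBall 0 1)ᶜ = 0) {R A : ℝ} (hR : 1 ≤ R) {ι : Type*} (s : Finset ι)
    (w : ι → ℝ) (ξ : ι → E3) (D : ι → Finset ℝ) (hw : ∀ k ∈ s, 0 ≤ w k)
    (hξ : ∀ k ∈ s, ‖ξ k‖ = 1) (hA : ∀ k ∈ s, volume.real (fattened R (D k)) ≤ A) :
    ∑ k ∈ s, w k * μ.real (slabs (ξ k) R (D k)) ≤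
      4 * ∫ x, ‖∑ k ∈ s, (w k : ℂ) * ∑ n ∈ Finset.Ico 1 ⌈R⌉₊,
        fejerCoeff (fattened R (D k)) ⌈R⌉₊ n * osc ⟪x, ξ k⟫ ^ n‖ ∂μ +
      2 * (∑ k ∈ s, w k) * A * μ.real univ := by
  have hN1 : 1 ≤ ⌈R⌉₊ := Nat.one_le_ceil_iff.2 (by linarith)
  set F : ι → E3 → ℂ := fun k x => ∑ n ∈ Finset.Ico 1 ⌈R⌉₊,
    fejerCoeff (fattened R (D k)) ⌈R⌉₊ n * osc ⟪x, ξ k⟫ ^ n with hF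
  have hbc : IsBC fun x => ∑ k ∈ s, (w k : ℂ) * F k x := isBC_sum_fejerCoeff _ _ _ _ _ _
  have hind : ∀ k ∈ s, Integrable (fun x => w k * (slabs (ξ k) R (D k)).indicator 1 x) μ :=
    fun k _ => ((integrable_const (1 : ℝ)).indicator (measurableSet_slabs _ _ _)).const_mul _
  have hpt : ∀ x ∈ closedBall (0 : E3) 1, ∑ k ∈ s, w k * (slabs (ξ k) R (D k)).indicator 1 x ≤
      4 * ‖∑ k ∈ s, (w k : ℂ) * F k x‖ + 2 * (∑ k ∈ s, w k) * A := by
    intro x hx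
    have hk : ∀ k ∈ s, (slabs (ξ k) R (D k)).indicator (1 : E3 → ℝ) x ≤
        4 * (F k x).re + 2 * A := by
      intro k hk
      have hsub : fattened R (D k) ⊆ Icc (-2) 2 := inter_subset_right
      by_cases hxk : x ∈ slabs (ξ k) R (D k)
      · have h1 : |⟪x, ξ k⟫| ≤ 1 := by
          refine (abs_real_inner_le_norm _ _).trans ?_
          rw [hξ k hk, mul_one]
          simpa using hx
        have := half_le_fejer hsub hN1 (Icc_subset_fattened hR h1 hxk (Nat.le_ceil R))
        rw [indicator_of_mem hxk, Pi.one_apply]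
        linarith [hA k hk]
      · have := fejer_nonneg hsub hN1 ⟪x, ξ k⟫
        rw [indicator_of_notMem hxk]
        linarith [hA k hk]
    calc _ ≤ ∑ k ∈ s, w k * (4 * (F k x).re + 2 * A) :=
          Finset.sum_le_sum fun k hks => mul_le_mul_of_nonneg_left (hk k hks) (hw k hks)
      _ = 4 * (∑ k ∈ s, (w k : ℂ) * F k x).re + 2 * (∑ k ∈ s, w k) * A := by
          simp_rw [Complex.re_sum, Complex.re_ofReal_mul, mul_add, Finset.sum_add_distrib,
            Finset.mul_sum, Finset.sum_mul]
          congr 1 <;> refine Finset.sum_congr rfl fun k _ => by ring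
      _ ≤ _ := by
          gcongr
          exact Complex.re_le_norm _
  calc ∑ k ∈ s, w k * μ.real (slabs (ξ k) R (D k))
      = ∫ x, ∑ k ∈ s, w k * (slabs (ξ k) R (D k)).indicator 1 x ∂μ := by
        rw [integral_finsetSum _ hind]
        refine Finset.sum_congr rfl fun k _ => ?_
        rw [integral_const_mul, integral_indicator_one (measurableSet_slabs _ _ _)]
    _ ≤ ∫ x, (4 * ‖∑ k ∈ s, (w k : ℂ) * F k x‖ + 2 * (∑ k ∈ s, w k) * A) ∂μ := by
        refine integral_mono_ae (integrable_finsetSum _ hind)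
          ((hbc.norm.integrable.const_mul _).add (integrable_const _)) ?_
        have : ∀ᵐ x ∂μ, x ∈ closedBall (0 : E3) 1 := hμ1
        filter_upwards [this] with x hx using hpt x hx
    _ = _ := by
        rw [integral_add (hbc.norm.integrable.const_mul _) (integrable_const _),
          integral_const_mul, integral_const, smul_eq_mul]
        ring

theorem ConeFrame.exists_sum_slabs_window_le (H : ConeFrame γ a b e f c C₀ h)
    (hsphere : ∀ θ ∈ Icc a b, ‖γ θ‖ = 1) {ε β : ℝ} (hε : 0 < ε) (hβ0 : 0 ≤ β)
    (hβ1 : β ≤ 1) : ∃ C > 0, ∀ μ : Measure E3, IsFiniteMeasure μ →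
      μ (closedBall 0 1)ᶜ = 0 →
      (∀ x s, 0 < s → μ (ball x s) ≤ ENNReal.ofReal (s ^ (3 - 2 * β))) → ∀ R : ℝ, 1 ≤ R →
      ∀ (ι : Type) (s : Finset ι) (θ w : ι → ℝ) (D : ι → Finset ℝ) (θ₀ Λ : ℝ), 0 ≤ Λ →
      (∀ k ∈ s, θ k ∈ Icc a b) → (∀ k ∈ s, θ k ∈ Ico θ₀ (θ₀ + h)) → (∀ k ∈ s, 0 ≤ w k) →
      (∀ k ∈ s, ((D k).card : ℝ) ≤ R ^ (1 - ε) * μ.real univ) →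
      (∀ x ρ, 1 / R ≤ ρ → ∑ k ∈ s with θ k ∈ Ico x (x + ρ), w k ≤ Λ * ρ ^ β) →
      ∑ k ∈ s, w k * μ.real (slabs (γ (θ k)) R (D k)) ≤
        C * R ^ (-(ε / 12)) * μ.real univ * (Λ * ∑ k ∈ s, w k) ^ (1 / 2 : ℝ) := by
  have hη : 0 < min 1 (ε / 24) := by positivity
  obtain ⟨C, hC, hsum⟩ := H.exists_integral_norm_sum_le hsphere hη (min_le_left _ _) hβ0 hβ1
  have hh := H.h_pos
  refine ⟨4 * C * 4 ^ (1 / 6 : ℝ) + 64 * (h + 1) ^ (1 / 2 : ℝ), by positivity,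
    fun μ hμ hμ1 hμF R hR ι s θ w D θ₀ Λ hΛ hθ hθ₀ hw hD hF => ?_⟩
  have hR0 : 0 < R := by linarith
  set M := μ.real univ with hM
  set W := ∑ k ∈ s, w k with hW
  have hM0 : 0 ≤ M := measureReal_nonneg
  have hW0 : 0 ≤ W := Finset.sum_nonneg hw
  have hM8 : M ≤ 8 := by
    have := ENNReal.toReal_mono (by norm_num) (measure_univ_le_eight hβ0 hμ1 hμF)
    simpa [hM, Measure.real] using this
  have hA : ∀ k ∈ s, volume.real (fattened R (D k)) ≤ 4 * R ^ (-ε) * M := by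
    intro k hk
    refine (volume_fattened_le hR0 _).trans ?_
    calc ((D k).card : ℝ) * (4 / R) ≤ R ^ (1 - ε) * M * (4 / R) := by
          gcongr
          exact hD k hk
      _ = 4 * R ^ (-ε) * M := by
          rw [sub_eq_add_neg, Real.rpow_add hR0, Real.rpow_one]
          field_simp
  have h1 := sum_mul_measureReal_slabs_le hμ1 hR s w (fun k => γ (θ k)) D hw
    (fun k hk => hsphere _ (hθ k hk)) hA
  have h2 := hsum μ hμ hμ1 hμF R hR ι s θ w (fun k => fattened R (D k)) θ₀ Λ (4 * R ^ (-ε) * M) hΛ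
    (by positivity) hθ hθ₀ hw (fun k _ => inter_subset_right) hA hF
  have h3 : (M ^ 5 * Λ ^ 3 * (4 * R ^ (-ε) * M) * W ^ 3) ^ (1 / 6 : ℝ) =
      4 ^ (1 / 6 : ℝ) * R ^ (-(ε / 6)) * M * (Λ * W) ^ (1 / 2 : ℝ) := by
    have : M ^ 5 * Λ ^ 3 * (4 * R ^ (-ε) * M) * W ^ 3 = 4 * R ^ (-ε) * M ^ 6 * (Λ * W) ^ 3 := by
      ring
    rw [this, Real.mul_rpow (by positivity) (by positivity),
      Real.mul_rpow (by positivity) (by positivity), Real.mul_rpow (by positivity) (by positivity),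
      ← Real.rpow_mul hR0.le, ← Real.rpow_natCast M, ← Real.rpow_natCast (Λ * W),
      ← Real.rpow_mul hM0, ← Real.rpow_mul (by positivity)]
    norm_num
    left
    left
    congr 1
    ring
  have h4 : R ^ (2 * min 1 (ε / 24)) * R ^ (-(ε / 6)) ≤ R ^ (-(ε / 12)) := by
    rw [← Real.rpow_add hR0]
    refine Real.rpow_le_rpow_of_exponent_le hR ?_
    linarith [min_le_right 1 (ε / 24)]
  have h5 : W ≤ Λ * (h + 1) := by
    have h6 := hF θ₀ (h + 1) (by
      rw [div_le_iff₀ hR0]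
      nlinarith)
    rw [Finset.filter_true_of_mem fun k hk =>
      ⟨(hθ₀ k hk).1, (hθ₀ k hk).2.trans (by linarith)⟩] at h6
    refine h6.trans ?_
    gcongr
    calc (h + 1) ^ β ≤ (h + 1) ^ (1 : ℝ) :=
          Real.rpow_le_rpow_of_exponent_le (by linarith) hβ1
      _ = _ := Real.rpow_one _
  have h6 : W ≤ (h + 1) ^ (1 / 2 : ℝ) * (Λ * W) ^ (1 / 2 : ℝ) := by
    rw [← Real.mul_rpow (by positivity) (by positivity), ← Real.sqrt_eq_rpow]
    refine Real.le_sqrt_of_sq_le ?_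
    nlinarith
  have h7 : R ^ (-ε) ≤ R ^ (-(ε / 12)) :=
    Real.rpow_le_rpow_of_exponent_le hR (by linarith)
  calc _ ≤ _ := h1
    _ ≤ 4 * (C * R ^ (2 * min 1 (ε / 24)) *
          (4 ^ (1 / 6 : ℝ) * R ^ (-(ε / 6)) * M * (Λ * W) ^ (1 / 2 : ℝ))) +
        2 * W * (4 * R ^ (-ε) * M) * M := by
        rw [← h3]
        gcongr
    _ = 4 * C * 4 ^ (1 / 6 : ℝ) * (R ^ (2 * min 1 (ε / 24)) * R ^ (-(ε / 6))) * M *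
          (Λ * W) ^ (1 / 2 : ℝ) + 8 * M * R ^ (-ε) * M * W := by ring
    _ ≤ 4 * C * 4 ^ (1 / 6 : ℝ) * R ^ (-(ε / 12)) * M * (Λ * W) ^ (1 / 2 : ℝ) +
        8 * 8 * R ^ (-(ε / 12)) * M * ((h + 1) ^ (1 / 2 : ℝ) * (Λ * W) ^ (1 / 2 : ℝ)) := by
        gcongr
    _ = _ := by ring

theorem ConeFrame.exists_sum_slabs_le (H : ConeFrame γ a b e f c C₀ h)
    (hsphere : ∀ θ ∈ Icc a b, ‖γ θ‖ = 1) {ε β : ℝ} (hε : 0 < ε) (hβ0 : 0 ≤ β)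
    (hβ1 : β ≤ 1) : ∃ C > 0, ∀ μ : Measure E3, IsFiniteMeasure μ →
      μ (closedBall 0 1)ᶜ = 0 →
      (∀ x s, 0 < s → μ (ball x s) ≤ ENNReal.ofReal (s ^ (3 - 2 * β))) → ∀ R : ℝ, 1 ≤ R →
      ∀ (ι : Type) (s : Finset ι) (θ w : ι → ℝ) (D : ι → Finset ℝ) (Λ : ℝ), 0 ≤ Λ →
      (∀ k ∈ s, θ k ∈ Icc a b) → (∀ k ∈ s, 0 ≤ w k) →
      (∀ k ∈ s, ((D k).card : ℝ) ≤ R ^ (1 - ε) * μ.real univ) →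
      (∀ x ρ, 1 / R ≤ ρ → ∑ k ∈ s with θ k ∈ Ico x (x + ρ), w k ≤ Λ * ρ ^ β) →
      ∑ k ∈ s, w k * μ.real (slabs (γ (θ k)) R (D k)) ≤
        C * R ^ (-(ε / 12)) * μ.real univ * (Λ * ∑ k ∈ s, w k) ^ (1 / 2 : ℝ) := by
  obtain ⟨C, hC, hwin⟩ := H.exists_sum_slabs_window_le hsphere hε hβ0 hβ1
  have hh := H.h_pos
  set J := ⌊(b - a) / h⌋₊ + 1 with hJ
  refine ⟨J * C, by positivity, fun μ hμ hμ1 hμF R hR ι s θ w D Λ hΛ hθ hw hD hF => ?_⟩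
  set g : ι → ℕ := fun k => ⌊(θ k - a) / h⌋₊ with hg
  have hgJ : ∀ k ∈ s, g k ∈ Finset.range J := fun k hk => by
    rw [Finset.mem_range, hJ, Nat.lt_succ_iff]
    refine Nat.floor_mono ?_
    gcongr
    exact (hθ k hk).2
  rw [← Finset.sum_fiberwise_of_maps_to hgJ]
  have hj : ∀ j ∈ Finset.range J, ∑ k ∈ s with g k = j, w k * μ.real (slabs (γ (θ k)) R (D k)) ≤
      C * R ^ (-(ε / 12)) * μ.real univ * (Λ * ∑ k ∈ s, w k) ^ (1 / 2 : ℝ) := by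
    intro j _
    have hsub : ∀ k ∈ s.filter (g · = j), k ∈ s := fun k hk => (Finset.mem_filter.1 hk).1
    have hR0 : 0 < R := by linarith
    refine (hwin μ hμ hμ1 hμF R hR ι (s.filter (g · = j)) θ w D (a + j * h) Λ hΛ
      (fun k hk => hθ k (hsub k hk)) (fun k hk => ?_) (fun k hk => hw k (hsub k hk))
      (fun k hk => hD k (hsub k hk)) fun x ρ hρ => (Finset.sum_le_sum_of_subset_of_nonneg
        (Finset.filter_subset_filter (θ · ∈ Ico x (x + ρ)) (Finset.filter_subset (g · = j) s))
        fun k hk _ =>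
          hw k (Finset.mem_filter.1 hk).1).trans (hF x ρ hρ)).trans ?_
    · have := mem_cell_floor hh (hθ k (hsub k hk)).1
      rw [show ⌊(θ k - a) / h⌋₊ = j from (Finset.mem_filter.1 hk).2, cell] at this
      exact ⟨this.1, this.2.trans_le (by linarith)⟩
    · have : 0 ≤ ∑ k ∈ s with g k = j, w k := Finset.sum_nonneg fun k hk => hw k (hsub k hk)
      have : ∑ k ∈ s with g k = j, w k ≤ ∑ k ∈ s, w k :=
        Finset.sum_le_sum_of_subset_of_nonneg (Finset.filter_subset _ _) fun k hk _ => hw k hk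
      gcongr
  refine (Finset.sum_le_card_nsmul _ _ _ hj).trans (le_of_eq ?_)
  rw [Finset.card_range, nsmul_eq_mul]
  ring

end Slabs

section Discretization

theorem measure_ball_le_frostmanConst {X : Type*} [PseudoMetricSpace X] [MeasurableSpace X]
    (μ : Measure X) (α : ℝ) (x : X) {r : ℝ} (hr : 0 < r) :
    μ (ball x r) ≤ frostmanConst μ α * ENNReal.ofReal (r ^ α) := by
  rw [← ENNReal.div_le_iff (by simpa using Real.rpow_pos_of_pos hr α) ENNReal.ofReal_ne_top]
  exact le_iSup_of_le x (le_iSup₂_of_le r hr le_rfl)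

theorem disjoint_cell {θ₀ σ : ℝ} (hσ : 0 < σ) {p q : ℕ} (hpq : p ≠ q) :
    Disjoint (cell θ₀ σ p) (cell θ₀ σ q) := by
  wlog hlt : p < q generalizing p q
  · exact (this hpq.symm (hpq.lt_or_gt.resolve_left hlt)).symm
  refine Set.disjoint_left.2 fun x hp hq => ?_
  have h1 : (p : ℝ) + 1 ≤ q := by exact_mod_cast hlt
  nlinarith [hp.2, hq.1]

/-- A bounded function is dominated in the mean by its values on a finite weighted set of points,
one in each arc of length `σ`, whose weights inherit the growth of the measure. -/
theorem exists_discretization {a b σ c β : ℝ} (lam : Measure ℝ) [IsFiniteMeasure lam]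
    (hsupp : lam (Icc a b)ᶜ = 0) (hσ : 0 < σ) (hc : 0 ≤ c) (hβ1 : β ≤ 1)
    (hlam : ∀ x r, 0 < r → lam (ball x r) ≤ ENNReal.ofReal (c * r ^ β))
    {φ : ℝ → ℝ≥0∞} {B : ℝ≥0∞} (hB : B ≠ ∞) (hφ : ∀ t, φ t ≤ B) :
    ∃ (s : Finset ℕ) (θ w : ℕ → ℝ), (∀ k ∈ s, θ k ∈ Icc a b) ∧ (∀ k, 0 ≤ w k) ∧
      ∑ k ∈ s, w k ≤ lam.real univ ∧
      (∀ x ρ, σ ≤ ρ → ∑ k ∈ s with θ k ∈ Ico x (x + ρ), w k ≤ 2 * c * ρ ^ β) ∧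
      ∫⁻ t, φ t ∂lam ≤ ∑ k ∈ s, ENNReal.ofReal (w k) * φ (θ k) := by
  classical
  set τ : ℕ → Set ℝ := fun k => cell a σ k ∩ Icc a b with hτ
  have hτm : ∀ k, MeasurableSet (τ k) := fun k => measurableSet_Ico.inter measurableSet_Icc
  have hτd : Pairwise (Function.onFun Disjoint τ) := fun p q hpq =>
    (disjoint_cell hσ hpq).mono inter_subset_left inter_subset_left
  have hpt : ∀ k, ∃ t, lam (τ k) ≠ 0 → t ∈ τ k ∧ ∫⁻ u in τ k, φ u ∂lam ≤ lam (τ k) * φ t := by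
    intro k
    by_cases h0 : lam (τ k) = 0
    · exact ⟨0, fun h => absurd h0 h⟩
    · have hfin : ∫⁻ u in τ k, φ u ∂lam ≠ ∞ := by
        refine ne_top_of_le_ne_top ?_ (lintegral_mono hφ)
        rw [lintegral_const]
        exact ENNReal.mul_ne_top hB (measure_ne_top _ _)
      obtain ⟨t, ht, hle⟩ := exists_setLAverage_le h0 (hτm k).nullMeasurableSet hfin
      rw [setLAverage_eq, ENNReal.div_le_iff h0 (measure_ne_top _ _), mul_comm] at hle
      exact ⟨t, fun _ => ⟨ht, hle⟩⟩
  choose θ hθ using hpt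
  set n := ⌊(b - a) / σ⌋₊ + 1 with hn
  set s := (Finset.range n).filter fun k => lam (τ k) ≠ 0 with hs
  have hsθ : ∀ k ∈ s, θ k ∈ τ k := fun k hk => (hθ k (Finset.mem_filter.1 hk).2).1
  refine ⟨s, θ, fun k => lam.real (τ k), fun k hk => (hsθ k hk).2, fun k => measureReal_nonneg,
    ?_, fun x ρ hρ => ?_, ?_⟩
  · rw [← measureReal_biUnion_finset (fun p _ q _ hpq => hτd hpq) fun k _ => hτm k]
    exact measureReal_mono (subset_univ _)
  · have hρ0 : 0 < ρ := hσ.trans_le hρ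
    rw [← measureReal_biUnion_finset (fun p _ q _ hpq => hτd hpq) fun k _ => hτm k]
    have hsub : ⋃ k ∈ s.filter (θ · ∈ Ico x (x + ρ)), τ k ⊆ ball x (2 * ρ) := by
      refine iUnion₂_subset fun k hk u hu => ?_
      rw [Finset.mem_filter] at hk
      have h1 := (hsθ k hk.1).1
      have h2 := hu.1
      have h3 := hk.2
      rw [cell] at h1 h2
      rw [mem_ball, Real.dist_eq, abs_lt]
      constructor <;> nlinarith [h1.1, h1.2, h2.1, h2.2, h3.1, h3.2]
    refine (measureReal_mono hsub).trans ?_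
    have h4 : (2 * ρ) ^ β ≤ 2 * ρ ^ β := by
      rw [Real.mul_rpow (by norm_num) hρ0.le]
      gcongr
      calc (2 : ℝ) ^ β ≤ 2 ^ (1 : ℝ) := Real.rpow_le_rpow_of_exponent_le (by norm_num) hβ1
        _ = 2 := Real.rpow_one _
    have h5 := ENNReal.toReal_mono ENNReal.ofReal_ne_top (hlam x (2 * ρ) (by linarith))
    rw [ENNReal.toReal_ofReal (by positivity)] at h5
    exact h5.trans ((mul_le_mul_of_nonneg_left h4 hc).trans_eq (by ring))
  · have hcov : ∀ᵐ t ∂lam, t ∈ ⋃ k ∈ Finset.range n, τ k := by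
      have h1 : ∀ᵐ t ∂lam, t ∈ Icc a b := hsupp
      filter_upwards [h1] with t ht
      refine mem_biUnion (x := ⌊(t - a) / σ⌋₊) ?_ ⟨mem_cell_floor hσ ht.1, ht⟩
      rw [SetLike.mem_coe, Finset.mem_range, hn, Nat.lt_succ_iff]
      refine Nat.floor_mono ?_
      gcongr
      exact ht.2
    have hrestr : ∫⁻ t, φ t ∂lam = ∫⁻ t in ⋃ k ∈ Finset.range n, τ k, φ t ∂lam := by
      rw [Measure.restrict_eq_self_of_ae_mem hcov]
    rw [hrestr, lintegral_biUnion_finset (fun p _ q _ hpq => hτd hpq) fun k _ => hτm k]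
    refine (Finset.sum_subset (Finset.filter_subset (fun k => lam (τ k) ≠ 0) _)
      fun k hk hk' => ?_).symm.le.trans (Finset.sum_le_sum fun k hk => ?_)
    · have : lam (τ k) = 0 := by
        by_contra h0
        exact hk' (Finset.mem_filter.2 ⟨hk, h0⟩)
      exact setLIntegral_measure_zero _ _ this
    · rw [ofReal_measureReal]
      exact (hθ k (Finset.mem_filter.1 hk).2).2

theorem map_lineProj_le {γ : ℝ → E3} {θ : ℝ} (hθ : ‖γ θ‖ = 1) (μ : Measure E3) (R : ℝ)
    (D : Finset ℝ) :
    μ.map (lineProj γ θ) (⋃ c ∈ D, lineInterval γ θ R c) ≤ μ (slabs (γ θ) R D) := by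
  have hself : ⟪γ θ, γ θ⟫ = (1 : ℝ) := by rw [real_inner_self_eq_norm_sq, hθ, one_pow]
  have hcont : Continuous (lineProj γ θ) := by unfold lineProj; fun_prop
  have hsub : ⋃ c ∈ D, lineInterval γ θ R c ⊆ slabs (γ θ) R D := by
    refine iUnion₂_subset fun c hc x hx => ?_
    obtain ⟨s, hs, rfl⟩ := hx
    exact ⟨c, hc, by rwa [real_inner_smul_left, hself, mul_one]⟩
  refine (measure_mono hsub).trans ?_
  rw [Measure.map_apply hcont.measurable (measurableSet_slabs _ _ _)]
  refine measure_mono fun x hx => ?_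
  obtain ⟨c, hc, hxc⟩ := hx
  exact ⟨c, hc, by rwa [lineProj, real_inner_smul_left, hself, mul_one] at hxc⟩

end Discretization

theorem energy_lemma
    -- the compact interval `I = [a, b]`
    (a b : ℝ) (hab : a ≤ b)
    -- `γ : I → S²` is a `C²` curve with `det(γ, γ', γ'') ≠ 0` on `I`
    (γ : ℝ → E3) (hγC2 : ContDiff ℝ 2 γ)
    (hsphere : ∀ θ ∈ Icc a b, ‖γ θ‖ = 1)
    (hnondeg : ∀ θ ∈ Icc a b,
      LinearIndependent ℝ ![γ θ, deriv γ θ, deriv (deriv γ) θ])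
    (β α : ℝ) (hβ0 : 0 ≤ β) (hβ1 : β ≤ 1) (hαβ : α = 3 - 2 * β)
    (ε : ℝ) (hε : 0 < ε) :
    ∃ δ : ℝ, 0 < δ ∧ ∃ C : ℝ, 0 < C ∧
      ∀ R : ℝ, 1 ≤ R →
      ∀ lam : Measure ℝ, lam (Icc a b)ᶜ = 0 → frostmanConst lam β ≠ ∞ →
      ∀ μ : Measure E3, μ (Metric.closedBall (0 : E3) 1)ᶜ = 0 →
        frostmanConst μ α ≤ 1 →
      ∀ D : ℝ → Finset ℝ,
        (∀ θ ∈ Icc a b,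
          ((D θ).card : ℝ≥0∞) ≤ ENNReal.ofReal (R ^ (1 - ε)) * μ Set.univ) →
        lowerIntegral lam (fun θ =>
            μ.map (lineProj γ θ) (⋃ c ∈ D θ, lineInterval γ θ R c)) ≤
          ENNReal.ofReal (C * R ^ (-δ)) * μ Set.univ *
            frostmanConst lam β ^ ((1 : ℝ) / 2) * lam Set.univ ^ ((1 : ℝ) / 2) := by
  obtain ⟨e, f, c₀, C₀, h, H⟩ := exists_coneFrame hγC2 hnondeg
  obtain ⟨C, hC, hmain⟩ := H.exists_sum_slabs_le hsphere hε hβ0 hβ1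
  refine ⟨ε / 12, by positivity, C * 2 ^ (1 / 2 : ℝ), by positivity, fun R hR lam hlam hlamF μ hμ
    hμF D hD => ?_⟩
  have hR0 : 0 < R := by linarith
  have hμF' : ∀ x s, 0 < s → μ (ball x s) ≤ ENNReal.ofReal (s ^ (3 - 2 * β)) := fun x s hs => by
    rw [← hαβ]
    exact (measure_ball_le_frostmanConst μ α x hs).trans (mul_le_of_le_one_left' hμF)
  have hμ8 := measure_univ_le_eight hβ0 hμ hμF'
  have hμfin : IsFiniteMeasure μ := ⟨hμ8.trans_lt (by norm_num)⟩
  set c := (frostmanConst lam β).toReal with hc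
  have hlamF' : ∀ x r, 0 < r → lam (ball x r) ≤ ENNReal.ofReal (c * r ^ β) := fun x r hr => by
    rw [ENNReal.ofReal_mul ENNReal.toReal_nonneg, ENNReal.ofReal_toReal hlamF]
    exact measure_ball_le_frostmanConst lam β x hr
  have hlamfin : IsFiniteMeasure lam := by
    have h1 : Icc a b ⊆ ball a (b - a + 1) := fun t ht => by
      rw [mem_ball, Real.dist_eq, abs_lt]
      constructor <;> linarith [ht.1, ht.2]
    refine ⟨(measure_univ_le_add_compl (Icc a b)).trans_lt ?_⟩
    rw [hlam, add_zero]
    exact ((measure_mono h1).trans (hlamF' _ _ (by linarith))).trans_lt ENNReal.ofReal_lt_top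
  refine iSup_le fun φ => iSup₂_le fun _ hφ => ?_
  have hφ8 : ∀ t, φ t ≤ 8 := fun t => (hφ t).trans <| (measure_mono (subset_univ _)).trans <| by
    rw [Measure.map_apply (by unfold lineProj; fun_prop) .univ, preimage_univ]
    exact hμ8
  obtain ⟨s, θ, w, hθ, hw, hws, hwF, hint⟩ := exists_discretization lam hlam
    (one_div_pos.2 hR0) ENNReal.toReal_nonneg hβ1 hlamF' (by norm_num) hφ8
  have hcard : ∀ k ∈ s, ((D (θ k)).card : ℝ) ≤ R ^ (1 - ε) * μ.real univ := fun k hk => by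
    have h1 := ENNReal.toReal_mono (by finiteness) (hD (θ k) (hθ k hk))
    rwa [ENNReal.toReal_natCast, ENNReal.toReal_mul, ENNReal.toReal_ofReal (by positivity)] at h1
  have key := hmain μ hμfin hμ hμF' R hR ℕ s θ w (fun k => D (θ k)) (2 * c)
    (mul_nonneg zero_le_two ENNReal.toReal_nonneg) hθ (fun k _ => hw k) hcard hwF
  have hc0 : 0 ≤ c := ENNReal.toReal_nonneg
  have hw0 : 0 ≤ ∑ k ∈ s, w k := Finset.sum_nonneg fun k _ => hw k
  calc ∫⁻ t, φ t ∂lam ≤ ∑ k ∈ s, ENNReal.ofReal (w k) * φ (θ k) := hint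
    _ ≤ ∑ k ∈ s, ENNReal.ofReal (w k * μ.real (slabs (γ (θ k)) R (D (θ k)))) := by
        refine Finset.sum_le_sum fun k hk => ?_
        rw [ENNReal.ofReal_mul (hw k), ofReal_measureReal]
        gcongr
        exact (hφ _).trans (map_lineProj_le (hsphere _ (hθ k hk)) μ R _)
    _ = ENNReal.ofReal (∑ k ∈ s, w k * μ.real (slabs (γ (θ k)) R (D (θ k)))) :=
        (ENNReal.ofReal_sum_of_nonneg fun k _ => mul_nonneg (hw k) measureReal_nonneg).symm
    _ ≤ ENNReal.ofReal (C * 2 ^ (1 / 2 : ℝ) * R ^ (-(ε / 12)) * μ.real univ * c ^ (1 / 2 : ℝ) *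
          lam.real univ ^ (1 / 2 : ℝ)) := by
        refine ENNReal.ofReal_le_ofReal (key.trans ?_)
        rw [Real.mul_rpow (by positivity) hw0, Real.mul_rpow zero_le_two hc0]
        calc _ ≤ C * R ^ (-(ε / 12)) * μ.real univ *
              (2 ^ (1 / 2 : ℝ) * c ^ (1 / 2 : ℝ) * lam.real univ ^ (1 / 2 : ℝ)) := by gcongr
          _ = _ := by ring
    _ = _ := by
        rw [ENNReal.ofReal_mul (by positivity), ENNReal.ofReal_mul (by positivity),
          ENNReal.ofReal_mul (by positivity), ofReal_measureReal,
          ← ENNReal.ofReal_rpow_of_nonneg hc0 (by norm_num),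
          ← ENNReal.ofReal_rpow_of_nonneg measureReal_nonneg (by norm_num), ofReal_measureReal,
          hc, ENNReal.ofReal_toReal hlamF]
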